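/- arXiv:2203.13353 — 8 statements merged into one kernel-verified Lean document; each statement's English description precedes it below -/
import Mathlib

section
/- Let K = ℚ(θ) be a sextic number field generated by a root θ of a monic irreducible trinomial F(x) = x^6 + a x^m + b ∈ ℤ[x] with 1 ≤ m ≤ 5. If a ≡ 0 (mod 9) and b ≡ −1 (mod 9), then 3 divides the index i(K); in particular K is not monogenic. -/
open Polynomial NumberField

/-- The index `(ℤ_K : ℤ[θ])` of the subring `ℤ[θ]` in the ring of integers of `K`. -/
noncomputable def subIndex {K : Type*} [Field K] [NumberField K] (θ : 𝓞 K) : ℕ :=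
  ((Algebra.adjoin ℤ ({θ} : Set (𝓞 K))).toSubring.toAddSubgroup).index

section aux

lemma homs_bound {R : Type*} [CommRing R] (β : R) (n : ℕ) (hn : ¬ 3 ∣ n)
    (h : ∀ x : R, n • x ∈ Algebra.adjoin ℤ ({β} : Set R))
    (f g : R →+* ZMod 3) (hfg : f β = g β) : f = g := by
  have hA : ∀ y ∈ Algebra.adjoin ℤ ({β} : Set R), f y = g y := by
    intro y hy
    induction hy using Algebra.adjoin_induction with
    | mem x hx => rw [Set.mem_singleton_iff] at hx; rw [hx, hfg]
    | algebraMap r => simp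
    | add x y _ _ hx hy => rw [map_add, map_add, hx, hy]
    | mul x y _ _ hx hy => rw [map_mul, map_mul, hx, hy]
  ext x
  have h1 := hA _ (h x)
  rw [map_nsmul, map_nsmul, nsmul_eq_mul, nsmul_eq_mul] at h1
  have h3 : (n : ZMod 3) ≠ 0 := by rwa [Ne, ZMod.natCast_eq_zero_iff]
  have : Fact (Nat.Prime 3) := ⟨Nat.prime_three⟩
  exact mul_left_cancel₀ h3 h1

lemma trace_nilp {R : Type*} [CommRing R] [Module.Free ℤ R] [Module.Finite ℤ R] (z : R)
    (hz : z ∈ (Ideal.span {(3 : R)}).radical) : (3 : ℤ) ∣ Algebra.trace ℤ R z := by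
  obtain ⟨k, hk⟩ := hz
  obtain ⟨y, hy⟩ := Ideal.mem_span_singleton.1 hk
  let b := Module.Free.chooseBasis ℤ R
  have : Fact (Nat.Prime 3) := ⟨Nat.prime_three⟩
  classical
  let N := (Algebra.leftMulMatrix b z).map (Int.castRingHom (ZMod 3))
  have hN : IsNilpotent N := by
    refine ⟨k, ?_⟩
    have : N = (Int.castRingHom (ZMod 3)).mapMatrix (Algebra.leftMulMatrix b z) := rfl
    have h3 : (3 : R) * y = (3 : ℤ) • y := by simp
    rw [this, ← map_pow, ← map_pow, hy, h3, map_smul]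
    ext i j
    have h0 : ((3 : ZMod 3)) = 0 := rfl
    rw [RingHom.mapMatrix_apply, Matrix.map_apply, Matrix.smul_apply, smul_eq_mul, map_mul]
    have h1 : (Int.castRingHom (ZMod 3)) 3 = 0 := h0
    rw [h1, zero_mul, Matrix.zero_apply]
  have h := Matrix.isNilpotent_trace_of_isNilpotent hN
  rw [isNilpotent_iff_eq_zero] at h
  apply (CharP.intCast_eq_zero_iff (ZMod 3) 3 _).1
  rw [Algebra.trace_eq_matrix_trace b]
  rw [← h]
  change (Int.castRingHom (ZMod 3)) _ = _
  rw [AddMonoidHom.map_trace]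

lemma exists_prime {R : Type*} [CommRing R] [Module.Free ℤ R] [Module.Finite ℤ R] (z : R)
    (h : ¬ (3 : ℤ) ∣ Algebra.trace ℤ R z) : ∃ P : Ideal R, P.IsPrime ∧ 3 ∈ P ∧ z ∉ P := by
  by_contra hc
  push Not at hc
  apply h
  apply trace_nilp
  rw [Ideal.radical_eq_sInf, Submodule.mem_sInf]
  rintro P ⟨hP, hPp⟩
  exact hc P hPp (hP (Ideal.mem_span_singleton_self 3))

def cycP (n : ℕ) : Matrix (Fin n) (Fin n) (ZMod 9) :=
  Matrix.of fun i j => if (j : ℕ) + 1 = n then (if (i : ℕ) = 0 then 1 else 0) else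
    if (i : ℕ) = j + 1 then 1 else 0

lemma F_coeff (m : ℕ) (a b : ℤ)
    (ha : a ≡ 0 [ZMOD 9]) (hb : b ≡ -1 [ZMOD 9]) (i : ℕ) (hi : i < 6) :
    ((-(X ^ 6 + C a * X ^ m + C b : ℤ[X]).coeff i : ℤ) : ZMod 9) = if i = 0 then 1 else 0 := by
  have ha' : (a : ZMod 9) = 0 := by
    have := (ZMod.intCast_eq_intCast_iff a 0 9).2 ha; simpa using this
  have hb' : (b : ZMod 9) = -1 := by
    have := (ZMod.intCast_eq_intCast_iff b (-1) 9).2 hb; simpa using this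
  rw [coeff_add, coeff_add, coeff_X_pow, coeff_C_mul, coeff_C, if_neg hi.ne]
  push_cast
  rw [ha']
  split_ifs <;> simp [hb']

lemma trace_mod {K : Type*} [Field K] [NumberField K] (pb : PowerBasis ℚ K) (F : ℤ[X])
    (hF : minpoly ℚ pb.gen = F.map (algebraMap ℤ ℚ)) (n : ℕ) (hn : pb.dim = n)
    (hc : ∀ i < n, ((-F.coeff i : ℤ) : ZMod 9) = if i = 0 then 1 else 0) (G : ℤ[X]) :
    ∃ T : ℤ, Algebra.trace ℚ K (aeval pb.gen G) = T ∧
      (T : ZMod 9) = Matrix.trace (aeval (cycP n) G) := by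
  subst hn
  let M : Matrix (Fin pb.dim) (Fin pb.dim) ℤ := Matrix.of fun i j =>
    if (j : ℕ) + 1 = pb.dim then -F.coeff i else if (i : ℕ) = j + 1 then 1 else 0
  have hM : Algebra.leftMulMatrix pb.basis pb.gen = (Int.castRingHom ℚ).mapMatrix M := by
    rw [PowerBasis.leftMulMatrix, PowerBasis.minpolyGen_eq, hF]
    ext i j
    simp only [M, RingHom.mapMatrix_apply, Matrix.map_apply, Matrix.of_apply, coeff_map]
    split_ifs <;> simp
  have hM9 : cycP pb.dim = (Int.castRingHom (ZMod 9)).mapMatrix M := by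
    ext i j
    simp only [M, cycP, RingHom.mapMatrix_apply, Matrix.map_apply, Matrix.of_apply]
    rw [← hc i i.2]
    split_ifs <;> simp
  have key : ∀ (S : Type) [CommRing S], aeval ((Int.castRingHom S).mapMatrix M) G =
      (Int.castRingHom S).mapMatrix (aeval M G) := by
    intro S _
    have := Polynomial.map_aeval_eq_aeval_map (R := ℤ) (S := Matrix (Fin pb.dim) (Fin pb.dim) ℤ)
      (T := ℤ) (U := Matrix (Fin pb.dim) (Fin pb.dim) S) (φ := RingHom.id ℤ)
      (ψ := (Int.castRingHom S).mapMatrix) (RingHom.ext_int _ _) G M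
    rw [this, Polynomial.map_id]
  refine ⟨Matrix.trace (aeval M G), ?_, ?_⟩
  · rw [Algebra.trace_eq_matrix_trace pb.basis]
    have : Algebra.leftMulMatrix pb.basis (aeval pb.gen G) =
        aeval (Algebra.leftMulMatrix pb.basis pb.gen) G := by
      exact (Polynomial.aeval_algHom_apply ((Algebra.leftMulMatrix pb.basis).restrictScalars ℤ) pb.gen G).symm
    rw [this, hM, key]
    exact (AddMonoidHom.map_trace (Int.castRingHom ℚ) _).symm
  · rw [hM9, key]
    exact (AddMonoidHom.map_trace (Int.castRingHom (ZMod 9)) _)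

lemma tr1 : Matrix.trace (aeval (cycP 6) (((X ^ 2 - 1) ^ 2 * (X + 1) ^ 2 : ℤ[X]))) = 3 := by
  simp only [map_mul, map_pow, map_add, map_sub, aeval_X, map_one]
  decide +kernel
lemma tr2 : Matrix.trace (aeval (cycP 6) (((X ^ 2 - 1) ^ 2 * (X - 1) ^ 2 : ℤ[X]))) = 3 := by
  simp only [map_mul, map_pow, map_add, map_sub, aeval_X, map_one]
  decide +kernel
lemma tr3 : Matrix.trace (aeval (cycP 6) ((((X ^ 2 - 1) ^ 2 + 3) * (X + 1) ^ 2 : ℤ[X]))) = 3 := by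
  simp only [map_mul, map_pow, map_add, map_sub, aeval_X, map_one, map_ofNat]
  decide +kernel
lemma tr4 : Matrix.trace (aeval (cycP 6) ((((X ^ 2 - 1) ^ 2 + 3) * (X - 1) ^ 2 : ℤ[X]))) = 3 := by
  simp only [map_mul, map_pow, map_add, map_sub, aeval_X, map_one, map_ofNat]
  decide +kernel

lemma hom_of_norm {R : Type*} [CommRing R] [IsDedekindDomain R] [Module.Free ℤ R]
    [Module.Finite ℤ R] (P : Ideal R) (h : P.absNorm = 3) :
    ∃ f : R →+* ZMod 3, ∀ x, f x = 0 ↔ x ∈ P := by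
  rw [Ideal.absNorm_apply, Submodule.cardQuot_apply] at h
  change Nat.card (R ⧸ P) = 3 at h
  have : Finite (R ⧸ P) := Nat.finite_of_card_ne_zero (by omega)
  have := Fintype.ofFinite (R ⧸ P)
  rw [Nat.card_eq_fintype_card] at h
  let e := ZMod.ringEquivOfPrime (R ⧸ P) Nat.prime_three h
  refine ⟨e.symm.toRingHom.comp (Ideal.Quotient.mk P), fun x => ?_⟩
  rw [← Ideal.Quotient.eq_zero_iff_mem]
  simp

lemma four_primes {R : Type*} [CommRing R] [IsDedekindDomain R] [Module.Free ℤ R]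
    [Module.Finite ℤ R] (hr : Module.finrank ℤ R = 6) (P : Fin 4 → Ideal R)
    (hP : ∀ i, (P i).IsMaximal) (hinj : Function.Injective P)
    (h0 : 3 ∈ P 0) (h1 : 3 ∈ P 1) (h2 : 3 ∈ P 2 ^ 2) (h3 : 3 ∈ P 3 ^ 2) (i : Fin 4) :
    (P i).absNorm = 3 := by
  have hcop : ∀ i j, i ≠ j → IsCoprime (P i) (P j) := by
    intro i j hij
    rw [Ideal.isCoprime_iff_sup_eq]
    exact (hP i).coprime_of_ne (hP j) (fun h => hij (hinj h))
  have d : ((P 0 * P 1) * (P 2 ^ 2)) * (P 3 ^ 2) ∣ Ideal.span {(3 : R)} := by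
    refine IsCoprime.mul_dvd ?_ (IsCoprime.mul_dvd ?_ (IsCoprime.mul_dvd ?_ ?_ ?_) ?_) ?_
    · exact IsCoprime.mul_left (IsCoprime.mul_left (hcop _ _ (by decide)).pow_right
        (hcop _ _ (by decide)).pow_right) ((hcop _ _ (by decide)).pow)
    · exact IsCoprime.mul_left (hcop _ _ (by decide)).pow_right (hcop _ _ (by decide)).pow_right
    · exact hcop _ _ (by decide)
    all_goals rw [Ideal.dvd_span_singleton]; assumption
  have hn : Ideal.absNorm (Ideal.span {(3 : R)}) = 3 ^ 6 := by
    rw [Ideal.absNorm_span_singleton, show (3 : R) = algebraMap ℤ R 3 by simp,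
      Algebra.norm_algebraMap, hr]
    rfl
  have hd := map_dvd Ideal.absNorm d
  rw [hn, map_mul, map_mul, map_mul, map_pow, map_pow] at hd
  have h3i : ∀ i, 3 ∈ P i := by
    intro i
    fin_cases i
    · exact h0
    · exact h1
    · exact Ideal.pow_le_self (by norm_num) h2
    · exact Ideal.pow_le_self (by norm_num) h3
  have hk : ∀ i, ∃ k, 1 ≤ k ∧ (P i).absNorm = 3 ^ k := by
    intro i
    have : (P i).absNorm ∣ 3 ^ 6 := by
      rw [← hn]
      exact map_dvd Ideal.absNorm (Ideal.dvd_span_singleton.2 (h3i i))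
    obtain ⟨k, -, hk⟩ := (Nat.dvd_prime_pow Nat.prime_three).1 this
    refine ⟨k, ?_, hk⟩
    by_contra hlt
    have hk0 : k = 0 := by omega
    rw [hk0, pow_zero, Ideal.absNorm_eq_one_iff] at hk
    exact (hP i).ne_top hk
  choose k hk1 hk2 using hk
  rw [hk2, hk2, hk2, hk2, ← pow_mul, ← pow_mul, ← pow_add, ← pow_add, ← pow_add,
    Nat.pow_dvd_pow_iff_le_right (by norm_num)] at hd
  have a0 := hk1 0
  have a1 := hk1 1
  have a2 := hk1 2
  have a3 := hk1 3
  have : k i = 1 := by fin_cases i <;> simp only [] <;> first | (show k 0 = 1; omega) | (show k 1 = 1; omega) | (show k 2 = 1; omega) | (show k 3 = 1; omega)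
  rw [hk2, this, pow_one]

lemma four_homs {R : Type*} [CommRing R] [IsDedekindDomain R] [Module.Free ℤ R]
    [Module.Finite ℤ R] (hr : Module.finrank ℤ R = 6) (t w A : R)
    (h1 : 3 * w = (t ^ 2 - 1) ^ 2)
    (h2 : w ^ 2 = 2 * w + (t ^ 2 - 1) + 3 * A - (t ^ 2 - 1) * A)
    (z1 : ¬ (3 : ℤ) ∣ Algebra.trace ℤ R (w * (t + 1) ^ 2))
    (z2 : ¬ (3 : ℤ) ∣ Algebra.trace ℤ R (w * (t - 1) ^ 2))
    (z3 : ¬ (3 : ℤ) ∣ Algebra.trace ℤ R ((w + 1) * (t + 1) ^ 2))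
    (z4 : ¬ (3 : ℤ) ∣ Algebra.trace ℤ R ((w + 1) * (t - 1) ^ 2)) :
    ∃ f : Fin 4 → (R →+* ZMod 3), Function.Injective f := by
  obtain ⟨P1, p1, e1, n1⟩ := exists_prime _ z1
  obtain ⟨P2, p2, e2, n2⟩ := exists_prime _ z2
  obtain ⟨P3, p3, e3, n3⟩ := exists_prime _ z3
  obtain ⟨P4, p4, e4, n4⟩ := exists_prime _ z4
  have hs : ∀ P : Ideal R, P.IsPrime → 3 ∈ P → t ^ 2 - 1 ∈ P := by
    intro P hP h3
    apply hP.mem_of_pow_mem 2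
    rw [← h1]
    exact P.mul_mem_right _ h3
  have ht : ∀ P : Ideal R, P.IsPrime → 3 ∈ P → t - 1 ∈ P ∨ t + 1 ∈ P := by
    intro P hP h3
    apply hP.mem_or_mem
    convert hs P hP h3 using 1
    ring
  have hw : ∀ P : Ideal R, P.IsPrime → 3 ∈ P → w ∈ P ∨ w + 1 ∈ P := by
    intro P hP h3
    apply hP.mem_or_mem
    have : w * (w + 1) = 3 * (w + A) + (t ^ 2 - 1) * (1 - A) := by linear_combination h2
    rw [this]
    exact P.add_mem (P.mul_mem_right _ h3) (P.mul_mem_right _ (hs P hP h3))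
  have hnm : ∀ (P : Ideal R) (x y : R), x * y ^ 2 ∉ P → x ∉ P ∧ y ∉ P := by
    intro P x y h
    refine ⟨fun hx => h (P.mul_mem_right _ hx), fun hy => h ?_⟩
    rw [pow_two, ← mul_assoc]
    exact P.mul_mem_left _ hy
  have a1 := (ht P1 p1 e1).resolve_right (hnm _ _ _ n1).2
  have b1 := (hw P1 p1 e1).resolve_left (hnm _ _ _ n1).1
  have a2 := (ht P2 p2 e2).resolve_left (hnm _ _ _ n2).2
  have b2 := (hw P2 p2 e2).resolve_left (hnm _ _ _ n2).1
  have a3 := (ht P3 p3 e3).resolve_right (hnm _ _ _ n3).2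
  have b3 := (hw P3 p3 e3).resolve_right (hnm _ _ _ n3).1
  have a4 := (ht P4 p4 e4).resolve_left (hnm _ _ _ n4).2
  have b4 := (hw P4 p4 e4).resolve_right (hnm _ _ _ n4).1
  have sq : ∀ P : Ideal R, 3 ∈ P → (t - 1 ∈ P ∨ t + 1 ∈ P) → w + 1 ∈ P → 3 ∈ P ^ 2 := by
    intro P h3 hs hw
    have hs' : t ^ 2 - 1 ∈ P := by
      rw [show t ^ 2 - 1 = (t - 1) * (t + 1) by ring]
      rcases hs with h | h
      · exact P.mul_mem_right _ h
      · exact P.mul_mem_left _ h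
    have : (3 : R) = 3 * (w + 1) - (t ^ 2 - 1) ^ 2 := by linear_combination - h1
    rw [this]
    apply Ideal.sub_mem
    · rw [pow_two]; exact Ideal.mul_mem_mul h3 hw
    · exact Ideal.pow_mem_pow hs' 2
  have s1 := sq P1 e1 (.inl a1) b1
  have s2 := sq P2 e2 (.inr a2) b2
  have h3ne : (3 : R) ≠ 0 := by
    have : CharZero R := by
      apply charZero_of_inj_zero
      intro n hn
      have hn' : (algebraMap ℤ R) n = 0 := by simpa using hn
      have hinj : Function.Injective (algebraMap ℤ R) := FaithfulSMul.algebraMap_injective ℤ R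
      have := (map_eq_zero_iff _ hinj).1 hn'
      exact_mod_cast this
    norm_num
  have hmax : ∀ P : Ideal R, P.IsPrime → 3 ∈ P → P.IsMaximal := by
    intro P hP h3
    apply hP.isMaximal
    rintro rfl
    exact h3ne (by simpa using h3)
  have hne1 : ∀ P : Ideal R, P.IsPrime → w ∈ P → w + 1 ∈ P → False := by
    intro P hP h h'
    apply hP.ne_top
    rw [Ideal.eq_top_iff_one]
    simpa using P.sub_mem h' h
  have hne2 : ∀ P : Ideal R, P.IsPrime → 3 ∈ P → t - 1 ∈ P → t + 1 ∈ P → False := by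
    intro P hP h3 h h'
    apply hP.ne_top
    rw [Ideal.eq_top_iff_one]
    have := P.sub_mem h3 (P.sub_mem h' h)
    rwa [show (3 : R) - (t + 1 - (t - 1)) = 1 by ring] at this
  let P : Fin 4 → Ideal R := ![P3, P4, P1, P2]
  have hP : ∀ i, (P i).IsMaximal := by
    intro i
    fin_cases i
    · exact hmax _ p3 e3
    · exact hmax _ p4 e4
    · exact hmax _ p1 e1
    · exact hmax _ p2 e2
  have n34 : P3 ≠ P4 := by rintro rfl; exact hne2 _ p3 e3 a3 a4
  have n31 : P3 ≠ P1 := by rintro rfl; exact hne1 _ p3 b3 b1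
  have n32 : P3 ≠ P2 := by rintro rfl; exact hne1 _ p3 b3 b2
  have n41 : P4 ≠ P1 := by rintro rfl; exact hne1 _ p4 b4 b1
  have n42 : P4 ≠ P2 := by rintro rfl; exact hne1 _ p4 b4 b2
  have n12 : P1 ≠ P2 := by rintro rfl; exact hne2 _ p1 e1 a1 a2
  have hinj : Function.Injective P := by
    intro i j hij
    fin_cases i <;> fin_cases j <;> simp [P, n34, n31, n32, n41, n42, n12, n34.symm, n31.symm,
      n32.symm, n41.symm, n42.symm, n12.symm] at hij ⊢
  have hnorm := four_primes hr P hP hinj e3 e4 s1 s2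
  choose f hf using fun i => hom_of_norm (P i) (hnorm i)
  refine ⟨f, fun i j hij => hinj ?_⟩
  ext x
  rw [← hf, ← hf, hij]

lemma three_dvd_of_homs {K : Type*} [Field K] [NumberField K] (f : Fin 4 → (𝓞 K →+* ZMod 3))
    (hf : Function.Injective f) (β : 𝓞 K) : 3 ∣ subIndex β := by
  by_contra hn
  have hmem : ∀ x : 𝓞 K, subIndex β • x ∈ Algebra.adjoin ℤ ({β} : Set (𝓞 K)) := by
    intro x
    exact AddSubgroup.nsmul_index_mem
      ((Algebra.adjoin ℤ ({β} : Set (𝓞 K))).toSubring.toAddSubgroup) x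
  obtain ⟨i, j, hij, h⟩ := Fintype.exists_ne_map_eq_of_card_lt (fun i => f i β) (by simp)
  exact hij (hf (homs_bound β _ hn hmem _ _ h))

end aux

theorem three_divides_index_of_sextic
    {K : Type*} [Field K] [NumberField K] (θ : 𝓞 K)
    (m : ℕ) (hm : 1 ≤ m) (hm5 : m ≤ 5)
    (a b : ℤ)
    (F : ℤ[X]) (hF : F = X ^ 6 + C a * X ^ m + C b)
    (hirr : Irreducible F)
    (hroot : Polynomial.aeval (θ : K) F = 0)
    (hgen : Algebra.adjoin ℚ {(θ : K)} = ⊤)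
    (ha : a ≡ 0 [ZMOD 9])
    (hb : b ≡ -1 [ZMOD 9]) :
    (∀ θ' : 𝓞 K, Algebra.adjoin ℚ {(θ' : K)} = ⊤ → 3 ∣ subIndex θ') ∧
      ¬ ∃ β : 𝓞 K, Algebra.adjoin ℤ ({β} : Set (𝓞 K)) = ⊤ := by
  have hdeg : F.natDegree = 6 := by
    rw [hF]
    compute_degree!
    all_goals first | omega | (split_ifs <;> first | omega | simp)
  have hmon : F.Monic := by
    rw [Monic, leadingCoeff, hdeg, hF, coeff_add, coeff_add, coeff_X_pow, coeff_C_mul, coeff_C,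
      coeff_X_pow, if_neg (show 6 ≠ m by omega)]
    simp
  have hmin : minpoly ℚ (θ : K) = F.map (algebraMap ℤ ℚ) := by
    symm
    apply minpoly.eq_of_irreducible_of_monic
    · exact (hmon.irreducible_iff_irreducible_map_fraction_map).1 hirr
    · rw [aeval_map_algebraMap, hroot]
    · exact hmon.map _
  have hint : IsIntegral ℚ (θ : K) := IsIntegral.of_finite ℚ _
  let pb := PowerBasis.ofAdjoinEqTop hint hgen
  have hpg : pb.gen = (θ : K) := PowerBasis.ofAdjoinEqTop_gen hint hgen
  have hpd : pb.dim = 6 := by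
    rw [PowerBasis.ofAdjoinEqTop_dim hint hgen, hmin, hmon.natDegree_map, hdeg]
  have htr := trace_mod pb F (by rw [hpg, hmin]) 6 hpd
    (by intro i hi; rw [hF]; exact F_coeff m a b ha hb i hi)
  rw [hpg] at htr
  have hrank : Module.finrank ℤ (𝓞 K) = 6 := by
    rw [RingOfIntegers.rank, pb.finrank, hpd]
  obtain ⟨a', ha'⟩ := (Int.modEq_zero_iff_dvd).1 ha
  obtain ⟨b', hb'⟩ := (Int.modEq_iff_dvd).1 hb.symm
  have hb'' : b = 9 * b' - 1 := by omega
  have hθ6 : (θ : K) ^ 6 = - (9 * a' * θ ^ m) - (9 * b' - 1) := by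
    rw [hF, ha', hb''] at hroot
    simp only [map_add, map_mul, map_pow, aeval_X, aeval_C] at hroot
    simp at hroot
    linear_combination hroot
  let A : 𝓞 K := a' * θ ^ m + b'
  have hA : (A : K) = a' * θ ^ m + b' := by simp [A]
  let w0 : K := ((θ : K) ^ 2 - 1) ^ 2 / 3
  have hw1 : 3 * w0 = ((θ : K) ^ 2 - 1) ^ 2 := by simp only [w0]; field_simp
  have hw2 : w0 ^ 2 = 2 * w0 + ((θ : K) ^ 2 - 1) + 3 * A - ((θ : K) ^ 2 - 1) * A := by
    rw [hA]
    simp only [w0]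
    linear_combination ((θ : K) ^ 2 - 4) / 9 * hθ6
  have hwint : IsIntegral ℤ w0 := by
    have h1 : IsIntegral (𝓞 K) w0 := by
      refine ⟨X ^ 2 - C 2 * X - C ((θ ^ 2 - 1) + 3 * A - (θ ^ 2 - 1) * A), ?_, ?_⟩
      · monicity!
      · rw [eval₂_sub, eval₂_sub, eval₂_pow, eval₂_X, eval₂_mul, eval₂_C, eval₂_C, eval₂_X]
        simp only [map_add, map_sub, map_mul, map_pow, map_one, map_ofNat]
        linear_combination hw2
    exact isIntegral_trans (R := ℤ) (A := 𝓞 K) _ h1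
  let w : 𝓞 K := ⟨w0, hwint⟩
  have hwc : (w : K) = w0 := rfl
  have htrace : ∀ (G : ℤ[X]) (z : 𝓞 K), aeval (θ : K) G = 3 * (z : K) →
      Matrix.trace (aeval (cycP 6) G) = 3 → ¬ (3 : ℤ) ∣ Algebra.trace ℤ (𝓞 K) z := by
    intro G z hG h9 hdvd
    obtain ⟨T, hT, hT9⟩ := htr G
    have h3 : (3 : K) * (z : K) = (3 : ℚ) • (z : K) := by
      rw [Algebra.smul_def]; simp
    rw [hG, h3, map_smul, ← Algebra.coe_trace_int, smul_eq_mul] at hT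
    have hT' : 3 * Algebra.trace ℤ (𝓞 K) z = T := by exact_mod_cast hT
    obtain ⟨c, hc⟩ := hdvd
    rw [h9, ← hT', hc] at hT9
    have h90 : (9 : ZMod 9) = 0 := rfl
    have : ((3 * (3 * c) : ℤ) : ZMod 9) = 0 := by
      push_cast
      linear_combination (c : ZMod 9) * h90
    rw [this] at hT9
    exact absurd hT9 (by decide)
  obtain ⟨f, hf⟩ := four_homs hrank θ w A
    (by apply RingOfIntegers.ext; simp only [map_add, map_sub, map_mul, map_pow, map_one, map_ofNat, hwc]; exact hw1)
    (by apply RingOfIntegers.ext; simp only [map_add, map_sub, map_mul, map_pow, map_one, map_ofNat, hwc]; exact hw2)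
    (htrace _ _ (by
      simp only [map_add, map_sub, map_mul, map_pow, map_one, map_ofNat, hwc, aeval_X]
      linear_combination -((θ : K) + 1) ^ 2 * hw1) tr1)
    (htrace _ _ (by
      simp only [map_add, map_sub, map_mul, map_pow, map_one, map_ofNat, hwc, aeval_X]
      linear_combination -((θ : K) - 1) ^ 2 * hw1) tr2)
    (htrace _ _ (by
      simp only [map_add, map_sub, map_mul, map_pow, map_one, map_ofNat, hwc, aeval_X]
      linear_combination -((θ : K) + 1) ^ 2 * hw1) tr3)
    (htrace _ _ (by
      simp only [map_add, map_sub, map_mul, map_pow, map_one, map_ofNat, hwc, aeval_X]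
      linear_combination -((θ : K) - 1) ^ 2 * hw1) tr4)
  refine ⟨fun β _ => three_dvd_of_homs f hf β, ?_⟩
  rintro ⟨β, hβ⟩
  have h3 := three_dvd_of_homs f hf β
  have h1 : subIndex β = 1 := by
    rw [subIndex, hβ]
    exact AddSubgroup.index_eq_one.2 (by ext; simp)
  omega
end

section
/- Let K = ℚ(θ) be a sextic number field generated by a root θ of a monic irreducible trinomial F(x) = x^6 + a x^m + b ∈ ℤ[x] with 1 ≤ m ≤ 5. If a ≡ 0 (mod 8) and b ≡ −1 (mod 4), then 2 divides the index i(K); in particular K is not monogenic. -/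
open Polynomial NumberField

theorem sextic_pow4_closed {O : Type*} [CommRing O] (R : Subalgebra ℤ O) (S : Set O)
    (hR : R = Algebra.adjoin ℤ S)
    (hS : ∀ x ∈ S, ∃ s ∈ R, x ^ 4 = x + 2 * s) :
    ∀ r ∈ R, ∃ s ∈ R, r ^ 4 = r + 2 * s := by
  intro r hr
  have hr' := hr
  rw [hR] at hr'
  have key : r ∈ R ∧ ∃ s ∈ R, r ^ 4 = r + 2 * s := by
    clear hr
    induction hr' using Algebra.adjoin_induction with
    | mem x hx => exact ⟨hR ▸ Algebra.subset_adjoin hx, hS x hx⟩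
    | algebraMap z =>
      refine ⟨R.algebraMap_mem z, ?_⟩
      have h : (2 : ℤ) ∣ z ^ 4 - z := by
        rcases Int.even_or_odd' z with ⟨k, rfl | rfl⟩
        · exact ⟨8 * k ^ 4 - k, by ring⟩
        · exact ⟨8 * k ^ 4 + 16 * k ^ 3 + 12 * k ^ 2 + 3 * k, by ring⟩
      obtain ⟨w, hw⟩ := h
      refine ⟨algebraMap ℤ O w, R.algebraMap_mem w, ?_⟩
      have h2 : z ^ 4 = z + 2 * w := by linarith
      rw [← map_pow, h2]; simp
    | add x y _ _ hx hy =>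
      obtain ⟨hx, s, hs, hxs⟩ := hx
      obtain ⟨hy, t, ht, hyt⟩ := hy
      refine ⟨R.add_mem hx hy, s + t + 2 * (x ^ 3 * y) + 3 * (x ^ 2 * y ^ 2) + 2 * (x * y ^ 3), ?_, ?_⟩
      · have h2 : (2 : O) ∈ R := ofNat_mem R 2
        have h3 : (3 : O) ∈ R := ofNat_mem R 3
        exact R.add_mem (R.add_mem (R.add_mem (R.add_mem hs ht)
          (R.mul_mem h2 (R.mul_mem (R.pow_mem hx 3) hy)))
          (R.mul_mem h3 (R.mul_mem (R.pow_mem hx 2) (R.pow_mem hy 2))))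
          (R.mul_mem h2 (R.mul_mem hx (R.pow_mem hy 3)))
      · linear_combination hxs + hyt
    | mul x y _ _ hx hy =>
      obtain ⟨hx, s, hs, hxs⟩ := hx
      obtain ⟨hy, t, ht, hyt⟩ := hy
      refine ⟨R.mul_mem hx hy, x ^ 4 * t + y * s,
        R.add_mem (R.mul_mem (R.pow_mem hx 4) ht) (R.mul_mem hy hs), ?_⟩
      linear_combination x ^ 4 * hyt + y * hxs
  exact key.2

theorem sextic_saturated {O : Type*} [CommRing O] [IsDomain O] [CharZero O] (R : Subalgebra ℤ O)
    (h4 : ∀ r ∈ R, ∃ s ∈ R, r ^ 4 = r + 2 * s) (k d : ℕ) (hd : Odd d)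
    (hD : ∀ x : O, ((2 ^ k * d : ℕ) : O) * x ∈ R) (x : O) (hx : 2 * x ∈ R) : x ∈ R := by
  have hit : ∀ j : ℕ, ∃ s ∈ R, (2 * x) ^ (4 ^ j) = 2 * x + 2 * s := by
    intro j
    induction j with
    | zero => exact ⟨0, R.zero_mem, by simp⟩
    | succ j ih =>
      obtain ⟨s, hs, h⟩ := ih
      obtain ⟨u, hu, h'⟩ := h4 (2 * x + 2 * s) (R.add_mem hx (R.mul_mem (ofNat_mem R 2) hs))
      refine ⟨s + u, R.add_mem hs hu, ?_⟩
      rw [pow_succ, pow_mul, h, h']; ring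
  obtain ⟨s, hs, h⟩ := hit k
  have hk : k + 1 ≤ 4 ^ k := Nat.lt_pow_self (by norm_num)
  obtain ⟨c, hc⟩ := Nat.exists_eq_add_of_le hk
  obtain ⟨e, rfl⟩ := hd
  have h2 : (2 : O) * ((2 : O) ^ c * (((2 ^ k * (2 * e + 1) : ℕ) : O) * x ^ (4 ^ k)))
      = 2 * ((2 * e + 1) * (x + s)) := by
    have : (2 : O) ^ (4 ^ k) = 2 ^ k * 2 * 2 ^ c := by rw [hc]; ring
    rw [mul_pow, this] at h
    push_cast
    linear_combination (2 * (e : O) + 1) * h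
  have h3 := mul_left_cancel₀ (two_ne_zero) h2
  have h5 : x = (2 : O) ^ c * (((2 ^ k * (2 * e + 1) : ℕ) : O) * x ^ (4 ^ k))
      - (e : O) * (2 * x) - (2 * e + 1) * s := by
    rw [h3]; ring
  rw [h5]
  have he : (e : O) ∈ R := natCast_mem R e
  have h2' : (2 : O) ∈ R := ofNat_mem R 2
  exact R.sub_mem (R.sub_mem (R.mul_mem (R.pow_mem h2' c) (hD _)) (R.mul_mem he hx))
    (R.mul_mem (R.add_mem (R.mul_mem h2' he) R.one_mem) hs)

theorem sextic_all {O : Type*} [CommRing O] [IsDomain O] [CharZero O] (R : Subalgebra ℤ O)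
    (h4 : ∀ r ∈ R, ∃ s ∈ R, r ^ 4 = r + 2 * s) (D : ℕ) (hD0 : D ≠ 0)
    (hD : ∀ x : O, (D : O) * x ∈ R) (x : O) : ∃ y, x ^ 4 = x + 2 * y := by
  obtain ⟨k, d, hd, rfl⟩ := Nat.exists_eq_two_pow_mul_odd hD0
  have hj : ∀ (j : ℕ) (y : O), 2 ^ j * y ∈ R → y ∈ R := by
    intro j
    induction j with
    | zero => intro y hy; simpa using hy
    | succ j ih =>
      intro y hy
      apply ih
      apply sextic_saturated R h4 k d hd hD
      rwa [← mul_assoc, ← pow_succ']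
  have hdx : (d : O) * x ∈ R := by
    apply hj k
    have := hD x
    push_cast at this
    rwa [mul_assoc] at this
  obtain ⟨s, -, hs⟩ := h4 _ hdx
  obtain ⟨e, rfl⟩ := hd
  push_cast at hs
  refine ⟨s + e * x - (8 * e ^ 4 + 16 * e ^ 3 + 12 * e ^ 2 + 4 * e) * x ^ 4, ?_⟩
  linear_combination hs

theorem sextic_card {Q : Type*} [CommRing Q] (h2 : (2 : Q) = 0) (t : Q) (ht : t ^ 4 = t)
    (hgen : ∀ x : Q, x ∈ Algebra.adjoin ℤ ({t} : Set Q)) : Nat.card Q ≤ 16 := by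
  let f : (Fin 4 → Bool) → Q := fun c => ∑ i, (if c i then 1 else 0) * t ^ (i : ℕ)
  have hf : Function.Surjective f := by
    intro x
    have hx := hgen x
    rw [Algebra.adjoin_singleton_eq_range_aeval] at hx
    obtain ⟨p, rfl⟩ := hx
    have hm : (X ^ 4 - X : ℤ[X]).Monic := by monicity!
    have hdeg : (X ^ 4 - X : ℤ[X]).natDegree = 4 := by compute_degree!
    have hpe : aeval t p = aeval t (p %ₘ (X ^ 4 - X)) := by
      conv_lhs => rw [← modByMonic_add_div p (X ^ 4 - X)]
      simp [ht]
    have hlt : (p %ₘ (X ^ 4 - X)).natDegree < 4 := by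
      have := natDegree_modByMonic_lt p hm (by intro h; rw [h] at hdeg; simp at hdeg)
      rwa [hdeg] at this
    have hz : ∀ z : ℤ, (if decide (Odd z) then (1 : Q) else 0) = (z : Q) := by
      intro z
      rcases Int.even_or_odd' z with ⟨k, rfl | rfl⟩ <;> simp [h2]
    refine ⟨fun i => decide (Odd ((p %ₘ (X ^ 4 - X)).coeff i)), ?_⟩
    change f _ = aeval t p
    rw [hpe, aeval_eq_sum_range' hlt, Finset.sum_range]
    refine Finset.sum_congr rfl fun i _ => ?_
    rw [zsmul_eq_mul]
    exact congrArg (· * t ^ (i : ℕ)) (hz _)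
  have := Nat.card_le_card_of_surjective f hf
  simpa using this

theorem sextic_two_dvd {K : Type*} [Field K] [NumberField K] (hK : 5 ≤ Module.finrank ℚ K)
    (h : ∀ x : 𝓞 K, ∃ y, x ^ 4 = x + 2 * y) (t : 𝓞 K) :
    2 ∣ ((Algebra.adjoin ℤ ({t} : Set (𝓞 K))).toSubring.toAddSubgroup).index := by
  by_contra hn
  set H := (Algebra.adjoin ℤ ({t} : Set (𝓞 K))).toSubring.toAddSubgroup with hH
  have hodd : Odd H.index := by
    rw [← Nat.not_even_iff_odd, even_iff_two_dvd]; exact hn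
  obtain ⟨e, he⟩ := hodd
  let I : Ideal (𝓞 K) := Ideal.span {2}
  have h2' : Ideal.Quotient.mk I 2 = 0 :=
    Ideal.Quotient.eq_zero_iff_mem.2 (Ideal.mem_span_singleton_self _)
  have h2 : (2 : 𝓞 K ⧸ I) = 0 := (map_ofNat (Ideal.Quotient.mk I) 2).symm.trans h2'
  have hc : Nat.card (𝓞 K ⧸ I) ≤ 16 := by
    apply sextic_card h2 (Ideal.Quotient.mk I t)
    · obtain ⟨y, hy⟩ := h t
      rw [← map_pow, hy]; simp [h2']
    · intro x
      obtain ⟨x, rfl⟩ := Ideal.Quotient.mk_surjective x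
      have hx : H.index • x ∈ H := AddSubgroup.nsmul_index_mem H x
      have hx' : H.index • x ∈ Algebra.adjoin ℤ ({t} : Set (𝓞 K)) := hx
      rw [he] at hx'
      have : (Ideal.Quotient.mk I).toIntAlgHom ((2 * e + 1) • x) ∈
          (Algebra.adjoin ℤ ({t} : Set (𝓞 K))).map (Ideal.Quotient.mk I).toIntAlgHom :=
        ⟨_, hx', rfl⟩
      rw [AlgHom.map_adjoin_singleton] at this
      simpa [h2', add_mul] using this
  have hc2 : Nat.card (𝓞 K ⧸ I) = 2 ^ Module.finrank ℚ K := by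
    have h1 : Ideal.absNorm I = Nat.card (𝓞 K ⧸ I) := by
      rw [Ideal.absNorm_apply, Submodule.cardQuot_apply]
    rw [← h1, Ideal.absNorm_span_singleton]
    have : (2 : 𝓞 K) = algebraMap ℤ (𝓞 K) 2 := by simp
    rw [this, Algebra.norm_algebraMap, RingOfIntegers.rank]
    simp [Int.natAbs_pow]
  rw [hc2] at hc
  have : 2 ^ 5 ≤ 2 ^ Module.finrank ℚ K := Nat.pow_le_pow_right (by norm_num) hK
  omega

theorem sextic_denominator {K : Type*} [Field K] [NumberField K] (θ : 𝓞 K)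
    (hgen : Algebra.adjoin ℚ {(θ : K)} = ⊤) :
    ∃ D : ℕ, D ≠ 0 ∧ ∀ x : 𝓞 K, (D : 𝓞 K) * x ∈ Algebra.adjoin ℤ ({θ} : Set (𝓞 K)) := by
  have hint : IsIntegral ℚ (θ : K) := Algebra.IsIntegral.isIntegral _
  let B : PowerBasis ℚ K := PowerBasis.ofAdjoinEqTop hint hgen
  have hB : B.gen = (θ : K) := PowerBasis.ofAdjoinEqTop_gen hint hgen
  have hi : IsIntegral ℤ B.gen := by rw [hB]; exact θ.isIntegral_coe
  have hd : IsIntegral ℤ (Algebra.discr ℚ B.basis) := by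
    apply Algebra.discr_isIntegral
    intro i
    rw [B.basis_eq_pow]
    exact hi.pow _
  obtain ⟨z, hz⟩ := IsIntegrallyClosed.isIntegral_iff.1 hd
  have hz0 : z ≠ 0 := by
    rintro rfl
    exact Algebra.discr_not_zero_of_basis ℚ B.basis (by rw [← hz]; simp)
  have hmem : ∀ x : 𝓞 K, (z : 𝓞 K) * x ∈ Algebra.adjoin ℤ ({θ} : Set (𝓞 K)) := by
    intro x
    have := Algebra.discr_mul_isIntegral_mem_adjoin (R := ℤ) (K := ℚ) (B := B) hi x.isIntegral_coe
    rw [← hz, hB] at this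
    have h3 : Algebra.adjoin ℤ ({(θ : K)} : Set K) =
        (Algebra.adjoin ℤ ({θ} : Set (𝓞 K))).map (algebraMap (𝓞 K) K).toIntAlgHom := by
      rw [AlgHom.map_adjoin_singleton]; rfl
    rw [h3] at this
    obtain ⟨w, hw, hw2⟩ := this
    have : w = (z : 𝓞 K) * x := by
      apply RingOfIntegers.ext
      have h4 : (w : K) = _ := hw2
      rw [h4]
      simp [Algebra.smul_def]
    exact this ▸ hw
  refine ⟨z.natAbs, by simpa using hz0, fun x => ?_⟩
  rcases Int.natAbs_eq z with h | h
  · have := hmem x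
    rw [h] at this
    simpa using this
  · have := hmem x
    rw [h] at this
    simpa using this

theorem sextic_finrank {K : Type*} [Field K] [NumberField K] (θ : 𝓞 K) (F : ℤ[X])
    (hmon : F.Monic) (hirr : Irreducible F) (hroot : Polynomial.aeval (θ : K) F = 0)
    (hgen : Algebra.adjoin ℚ {(θ : K)} = ⊤) : Module.finrank ℚ K = F.natDegree := by
  have hint : IsIntegral ℚ (θ : K) := Algebra.IsIntegral.isIntegral _
  let B : PowerBasis ℚ K := PowerBasis.ofAdjoinEqTop hint hgen
  have hB : B.gen = (θ : K) := PowerBasis.ofAdjoinEqTop_gen hint hgen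
  rw [B.finrank, ← B.natDegree_minpoly, hB]
  have h1 : Irreducible (F.map (algebraMap ℤ ℚ)) :=
    (hmon.irreducible_iff_irreducible_map_fraction_map).1 hirr
  rw [← minpoly.eq_of_irreducible_of_monic h1 (by rw [aeval_map_algebraMap]; exact hroot) (hmon.map _)]
  exact hmon.natDegree_map _

/-- If `K` is a sextic field generated by a root of an irreducible trinomial
`x^6 + a x^m + b` with `a ≡ 0 (mod 8)` and `b ≡ -1 (mod 4)`, then `2` divides
`i(K)`; in particular `K` is not monogenic. -/
theorem two_divides_index_of_sextic
    {K : Type*} [Field K] [NumberField K] (θ : 𝓞 K)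
    (m : ℕ) (hm : 1 ≤ m) (hm5 : m ≤ 5)
    (a b : ℤ)
    (F : ℤ[X]) (hF : F = X ^ 6 + C a * X ^ m + C b)
    (hirr : Irreducible F)
    (hroot : Polynomial.aeval (θ : K) F = 0)
    (hgen : Algebra.adjoin ℚ {(θ : K)} = ⊤)
    (ha : a ≡ 0 [ZMOD 8])
    (hb : b ≡ -1 [ZMOD 4]) :
    (∀ θ' : 𝓞 K, Algebra.adjoin ℚ {(θ' : K)} = ⊤ → 2 ∣ subIndex θ') ∧
      ¬ ∃ β : 𝓞 K, Algebra.adjoin ℤ ({β} : Set (𝓞 K)) = ⊤ := by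
  have hdegF : F.natDegree = 6 := by
    rw [hF]
    interval_cases m <;> compute_degree!
  have hmon : F.Monic := by
    rw [hF]
    interval_cases m <;> monicity!
  have hfr := sextic_finrank θ F hmon hirr hroot hgen
  rw [hdegF] at hfr
  obtain ⟨g, hg⟩ := (Int.modEq_zero_iff_dvd).1 ha
  obtain ⟨e, he⟩ := hb.dvd
  have hb' : b = -1 - 4 * e := by linarith
  have c2 : algebraMap (𝓞 K) K 2 = 2 := map_ofNat _ 2
  have c4 : algebraMap (𝓞 K) K 4 = 4 := map_ofNat _ 4
  have c8 : algebraMap (𝓞 K) K 8 = 8 := map_ofNat _ 8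
  have d4 : aeval (θ : K) (4 : ℤ[X]) = 4 := map_ofNat _ 4
  have d8 : aeval (θ : K) (8 : ℤ[X]) = 8 := map_ofNat _ 8
  have hrt : θ ^ 6 + 8 * (g : 𝓞 K) * θ ^ m - 1 - 4 * (e : 𝓞 K) = 0 := by
    apply RingOfIntegers.ext
    rw [hF, hg, hb'] at hroot
    simp [d4, d8] at hroot
    simp [c4, c8]
    linear_combination hroot
  have hα : IsIntegral ℤ (((θ : K) ^ 3 + 1) / 2) := by
    have hp : (X ^ 2 - X : ℤ[X]).Monic := by monicity!
    have hpd : (X ^ 2 - X : ℤ[X]).natDegree = 2 := by compute_degree!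
    refine IsIntegral.of_aeval_monic hp (by rw [hpd]; norm_num) ?_
    have : aeval (((θ : K) ^ 3 + 1) / 2) (X ^ 2 - X : ℤ[X])
        = (((e : 𝓞 K) - 2 * g * θ ^ m : 𝓞 K) : K) := by
      have hrt' := congrArg (fun y : 𝓞 K => (y : K)) hrt
      simp [c4, c8] at hrt'
      simp [c2]
      linear_combination hrt' / 4
    rw [this]
    exact RingOfIntegers.isIntegral_coe _
  obtain ⟨α, hαe⟩ : ∃ α : 𝓞 K, (α : K) = ((θ : K) ^ 3 + 1) / 2 := ⟨⟨_, hα⟩, rfl⟩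
  have h1 : θ ^ 3 = 2 * α - 1 := by
    apply RingOfIntegers.ext
    simp [hαe, c2]
    ring
  have h2 : α ^ 2 = α + e - 2 * g * θ ^ m := by
    have : (4 : 𝓞 K) * α ^ 2 = 4 * (α + e - 2 * g * θ ^ m) := by
      linear_combination hrt - (θ ^ 3 + 2 * α - 1) * h1
    exact mul_left_cancel₀ (by norm_num) this
  have key : ∀ x : 𝓞 K, ∃ y, x ^ 4 = x + 2 * y := by
    obtain ⟨D, hD0, hD⟩ := sextic_denominator θ hgen
    let R : Subalgebra ℤ (𝓞 K) := Algebra.adjoin ℤ {θ, α}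
    have hθR : θ ∈ R := Algebra.subset_adjoin (by simp)
    have hαR : α ∈ R := Algebra.subset_adjoin (by simp)
    have hle : Algebra.adjoin ℤ {θ} ≤ R := Algebra.adjoin_mono (by simp)
    refine sextic_all R (sextic_pow4_closed R _ rfl ?_) D hD0 (fun x => hle (hD x))
    intro x hx
    rcases hx with rfl | hx
    · exact ⟨x * (α - 1), R.mul_mem hθR (R.sub_mem hαR R.one_mem), by linear_combination x * h1⟩
    · rw [Set.mem_singleton_iff] at hx
      subst hx
      have hw : (2 : ℤ) ∣ e + e ^ 2 := by
        have := Int.even_mul_succ_self e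
        rw [even_iff_two_dvd] at this
        rwa [show e + e ^ 2 = e * (e + 1) by ring]
      obtain ⟨w, hw⟩ := hw
      have hw' : (e : 𝓞 K) + e ^ 2 = 2 * w := by exact_mod_cast hw
      have hgR : (g : 𝓞 K) ∈ R := intCast_mem R g
      have heR : (e : 𝓞 K) ∈ R := intCast_mem R e
      have hwR : (w : 𝓞 K) ∈ R := intCast_mem R w
      have h2R : (2 : 𝓞 K) ∈ R := ofNat_mem R 2
      have huR : (g : 𝓞 K) * θ ^ m ∈ R := R.mul_mem hgR (R.pow_mem hθR m)
      refine ⟨w - g * θ ^ m + x * e + 2 * (g * θ ^ m) ^ 2 - 2 * ((x + e) * (g * θ ^ m)), ?_, ?_⟩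
      · exact R.sub_mem (R.add_mem (R.add_mem (R.sub_mem hwR huR) (R.mul_mem hαR heR))
          (R.mul_mem h2R (R.pow_mem huR 2)))
          (R.mul_mem h2R (R.mul_mem (R.add_mem hαR heR) huR))
      · linear_combination (x ^ 2 + x + e - 2 * g * θ ^ m) * h2 + h2 + hw'
  have hall := fun t => sextic_two_dvd (K := K) (by omega) key t
  refine ⟨fun t _ => hall t, ?_⟩
  rintro ⟨β, hβ⟩
  have := hall β
  rw [hβ] at this
  have h1 : ((⊤ : Subalgebra ℤ (𝓞 K)).toSubring.toAddSubgroup).index = 1 := by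
    rw [AddSubgroup.index_eq_one]; ext; simp
  rw [h1] at this
  omega
end

section
/- Let p be a rational prime and K a number field with ring of integers ℤ_K. For a positive integer f, let P_p(f) denote the number of distinct prime ideals of ℤ_K lying above p with residue degree f, and N_p(f) the number of monic irreducible polynomials of degree f in 𝔽_p[x]. If P_p(f) > N_p(f) for some positive integer f, then p divides (ℤ_K : ℤ[θ]) for every θ ∈ ℤ_K with K = ℚ(θ); that is, p is a common index divisor of K. -/
open Polynomial NumberField

/-- `N_p(f)`: the number of monic irreducible polynomials of degree `f` in `𝔽_p[x]`. -/
noncomputable def numMonicIrr (p f : ℕ) : ℕ :=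
  Nat.card {g : (ZMod p)[X] // g.Monic ∧ Irreducible g ∧ g.natDegree = f}

/-- If the number of primes of `ℤ_K` above `p` with residue degree `f` exceeds the
number of monic irreducible polynomials of degree `f` over `𝔽_p`, then `p` divides
`(ℤ_K : ℤ[θ])` for every generator `θ`, i.e. `p` is a common index divisor of `K`. -/
theorem common_index_divisor_of_many_primes
    {K : Type*} [Field K] [NumberField K]
    (p : ℕ) (hp : p.Prime) (f : ℕ) (hf : 0 < f)
    (h : numMonicIrr p f <
      Nat.card {P : Ideal (𝓞 K) // P.IsMaximal ∧ (p : 𝓞 K) ∈ P ∧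
        Nat.card (𝓞 K ⧸ P) = p ^ f}) :
    ∀ θ : 𝓞 K, Algebra.adjoin ℚ {(θ : K)} = ⊤ → p ∣ subIndex θ := by
  classical
  intro θ _
  haveI : Fact p.Prime := ⟨hp⟩
  by_contra hnd
  have hpe : ¬ p ∣ RingOfIntegers.exponent θ := by
    rw [RingOfIntegers.not_dvd_exponent_iff]
    have hm : ((subIndex θ : ℕ) : ℤ) ∈
        Ideal.comap (algebraMap ℤ (𝓞 K)) (conductor ℤ θ) := by
      rw [Ideal.mem_comap, mem_conductor_iff]
      intro b
      have := AddSubgroup.nsmul_index_mem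
        ((Algebra.adjoin ℤ ({θ} : Set (𝓞 K))).toSubring.toAddSubgroup) b
      simpa [subIndex, nsmul_eq_mul] using this
    have hco : IsCoprime ((subIndex θ : ℕ) : ℤ) (p : ℤ) :=
      Nat.isCoprime_iff_coprime.mpr ((Nat.Prime.coprime_iff_not_dvd hp).mpr hnd).symm
    rw [codisjoint_iff, Ideal.eq_top_iff_one]
    obtain ⟨a, b, hab⟩ := hco
    rw [← hab]
    exact Submodule.add_mem_sup (Ideal.mul_mem_left _ _ hm)
      (Ideal.mul_mem_left _ _ (Ideal.mem_span_singleton_self _))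
  let e := NumberField.Ideal.primesOverSpanEquivMonicFactorsMod hpe
  have hlies : ∀ P : Ideal (𝓞 K), P.IsMaximal → (p : 𝓞 K) ∈ P →
      P ∈ Ideal.primesOver (Ideal.span {(p : ℤ)}) (𝓞 K) := by
    intro P hP hpP
    refine ⟨hP.isPrime, ?_⟩
    refine (Ideal.liesOver_span_iff hP.ne_top (Nat.prime_iff_prime_int.mp hp)).mpr ?_
    simpa using hpP
  haveI : Finite {g : (ZMod p)[X] // g.Monic ∧ Irreducible g ∧ g.natDegree = f} := by
    haveI : Finite (degreeLT (ZMod p) (f + 1)) :=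
      Finite.of_equiv _ (degreeLTEquiv (ZMod p) (f + 1)).symm.toEquiv
    refine Finite.of_injective (β := degreeLT (ZMod p) (f + 1))
      (fun g => ⟨g.1, ?_⟩) ?_
    · rw [mem_degreeLT]
      refine lt_of_le_of_lt degree_le_natDegree ?_
      rw [g.2.2.2]
      exact_mod_cast Nat.lt_succ_self f
    · intro a b hab
      have hab' := (Subtype.mk.injEq _ _ _ _).mp hab
      exact Subtype.ext hab'
  refine absurd h (not_lt.mpr ?_)
  unfold numMonicIrr
  refine Nat.card_le_card_of_injective
    (fun P => ⟨(e ⟨P.1, hlies P.1 P.2.1 P.2.2.1⟩ : (ZMod p)[X]), ?_⟩) ?_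
  · obtain ⟨P, hP, hpP, hc⟩ := P
    have hmem := (e ⟨P, hlies P hP hpP⟩).2
    have h0 : Polynomial.map (Int.castRingHom (ZMod p)) (minpoly ℤ θ) ≠ 0 :=
      map_monic_ne_zero (minpoly.monic θ.isIntegral)
    have hmem' := hmem
    replace hmem' := Multiset.mem_toFinset.mp hmem'
    have hh := (Polynomial.mem_normalizedFactors_iff h0).mp hmem'
    refine ⟨hh.2.1, hh.1, ?_⟩
    have hd :=
      NumberField.Ideal.inertiaDeg_primesOverSpanEquivMonicFactorsMod_symm_apply' hpe hmem
    have he : (NumberField.Ideal.primesOverSpanEquivMonicFactorsMod hpe).symm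
        ⟨_, hmem⟩ = ⟨P, hlies P hP hpP⟩ := e.symm_apply_apply _
    rw [he] at hd
    haveI : P.LiesOver (Ideal.span {(p : ℤ)}) := (hlies P hP hpP).2
    have hn := Ideal.pow_inertiaDeg p P
    rw [Ideal.absNorm_apply, Submodule.cardQuot_apply, hc] at hn
    rw [← hd]
    exact Nat.pow_right_injective hp.two_le hn
  · intro P Q hPQ
    have h1 := congrArg Subtype.val hPQ
    have h2 := congrArg Subtype.val (e.injective (Subtype.ext h1))
    exact Subtype.ext h2
end

section
/- Let K = ℚ(θ) be a sextic number field generated by a root θ of a monic irreducible trinomial F(x) = x^6 + a x^m + b ∈ ℤ[x] with 1 ≤ m ≤ 5, where a ≡ 0 (mod 8) and b ≡ −1 (mod 4). Then there exist at least two distinct prime ideals of ℤ_K lying above 2 with residue degree 2. -/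
open Polynomial NumberField

lemma exists_prime_aux {A E : Type*} [CommRing A] [IsDomain A] [Algebra.IsIntegral ℤ A]
    [Field E] [CharP E 2] (θ β : A) (m : ℕ) (a' k : ℤ)
    (h1 : 2 * β = θ ^ 3 + 1)
    (h2 : β ^ 2 - β = (k : A) - 2 * (a' : A) * θ ^ m)
    (hdvd : ∀ p : ℤ[X], aeval θ p = 0 → (X ^ 6 + C (8 * a') * X ^ m + C (-1 - 4 * k)) ∣ p)
    (ξ η : E) (hξ : ξ ^ 3 = 1) (hη : η ^ 2 = η + (k : E)) :
    ∃ Q : Ideal A, Q.IsPrime ∧ ∀ p q : ℤ[X],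
      aeval θ p + aeval β q ∈ Q ↔ aeval ξ p + aeval η q = 0 := by
  have e2 : (2 : E) = 0 := CharTwo.two_eq_zero
  set f : ℤ[X][X] →+* A := eval₂RingHom (aeval θ : ℤ[X] →ₐ[ℤ] A).toRingHom β with hf
  set g : ℤ[X][X] →+* E := eval₂RingHom (aeval ξ : ℤ[X] →ₐ[ℤ] E).toRingHom η with hg
  have fC : ∀ q, f (C q) = aeval θ q := fun q => eval₂_C _ _
  have gC : ∀ q, g (C q) = aeval ξ q := fun q => eval₂_C _ _
  have fX : f X = β := eval₂_X _ _
  have gX : g X = η := eval₂_X _ _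
  clear_value f g
  have key : RingHom.ker f ≤ RingHom.ker g := by
    intro p hp
    rw [RingHom.mem_ker] at hp ⊢
    set w : ℤ[X] := C k - C (2 * a') * X ^ m with hw
    set G : ℤ[X][X] := X ^ 2 - X - C w with hG
    have hGm : G.Monic := by rw [hG]; monicity!
    have hGd : G.natDegree = 2 := by rw [hG]; compute_degree!
    have hfG : f G = 0 := by
      simp only [hG, hw, map_sub, map_mul, map_pow, fC, fX, aeval_C, aeval_X, algebraMap_int_eq,
        map_ofNat, eq_intCast, map_intCast]
      linear_combination h2
    have hgG : g G = 0 := by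
      simp only [hG, hw, map_sub, map_mul, map_pow, gC, gX, aeval_C, aeval_X, algebraMap_int_eq,
        map_ofNat, eq_intCast, map_intCast]
      linear_combination hη + e2 * a' * ξ ^ m
    have hdiv := modByMonic_add_div p G
    have hr : (p %ₘ G).natDegree ≤ 1 := by
      have := natDegree_modByMonic_lt p hGm (by rintro h; rw [h] at hGd; simp at hGd)
      omega
    obtain ⟨r1, r0, hr⟩ := exists_eq_X_add_C_of_natDegree_le_one hr
    rw [hr] at hdiv
    have hfr : aeval θ r1 * β + aeval θ r0 = 0 := by
      rw [← hdiv, map_add, map_mul f G, hfG] at hp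
      simpa [fC, fX] using hp
    obtain ⟨h, hh⟩ := hdvd (2 * r0 + r1 * (X ^ 3 + 1)) (by
      simp [map_ofNat]
      linear_combination 2 * hfr - aeval θ r1 * h1)
    have hp2 : Prime (C 2 : ℤ[X]) := Polynomial.prime_C_iff.2 Int.prime_two
    have hd : (C 2 : ℤ[X]) ∣ (X ^ 3 + 1) * (r1 - (X ^ 3 + 1) * h) := by
      refine ⟨(4 * C a' * X ^ m - 1 - 2 * C k - X ^ 3) * h - r0, ?_⟩
      simp only [map_sub, map_mul, map_neg, map_one, map_ofNat] at hh ⊢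
      linear_combination hh
    have hnd : ¬ (C 2 : ℤ[X]) ∣ X ^ 3 + 1 := by
      intro hd
      have := (C_dvd_iff_dvd_coeff _ _).1 hd 0
      simp at this
    obtain ⟨s, hs⟩ := (hp2.dvd_or_dvd hd).resolve_left hnd
    have hr0 : r0 = (4 * C a' * X ^ m - 1 - 2 * C k - X ^ 3) * h - s * (X ^ 3 + 1) := by
      refine mul_left_cancel₀ hp2.ne_zero ?_
      simp only [map_sub, map_mul, map_neg, map_one, map_ofNat] at hh hs ⊢
      linear_combination hh - (X ^ 3 + 1) * hs
    have hr1 : r1 = (X ^ 3 + 1) * h + C 2 * s := by linear_combination hs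
    rw [← hdiv, map_add, map_mul g G, hgG, hr0, hr1]
    simp only [map_add, map_sub, map_mul, map_pow, gC, gX, aeval_C, aeval_X, algebraMap_int_eq,
        map_ofNat, eq_intCast, map_intCast, map_one, hξ]
    linear_combination (((aeval ξ) h + aeval ξ s) * η + (2 * a' * ξ ^ m - 1 - k) * aeval ξ h - aeval ξ s) * e2
  let : Algebra ℤ[X][X] A := f.toAlgebra
  have : Algebra.IsIntegral ℤ[X][X] A := ⟨fun x => by
    have hx : IsIntegral ℤ x := Algebra.IsIntegral.isIntegral x
    obtain ⟨q, hq, hq0⟩ := hx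
    refine ⟨q.map (algebraMap ℤ ℤ[X][X]), hq.map _, ?_⟩
    rw [eval₂_map, ← hq0]
    congr 1
    exact RingHom.ext_int _ _⟩
  have : (RingHom.ker g).IsPrime := RingHom.ker_isPrime g
  obtain ⟨Q, -, hQ, hc⟩ := Ideal.exists_ideal_over_prime_of_isIntegral (S := A) (RingHom.ker g) ⊥ key
  refine ⟨Q, hQ, fun p q => ?_⟩
  have : C p + aeval (X : ℤ[X][X]) q ∈ Q.comap (algebraMap ℤ[X][X] A) ↔
      C p + aeval (X : ℤ[X][X]) q ∈ RingHom.ker g := by rw [hc]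
  rw [Ideal.mem_comap, RingHom.mem_ker] at this
  change f _ ∈ Q ↔ _ at this
  have fq : f (aeval X q) = aeval β q := by
    rw [← fX]; exact (aeval_algHom_apply f.toIntAlgHom X q).symm
  have gq : g (aeval X q) = aeval η q := by
    rw [← gX]; exact (aeval_algHom_apply g.toIntAlgHom X q).symm
  rwa [map_add, map_add, fC, gC, fq, gq] at this

lemma card_ge_four {A : Type*} [CommRing A] (Q : Ideal A) (hQ : Q ≠ ⊤) (t : A)
    [Finite (A ⧸ Q)]
    (h2 : (2 : A) ∈ Q) (ht : t ^ 2 + t + 1 ∈ Q) : 4 ≤ Nat.card (A ⧸ Q) := by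
  classical
  have := Ideal.Quotient.nontrivial_iff.2 hQ
  have := Fintype.ofFinite (A ⧸ Q)
  set u := Ideal.Quotient.mk Q t with hu
  have h2' : (2 : A ⧸ Q) = 0 := by
    have := Ideal.Quotient.eq_zero_iff_mem.2 h2
    simpa [map_ofNat] using this
  have ht' : u ^ 2 + u + 1 = 0 := by
    have := Ideal.Quotient.eq_zero_iff_mem.2 ht
    simpa using this
  have n0 : (1 : A ⧸ Q) ≠ 0 := one_ne_zero
  have n1 : u ≠ 0 := fun h => n0 (by rw [h] at ht'; linear_combination ht')
  have n2 : u ≠ 1 := fun h => n0 (by rw [h] at ht'; linear_combination ht' - h2')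
  have n3 : u + 1 ≠ 0 := fun h => n0 (by linear_combination ht' - u * h)
  have n4 : u + 1 ≠ 1 := fun h => n1 (by linear_combination h)
  have n5 : u + 1 ≠ u := fun h => n0 (by linear_combination h)
  have : ({0, 1, u, u + 1} : Finset (A ⧸ Q)).card = 4 := by
    rw [Finset.card_insert_of_notMem, Finset.card_insert_of_notMem, Finset.card_insert_of_notMem,
      Finset.card_singleton]
    · simpa using n5.symm
    · simp only [Finset.mem_insert, Finset.mem_singleton, not_or]
      exact ⟨n2.symm, n4.symm⟩
    · simp only [Finset.mem_insert, Finset.mem_singleton, not_or]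
      exact ⟨n0.symm, n1.symm, n3.symm⟩
  rw [Nat.card_eq_fintype_card, ← this]
  exact Finset.card_le_univ _

lemma quad_eval {A : Type*} [CommRing A] (t : A) :
    aeval t (X ^ 2 + X + 1 : ℤ[X]) = t ^ 2 + t + 1 := by
  rw [map_add, map_add, map_pow, map_one, aeval_X]

lemma quad_mem {A : Type*} [CommRing A] (Q : Ideal A) (t s : A)
    (h : aeval t (X ^ 2 + X + 1 : ℤ[X]) + aeval s (0 : ℤ[X]) ∈ Q) : t ^ 2 + t + 1 ∈ Q := by
  rwa [map_zero, add_zero, quad_eval] at h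

lemma quad_mem' {A : Type*} [CommRing A] (Q : Ideal A) (s t : A)
    (h : aeval s (0 : ℤ[X]) + aeval t (X ^ 2 + X + 1 : ℤ[X]) ∈ Q) : t ^ 2 + t + 1 ∈ Q := by
  rwa [map_zero, zero_add, quad_eval] at h

lemma arith_aux {x y z : ℕ} (h : x * y * z ∣ 64) (hx : 4 ≤ x) (hy : 4 ≤ y) (hz : 4 ≤ z) :
    x = 2 ^ 2 ∧ y = 2 ^ 2 := by
  have h1 := Nat.le_of_dvd (by norm_num) h
  have h2 : x * 4 * 4 ≤ x * y * z := by gcongr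
  have h3 : 4 * y * 4 ≤ x * y * z := by gcongr
  omega

/-- For a sextic field `K` defined by a trinomial `x^6 + a x^m + b` with
`a ≡ 0 (mod 8)` and `b ≡ -1 (mod 4)`, there are at least two distinct primes of
`ℤ_K` above `2` with residue degree `2`. -/
theorem two_primes_above_two_of_sextic
    {K : Type*} [Field K] [NumberField K] (θ : 𝓞 K)
    (m : ℕ) (hm : 1 ≤ m) (hm5 : m ≤ 5)
    (a b : ℤ)
    (F : ℤ[X]) (hF : F = X ^ 6 + C a * X ^ m + C b)
    (hirr : Irreducible F)
    (hroot : Polynomial.aeval (θ : K) F = 0)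
    (hgen : Algebra.adjoin ℚ {(θ : K)} = ⊤)
    (ha : a ≡ 0 [ZMOD 8])
    (hb : b ≡ -1 [ZMOD 4]) :
    ∃ P Q : Ideal (𝓞 K), P ≠ Q ∧
      P.IsMaximal ∧ (2 : 𝓞 K) ∈ P ∧ Nat.card (𝓞 K ⧸ P) = 2 ^ 2 ∧
      Q.IsMaximal ∧ (2 : 𝓞 K) ∈ Q ∧ Nat.card (𝓞 K ⧸ Q) = 2 ^ 2 := by
  obtain ⟨a', rfl⟩ : ∃ a', a = 8 * a' := by
    obtain ⟨c, hc⟩ := ha.symm.dvd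
    exact ⟨c, by linarith⟩
  obtain ⟨k, rfl⟩ : ∃ k, b = -1 - 4 * k := by
    obtain ⟨c, hc⟩ := hb.symm.dvd
    exact ⟨-c, by linarith⟩
  have hFm : F.Monic := by
    rw [hF]; interval_cases m <;> monicity!
  have hFd : F.natDegree = 6 := by
    rw [hF]; interval_cases m <;> compute_degree!
  have hrootO : aeval θ F = 0 := by
    apply RingOfIntegers.coe_injective
    rw [map_zero, ← hroot]
    exact (aeval_algebraMap_apply K θ F).symm
  have hintO : IsIntegral ℤ θ := Algebra.IsIntegral.isIntegral θ
  have hmin : minpoly ℤ θ = F := by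
    have hd := minpoly.isIntegrallyClosed_dvd hintO hrootO
    refine eq_of_monic_of_associated (minpoly.monic hintO) hFm ?_
    exact (hirr.dvd_iff.1 hd).resolve_left (minpoly.not_isUnit ℤ θ) |>.symm
  have hdvd : ∀ p : ℤ[X], aeval θ p = 0 →
      (X ^ 6 + C (8 * a') * X ^ m + C (-1 - 4 * k)) ∣ p := by
    intro p hp
    rw [← hF, ← hmin]
    exact minpoly.isIntegrallyClosed_dvd hintO hp
  have hintK : IsIntegral ℤ (θ : K) := RingOfIntegers.isIntegral_coe θ
  have hfin : Module.finrank ℚ K = 6 := by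
    have hq : IsIntegral ℚ (θ : K) := hintK.tower_top
    have h1 : minpoly ℚ (θ : K) = (minpoly ℤ (θ : K)).map (algebraMap ℤ ℚ) :=
      minpoly.isIntegrallyClosed_eq_field_fractions' ℚ hintK
    have h2 : minpoly ℤ (θ : K) = F := by
      rw [← hmin]; exact minpoly.algebraMap_eq RingOfIntegers.coe_injective θ
    have h3 := IntermediateField.adjoin.finrank hq
    have h4 : IntermediateField.adjoin ℚ {(θ : K)} = ⊤ := by
      rw [eq_top_iff]
      intro x _
      have : x ∈ Algebra.adjoin ℚ {(θ : K)} := by rw [hgen]; trivial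
      exact IntermediateField.algebra_adjoin_le_adjoin _ _ this
    rw [h4, IntermediateField.finrank_top', h1, h2, hFm.natDegree_map, hFd] at h3
    exact h3
  have hrel : θ ^ 6 = 1 + 4 * (k : 𝓞 K) - 8 * a' * θ ^ m := by
    rw [hF] at hrootO
    simp [map_ofNat] at hrootO
    linear_combination hrootO
  have hrelK : (θ : K) ^ 6 = 1 + 4 * (k : K) - 8 * a' * (θ : K) ^ m := by
    have := congrArg (algebraMap (𝓞 K) K) hrel
    simpa [map_ofNat] using this
  -- the element β
  obtain ⟨β, hβ⟩ : ∃ β : 𝓞 K, (β : K) = ((θ : K) ^ 3 + 1) / 2 := by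
    have hi : IsIntegral ℤ (((θ : K) ^ 3 + 1) / 2) := by
      refine IsIntegral.of_aeval_monic (p := X ^ 2 - X) (by monicity!) ?_ ?_
      · have : (X ^ 2 - X : ℤ[X]).natDegree = 2 := by compute_degree!
        rw [this]; norm_num
      · have : aeval (((θ : K) ^ 3 + 1) / 2) (X ^ 2 - X : ℤ[X]) =
            ((k - 2 * a' * θ ^ m : 𝓞 K) : K) := by
          simp [map_ofNat]
          linear_combination hrelK / 4
        rw [this]
        exact RingOfIntegers.isIntegral_coe _
    exact ⟨⟨_, hi⟩, rfl⟩
  have h1 : 2 * β = θ ^ 3 + 1 := by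
    apply RingOfIntegers.coe_injective
    simp [hβ, map_ofNat]
    ring
  have h2 : β ^ 2 - β = (k : 𝓞 K) - 2 * (a' : 𝓞 K) * θ ^ m := by
    apply RingOfIntegers.coe_injective
    simp [hβ, map_ofNat]
    linear_combination hrelK / 4
  -- the residue field
  let E := AlgebraicClosure (ZMod 2)
  have : CharP E 2 := charP_of_injective_algebraMap (algebraMap (ZMod 2) E).injective 2
  have e2 : (2 : E) = 0 := CharTwo.two_eq_zero
  obtain ⟨ω, hω⟩ : ∃ ω : E, ω ^ 2 + ω + 1 = 0 := by
    have hd : (X ^ 2 + X + 1 : E[X]).degree ≠ 0 := by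
      have : (X ^ 2 + X + 1 : E[X]).degree = 2 := by compute_degree!
      rw [this]; norm_num
    obtain ⟨w, hw⟩ := IsAlgClosed.exists_root _ hd
    exact ⟨w, by simpa using hw⟩
  have hω3 : ω ^ 3 = 1 := by linear_combination (ω - 1) * hω
  have H := fun (ξ η : E) (hξ : ξ ^ 3 = 1) (hη : η ^ 2 = η + (k : E)) =>
    exists_prime_aux θ β m a' k h1 h2 hdvd ξ η hξ hη
  have hne2 : (2 : 𝓞 K) ≠ 0 := two_ne_zero
  have hmax : ∀ Q : Ideal (𝓞 K), Q.IsPrime → (2 : 𝓞 K) ∈ Q → Q.IsMaximal := by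
    intro Q hQ h
    exact hQ.isMaximal (fun hb => hne2 (by simpa [hb] using h))
  have hnorm2 : Ideal.absNorm (Ideal.span {(2 : 𝓞 K)}) = 64 := by
    rw [Ideal.absNorm_span_singleton]
    have : Algebra.norm ℤ (2 : 𝓞 K) = 2 ^ Module.finrank ℤ (𝓞 K) := by
      simpa using Algebra.norm_algebraMap (S := 𝓞 K) (2 : ℤ)
    rw [this, RingOfIntegers.rank, hfin]
    norm_num
  have hfinite : ∀ Q : Ideal (𝓞 K), (2 : 𝓞 K) ∈ Q → Finite (𝓞 K ⧸ Q) := by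
    intro Q h
    exact Ideal.finiteQuotientOfFreeOfNeBot Q (fun hb => hne2 (by simpa [hb] using h))
  have hdv : ∀ Q : Ideal (𝓞 K), (2 : 𝓞 K) ∈ Q → Q ∣ Ideal.span {(2 : 𝓞 K)} := by
    intro Q h
    rw [Ideal.dvd_iff_le, Ideal.span_singleton_le_iff_mem]
    exact h
  have hge4 : ∀ Q : Ideal (𝓞 K), Q.IsPrime → (2 : 𝓞 K) ∈ Q → ∀ t, t ^ 2 + t + 1 ∈ Q →
      4 ≤ Nat.card (𝓞 K ⧸ Q) := by
    intro Q hQ h t ht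
    have := hfinite Q h
    exact card_ge_four Q hQ.ne_top t h ht
  have hcop : ∀ P Q : Ideal (𝓞 K), P.IsPrime → Q.IsPrime → (2 : 𝓞 K) ∈ P → (2 : 𝓞 K) ∈ Q →
      ∀ x ∈ P, x ∉ Q → IsCoprime P Q := by
    intro P Q hP hQ h h' x hx hx'
    have := hmax P hP h
    have := hmax Q hQ h'
    exact Ideal.isCoprime_of_isMaximal (fun hh => hx' (hh ▸ hx))
  have hfinal : ∀ P Q J : Ideal (𝓞 K), P.IsPrime → Q.IsPrime →
      (2 : 𝓞 K) ∈ P → (2 : 𝓞 K) ∈ Q → IsCoprime P Q → IsCoprime P J → IsCoprime Q J →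
      J ∣ Ideal.span {(2 : 𝓞 K)} → 4 ≤ Ideal.absNorm J →
      4 ≤ Nat.card (𝓞 K ⧸ P) → 4 ≤ Nat.card (𝓞 K ⧸ Q) →
      ∃ P Q : Ideal (𝓞 K), P ≠ Q ∧
      P.IsMaximal ∧ (2 : 𝓞 K) ∈ P ∧ Nat.card (𝓞 K ⧸ P) = 2 ^ 2 ∧
      Q.IsMaximal ∧ (2 : 𝓞 K) ∈ Q ∧ Nat.card (𝓞 K ⧸ Q) = 2 ^ 2 := by
    intro P Q J hP hQ h h' c1 c2 c3 hJ hJ4 n1 n2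
    have hd : P * Q * J ∣ Ideal.span {(2 : 𝓞 K)} :=
      (c2.mul_left c3).mul_dvd (c1.mul_dvd (hdv P h) (hdv Q h')) hJ
    have hd' := map_dvd Ideal.absNorm hd
    rw [map_mul, map_mul, hnorm2] at hd'
    obtain ⟨r1, r2⟩ := arith_aux hd' n1 n2 hJ4
    refine ⟨P, Q, ?_, hmax P hP h, h, r1, hmax Q hQ h', h', r2⟩
    rintro rfl
    have := Ideal.isCoprime_iff_add.1 c1
    rw [Submodule.add_eq_sup, sup_idem, Ideal.one_eq_top] at this
    exact hP.ne_top this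
  have en1 : (1 : E) ≠ 0 := one_ne_zero
  have ew0 : ω ≠ 0 := fun h => en1 (by rw [h] at hω; linear_combination hω)
  have ew1 : ω ≠ 1 := fun h => en1 (by rw [h] at hω; linear_combination hω - e2)
  rcases Int.even_or_odd' k with ⟨l, hl | hl⟩
  · have hk : (k : E) = 0 := by rw [hl]; push_cast; linear_combination l * e2
    obtain ⟨P, hP, fP⟩ := H ω 0 hω3 (by simp [hk])
    obtain ⟨Q, hQ, fQ⟩ := H ω 1 hω3 (by simp [hk])
    obtain ⟨R, hR, fR⟩ := H 1 0 (by simp) (by simp [hk])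
    obtain ⟨S, hS, fS⟩ := H 1 1 (by simp) (by simp [hk])
    have P2 : (2 : 𝓞 K) ∈ P := by simpa [map_ofNat] using (fP (C 2) 0).2 (by simp [map_ofNat, e2])
    have Q2 : (2 : 𝓞 K) ∈ Q := by simpa [map_ofNat] using (fQ (C 2) 0).2 (by simp [map_ofNat, e2])
    have R2 : (2 : 𝓞 K) ∈ R := by simpa [map_ofNat] using (fR (C 2) 0).2 (by simp [map_ofNat, e2])
    have S2 : (2 : 𝓞 K) ∈ S := by simpa [map_ofNat] using (fS (C 2) 0).2 (by simp [map_ofNat, e2])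
    have Pβ : β ∈ P := by simpa using (fP 0 X).2 (by simp)
    have Rβ : β ∈ R := by simpa using (fR 0 X).2 (by simp)
    have Qβ : β ∉ Q := fun h => by simpa using (fQ 0 X).1 (by simpa using h)
    have Sβ : β ∉ S := fun h => by simpa using (fS 0 X).1 (by simpa using h)
    have Pt : θ ^ 2 + θ + 1 ∈ P := by
      exact quad_mem _ θ β ((fP (X ^ 2 + X + 1) 0).2 (by simpa using hω))
    have Qt : θ ^ 2 + θ + 1 ∈ Q := by
      exact quad_mem _ θ β ((fQ (X ^ 2 + X + 1) 0).2 (by simpa using hω))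
    have Rt : θ ^ 2 + θ + 1 ∉ R := fun h => en1 (by
      have := (fR (X ^ 2 + X + 1) 0).1 (by simpa using h)
      simp at this
      linear_combination this - e2)
    have St : θ ^ 2 + θ + 1 ∉ S := fun h => en1 (by
      have := (fS (X ^ 2 + X + 1) 0).1 (by simpa using h)
      simp at this
      linear_combination this - e2)
    have cRS := hcop R S hR hS R2 S2 β Rβ Sβ
    have two_le : ∀ I : Ideal (𝓞 K), I.IsPrime → (2 : 𝓞 K) ∈ I → 2 ≤ Ideal.absNorm I := by
      intro I hI h
      have := hfinite I h
      have n1 : Ideal.absNorm I ≠ 1 := fun h => hI.ne_top (Ideal.absNorm_eq_one_iff.1 h)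
      have n0 : Ideal.absNorm I ≠ 0 := (Ideal.absNorm_ne_zero_iff I).2 inferInstance
      omega
    refine hfinal P Q (R * S) hP hQ P2 Q2 (hcop P Q hP hQ P2 Q2 β Pβ Qβ)
      ((hcop P R hP hR P2 R2 _ Pt Rt).mul_right (hcop P S hP hS P2 S2 _ Pt St))
      ((hcop Q R hQ hR Q2 R2 _ Qt Rt).mul_right (hcop Q S hQ hS Q2 S2 _ Qt St))
      (cRS.mul_dvd (hdv R R2) (hdv S S2)) ?_ (hge4 P hP P2 θ Pt) (hge4 Q hQ Q2 θ Qt)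
    rw [map_mul]
    exact Nat.mul_le_mul (two_le R hR R2) (two_le S hS S2)
  · have hk : (k : E) = 1 := by rw [hl, Int.cast_add, Int.cast_mul, Int.cast_one, Int.cast_ofNat]; linear_combination l * e2
    have hη : ω ^ 2 = ω + (k : E) := by
      rw [hk]; linear_combination hω - (ω + 1) * e2
    have hω' : (ω + 1) ^ 2 + (ω + 1) + 1 = 0 := by linear_combination hω + (ω + 1) * e2
    obtain ⟨P, hP, fP⟩ := H ω ω hω3 hη
    obtain ⟨Q, hQ, fQ⟩ := H (ω + 1) ω (by linear_combination ω * hω') hη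
    obtain ⟨R, hR, fR⟩ := H 1 ω (by simp) hη
    have P2 : (2 : 𝓞 K) ∈ P := by simpa [map_ofNat] using (fP (C 2) 0).2 (by simp [map_ofNat, e2])
    have Q2 : (2 : 𝓞 K) ∈ Q := by simpa [map_ofNat] using (fQ (C 2) 0).2 (by simp [map_ofNat, e2])
    have R2 : (2 : 𝓞 K) ∈ R := by simpa [map_ofNat] using (fR (C 2) 0).2 (by simp [map_ofNat, e2])
    have Pt : θ ^ 2 + θ + 1 ∈ P := by
      exact quad_mem _ θ β ((fP (X ^ 2 + X + 1) 0).2 (by simpa using hω))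
    have Qt : θ ^ 2 + θ + 1 ∈ Q := by
      exact quad_mem _ θ β ((fQ (X ^ 2 + X + 1) 0).2 (by simpa using hω'))
    have Rt : β ^ 2 + β + 1 ∈ R := by
      exact quad_mem' _ θ β ((fR 0 (X ^ 2 + X + 1)).2 (by simpa using hω))
    have Rt' : θ ^ 2 + θ + 1 ∉ R := fun h => en1 (by
      have := (fR (X ^ 2 + X + 1) 0).1 (by simpa using h)
      simp at this
      linear_combination this - e2)
    have Pd : θ + -β ∈ P := by simpa using (fP X (-X)).2 (by simp)
    have Qd : θ + -β ∉ Q := fun h => by simpa using (fQ X (-X)).1 (by simpa using h)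
    exact hfinal P Q R hP hQ P2 Q2 (hcop P Q hP hQ P2 Q2 _ Pd Qd)
      (hcop P R hP hR P2 R2 _ Pt Rt') (hcop Q R hQ hR Q2 R2 _ Qt Rt') (hdv R R2)
      (hge4 R hR R2 β Rt) (hge4 P hP P2 θ Pt) (hge4 Q hQ Q2 θ Qt)
end

section
/- Let m be an integer with 1 ≤ m ≤ 5 such that F(x) = x^6 + 72 x^m + 35 is irreducible over ℚ, and let K = ℚ(α) for a root α of F. Then there are exactly three distinct prime ideals of ℤ_K lying above 2, each with residue degree 2. -/
open Polynomial NumberField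

lemma hens {W k : Type*} [CommRing W] [Field k] [CharP k 2] (φ : W →+* k)
  (hsurj : Function.Surjective φ) (unit_of : ∀ x, φ x ≠ 0 → IsUnit x)
  (hH : HenselianRing W (RingHom.ker φ))
  (g0 g1 g2 g3 g4 g5 g6 : W) (ω : k) (hω : ω^2+ω+1=0)
  (h0 : φ g0 = 1) (h1 : φ g1 = 1)
  (h2 : φ g2 = 1) (h3 : φ g3 = 0)
  (h4 : φ g4 = 0) (h5 : φ g5 = 0)
  (h6 : φ g6 = 0) :
  ∃ z : W, g0+g1*z+g2*z^2+g3*z^3+g4*z^4+g5*z^5+g6*z^6 = 0 ∧ φ z = ω := by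
  have two : (2:k) = 0 := CharTwo.two_eq_zero
  have hω0 : ω ≠ 0 := by rintro rfl; simp at hω
  have hω3 : ω^3 = 1 := by linear_combination (ω-1)*hω
  obtain ⟨v, hv⟩ := (unit_of g0 (by rw [h0]; exact one_ne_zero)).exists_right_inv
  have hv1 : φ v = 1 := by
    have := congrArg φ hv
    simpa [h0] using this
  let f : W[X] := X^6 + (C (v*g1) * X^5 + C (v*g2) * X^4 + C (v*g3) * X^3
    + C (v*g4) * X^2 + C (v*g5) * X + C (v*g6))
  have hf : f.Monic := by
    apply monic_X_pow_add
    compute_degree!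
  obtain ⟨y0, hy0⟩ := hsurj (ω^2)
  obtain ⟨y, hy, hyy⟩ := hH.is_henselian
    f hf y0 (by
      rw [RingHom.mem_ker]
      simp [f, h1,h2,h3,h4,h5,h6, hv1, hy0]
      grind) (by
      apply IsUnit.map
      apply unit_of
      have t3 : φ 3 = 3 := map_ofNat φ 3
      have t4 : φ 4 = 4 := map_ofNat φ 4
      have t5 : φ 5 = 5 := map_ofNat φ 5
      simp [f, h1,h2,h3,h4,h5, hv1, hy0, t3, t4, t5]
      clear hf
      grind)
  rw [RingHom.mem_ker, map_sub, hy0] at hyy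
  have hy1 : φ y = ω^2 := by linear_combination hyy
  obtain ⟨z, hz⟩ := (unit_of y (by rw [hy1]; exact pow_ne_zero _ hω0)).exists_right_inv
  refine ⟨z, ?_, ?_⟩
  · simp only [f, IsRoot.def, eval_add, eval_mul, eval_pow, eval_X, eval_C] at hy
    have e : y^6*v*(g0+g1*z+g2*z^2+g3*z^3+g4*z^4+g5*z^5+g6*z^6) = 0 := by
      have p2 : y^2*z^2=1 := by rw [← mul_pow, hz, one_pow]
      have p3 : y^3*z^3=1 := by rw [← mul_pow, hz, one_pow]
      have p4 : y^4*z^4=1 := by rw [← mul_pow, hz, one_pow]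
      have p5 : y^5*z^5=1 := by rw [← mul_pow, hz, one_pow]
      have p6 : y^6*z^6=1 := by rw [← mul_pow, hz, one_pow]
      linear_combination hy + y^6*hv + v*(g1*y^5*hz+g2*y^4*p2+g3*y^3*p3+g4*y^2*p4+g5*y*p5+g6*p6)
    have : IsUnit (y^6*v) := (((IsUnit.of_mul_eq_one _ hz)).pow 6).mul (IsUnit.of_mul_eq_one g0 (by rw [mul_comm]; exact hv))
    exact this.mul_right_eq_zero.mp e
  · have := congrArg φ hz
    rw [map_mul, hy1, map_one] at this
    linear_combination ω * this - φ z * hω3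

lemma rootW {W k : Type*} [CommRing W] [Field k] [CharP k 2] (φ : W →+* k)
  (hsurj : Function.Surjective φ) (unit_of : ∀ x, φ x ≠ 0 → IsUnit x)
  (hH : HenselianRing W (RingHom.ker φ)) (ω : k) (hω : ω^2+ω+1=0)
  (u : W) (hu : u^3 = 1) (m : ℕ) (hm : 1 ≤ m) (hm5 : m ≤ 5) :
  ∃ a c : W, a^6 + 72 * a^m + 35 = 0 ∧ 2 * c = a^3+1 ∧ φ a = φ u ∧ φ c = 1 + ω := by
  have two : (2:k) = 0 := CharTwo.two_eq_zero
  have two' : φ 2 = 0 := (map_ofNat φ 2).trans two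
  have key : ∃ z : W, 9+3*z+15*z^2+40*z^3+60*z^4+48*z^5+16*z^6+18*u^m*(1+2*z)^m = 0 ∧ φ z = ω := by
    obtain ⟨z, hz, hz'⟩ := hens φ hsurj unit_of hH (1+2*(4+9*u^m*m.choose 0)) (1+2*(1+18*u^m*m.choose 1))
      (1+2*(7+18*u^m*2*m.choose 2)) (2*(20+18*u^m*4*m.choose 3)) (2*(30+18*u^m*8*m.choose 4))
      (2*(24+18*u^m*16*m.choose 5)) (2*8) ω hω
      (by rw [map_add, map_mul, two']; simp) (by rw [map_add, map_mul, two']; simp)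
      (by rw [map_add, map_mul, two']; simp) (by rw [map_mul, two']; simp) (by rw [map_mul, two']; simp)
      (by rw [map_mul, two']; simp) (by rw [map_mul, two']; simp)
    refine ⟨z, ?_, hz'⟩
    rw [← hz]
    interval_cases m <;> simp [Nat.choose] <;> ring
  obtain ⟨z, hz, hz'⟩ := key
  refine ⟨u*(1+2*z), 1+3*z+6*z^2+4*z^3, ?_, ?_, ?_, ?_⟩
  · rw [mul_pow, mul_pow]
    linear_combination 4*hz + (u^3+1)*(1+2*z)^6*hu
  · linear_combination -(1+2*z)^3*hu
  · simp [two']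
  · have e : (1+3*z+6*z^2+4*z^3 : W) = 1 + z + 2*(z+3*z^2+2*z^3) := by ring
    rw [e, map_add, map_add, map_mul, two', hz']; simp

lemma homB {W k K : Type*} (L : Type*) [CommRing W] [IsDomain W] [Field L] [Algebra W L] [IsFractionRing W L] [IsIntegrallyClosed W] [CharZero W] [Field k]
    (φ : W →+* k) [Field K] [NumberField K] (α γ : 𝓞 K) (hγ : 2 * γ = α^3+1)
    (F : ℤ[X]) (hFm : F.Monic)
    (hirr : Irreducible F)
    (hroot : Polynomial.aeval (α : K) F = 0)
    (hgen : Algebra.adjoin ℚ {(α : K)} = ⊤)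
    (a c : W) (ha : aeval a F = 0) (hc : 2 * c = a^3+1) :
    ∃ ψ : 𝓞 K →+* k, ψ α = φ a ∧ ψ γ = φ c := by
  have : CharZero L := charZero_of_injective_algebraMap (IsFractionRing.injective W L)
  have hmin : minpoly ℚ (α : K) = F.map (algebraMap ℤ ℚ) := by
    symm
    apply minpoly.eq_of_irreducible_of_monic
    · exact (hFm.irreducible_iff_irreducible_map_fraction_map).mp hirr
    · rwa [aeval_map_algebraMap]
    · exact hFm.map _
  have hint : IsIntegral ℚ (α:K) := Algebra.IsIntegral.isIntegral _
  let pb := PowerBasis.ofAdjoinEqTop hint hgen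
  have hpg : pb.gen = (α:K) := PowerBasis.ofAdjoinEqTop_gen _ _
  let f : K →ₐ[ℚ] L := pb.lift (algebraMap W L a) (by
    rw [hpg, hmin, aeval_map_algebraMap, aeval_algebraMap_apply, ha, map_zero])
  have hf : f (α:K) = algebraMap W L a := by
    rw [← hpg]; exact pb.lift_gen _ _
  let g : 𝓞 K →+* L := (f : K →+* L).comp (algebraMap (𝓞 K) K)
  have hg (x) : ∃ y, algebraMap W L y = g x := by
    rw [← IsIntegrallyClosed.isIntegral_iff (R := W)]
    have h1 : IsIntegral ℤ (g x) := (Algebra.IsIntegral.isIntegral (R := ℤ) x).map (g.toIntAlgHom)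
    exact h1.tower_top
  have inj : Function.Injective (algebraMap W L) := IsFractionRing.injective W L
  choose h hh using hg
  let H : 𝓞 K →+* W :=
    { toFun := h
      map_one' := inj (by rw [hh]; simp)
      map_zero' := inj (by rw [hh]; simp)
      map_mul' := fun x y => inj (by rw [map_mul, hh, hh, hh, map_mul])
      map_add' := fun x y => inj (by rw [map_add, hh, hh, hh, map_add]) }
  have Ha : H α = a := inj ((hh α).trans hf)
  have Hc : H γ = c := by
    have := congrArg H hγ
    simp only [map_mul, map_add, map_pow, map_one, map_ofNat, Ha] at this
    rw [← hc] at this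
    exact mul_left_cancel₀ two_ne_zero this
  exact ⟨φ.comp H, by simp [Ha], by simp [Hc]⟩

lemma charZeroW {W k : Type*} [CommRing W] [IsDomain W] [Field k] [CharP k 2] (φ : W →+* k)
   (h2 : (2:W) ≠ 0) : CharZero W := by
  obtain ⟨q, hq⟩ := CharP.exists W
  rcases CharP.char_is_prime_or_zero W q with h | rfl
  · exfalso
    have : (q:k) = 0 := by
      rw [← map_natCast φ, CharP.cast_eq_zero W q, map_zero]
    rw [CharP.cast_eq_zero_iff k 2] at this
    have e := (Nat.prime_dvd_prime_iff_eq Nat.prime_two h).mp this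
    subst e
    exact h2 (by exact_mod_cast CharP.cast_eq_zero W 2)
  · exact CharP.charP_to_charZero W

lemma existsHoms {K : Type*} [Field K] [NumberField K] (α γ : 𝓞 K) (hγ : 2 * γ = α^3+1)
    (m : ℕ) (hm : 1 ≤ m) (hm5 : m ≤ 5)
    (F : ℤ[X]) (hF : F = X ^ 6 + C 72 * X ^ m + C 35) (hFm : F.Monic)
    (hirr : Irreducible F)
    (hroot : Polynomial.aeval (α : K) F = 0)
    (hgen : Algebra.adjoin ℚ {(α : K)} = ⊤) :
    ∃ ω : AlgebraicClosure (ZMod 2), ω^2+ω+1 = 0 ∧ ∀ ζ, ζ^3 = 1 →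
      ∃ ψ : 𝓞 K →+* AlgebraicClosure (ZMod 2), ψ α = ζ ∧ ψ γ = 1 + ω := by
  let k := AlgebraicClosure (ZMod 2)
  let W := WittVector 2 k
  let φ : W →+* k := WittVector.constantCoeff
  have hH : HenselianRing W (RingHom.ker φ) := by
    have : RingHom.ker φ = Ideal.span {((2:ℕ):W)} := WittVector.ker_constantCoeff
    rw [this]; infer_instance
  have h2 : (2:W) ≠ 0 := by
    have := (WittVector.irreducible 2 (k := k)).ne_zero
    exact_mod_cast this
  have : CharZero W := charZeroW φ h2
  obtain ⟨ω, hω⟩ := IsAlgClosed.exists_root (X^2+X+1 : k[X]) (by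
    have : (X^2+X+1 : k[X]).degree = 2 := by compute_degree!
    rw [this]; decide)
  refine ⟨ω, by simpa using hω, fun ζ hζ => ?_⟩
  obtain ⟨a, c, h1, h2, h3, h4⟩ := rootW φ (WittVector.constantCoeff_surjective 2)
    (fun x hx => WittVector.isUnit_of_coeff_zero_ne_zero x hx) hH ω (by simpa using hω)
    (WittVector.teichmuller 2 ζ) (by rw [← map_pow, hζ, map_one]) m hm hm5
  obtain ⟨ψ, hψ, hψ'⟩ := homB (FractionRing W) φ α γ hγ F hFm hirr hroot hgen a c (by rw [hF]; simp only [map_add, map_mul, map_pow, aeval_X, aeval_C]; simpa using h1) h2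
  exact ⟨ψ, by rw [hψ, h3]; exact WittVector.teichmuller_coeff_zero 2 ζ, by rw [hψ', h4]⟩

lemma card_ge {S : Type*} [CommRing S] (P : Ideal S) [P.IsMaximal] (h2 : (2:S) ∈ P) (g d : S)
    (hg : g^2 - g + 9 + 18 * d = 0) (hne : Nat.card (S ⧸ P) ≠ 0) : 4 ≤ Nat.card (S ⧸ P) := by
  have : Finite (S ⧸ P) := Nat.finite_of_card_ne_zero hne
  letI : Field (S ⧸ P) := Ideal.Quotient.field P
  let q := Ideal.Quotient.mk P
  have two : (2 : S ⧸ P) = 0 := by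
    have := Ideal.Quotient.eq_zero_iff_mem.mpr h2
    rwa [map_ofNat] at this
  have hx : (q g)^2 + q g + 1 = 0 := by
    have : q (g^2 - g + 9 + 18 * d) = 0 := by rw [hg, map_zero]
    have e : (g^2 - g + 9 + 18 * d : S) = g^2 + g + 1 + 2 * (4 - g + 9 * d) := by ring
    rw [e, map_add, map_mul, map_ofNat] at this
    rw [two, zero_mul, add_zero] at this
    simpa using this
  generalize q g = x at hx
  have x0 : x ≠ 0 := by rintro rfl; simp at hx
  have x1 : x + 1 ≠ 0 := by
    intro h; apply one_ne_zero (α := S ⧸ P); linear_combination hx - x * h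
  have x2 : x ≠ 1 := by
    rintro rfl; apply x1; linear_combination two
  have inj : Function.Injective ![0, 1, x, x+1] := by
    clear two hx hg
    intro i j
    fin_cases i <;> fin_cases j <;> simp_all [eq_comm]
  have := Nat.card_le_card_of_injective _ inj
  simpa using this

lemma prod_dvd {S : Type*} [CommRing S] [IsDedekindDomain S] [Module.Free ℤ S] [Module.Finite ℤ S]
    (h6 : Module.finrank ℤ S = 6)
    (T : Finset (Ideal S)) (hT : ∀ P ∈ T, P.IsMaximal ∧ (2:S) ∈ P) :
    ∏ P ∈ T, Ideal.absNorm P ∣ 64 := by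
  have h : Ideal.absNorm (Ideal.span {(2:S)}) = 64 := by
    rw [Ideal.absNorm_span_singleton]
    have : (2:S) = algebraMap ℤ S 2 := by simp
    rw [this, Algebra.norm_algebraMap, h6]; rfl
  rw [← h, ← map_prod]
  apply _root_.map_dvd
  apply Finset.prod_dvd_of_coprime
  · intro P hP Q hQ hne
    exact Ideal.isCoprime_iff_sup_eq.mpr ((hT P hP).1.coprime_of_ne (hT Q hQ).1 hne)
  · intro P hP
    rw [Ideal.dvd_iff_le, Ideal.span_singleton_le_iff_mem]
    exact (hT P hP).2

/-- For `K` defined by a root of `x^6 + 72 x^m + 35`, there are exactly three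
distinct prime ideals of `ℤ_K` above `2`, each with residue degree `2`. -/
theorem three_primes_above_two
    {K : Type*} [Field K] [NumberField K] (α : 𝓞 K)
    (m : ℕ) (hm : 1 ≤ m) (hm5 : m ≤ 5)
    (F : ℤ[X]) (hF : F = X ^ 6 + C 72 * X ^ m + C 35)
    (hirr : Irreducible F)
    (hroot : Polynomial.aeval (α : K) F = 0)
    (hgen : Algebra.adjoin ℚ {(α : K)} = ⊤) :
    Nat.card {P : Ideal (𝓞 K) // P.IsMaximal ∧ (2 : 𝓞 K) ∈ P} = 3 ∧
      ∀ P : Ideal (𝓞 K), P.IsMaximal → (2 : 𝓞 K) ∈ P → Nat.card (𝓞 K ⧸ P) = 2 ^ 2 := by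
  have hdeg : (C 72 * X ^ m + C 35 : ℤ[X]).degree < (6:ℕ) := by
    interval_cases m <;> compute_degree!
  have hF' : F = X ^ 6 + (C 72 * X ^ m + C 35) := by rw [hF]; ring
  have hFm : F.Monic := by
    rw [hF']; exact monic_X_pow_add hdeg
  have hFd : F.natDegree = 6 := by
    rw [hF]; clear hdeg hF' hFm; interval_cases m <;> compute_degree!
  have hmin : minpoly ℚ (α : K) = F.map (algebraMap ℤ ℚ) := by
    symm
    apply minpoly.eq_of_irreducible_of_monic
    · exact (hFm.irreducible_iff_irreducible_map_fraction_map).mp hirr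
    · rwa [aeval_map_algebraMap]
    · exact hFm.map _
  have hint : IsIntegral ℚ (α:K) := Algebra.IsIntegral.isIntegral _
  have h6 : Module.finrank ℤ (𝓞 K) = 6 := by
    rw [NumberField.RingOfIntegers.rank, (PowerBasis.ofAdjoinEqTop hint hgen).finrank,
      PowerBasis.ofAdjoinEqTop_dim, hmin, hFm.natDegree_map, hFd]
  have hα : (α:K)^6 + 72 * (α:K)^m + 35 = 0 := by
    rw [hF] at hroot
    simp only [map_add, map_mul, map_pow, aeval_X, aeval_C] at hroot
    simpa using hroot
  obtain ⟨γ, hγ⟩ : ∃ γ : 𝓞 K, (γ:K) = ((α:K)^3+1)/2 := by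
    have : IsIntegral (𝓞 K) (((α:K)^3+1)/2) := by
      refine ⟨X^2 + (- X + C (9 + 18 * α^m)), monic_X_pow_add (by compute_degree!), ?_⟩
      simp only [eval₂_add, eval₂_neg, eval₂_pow, eval₂_X, eval₂_C]
      simp only [map_add, map_mul, map_pow, map_ofNat]
      linear_combination hα / 4
    obtain ⟨y, hy⟩ := IsIntegrallyClosed.isIntegral_iff.mp this
    exact ⟨y, hy⟩
  have hγ2 : 2 * γ = α^3+1 := by
    apply FaithfulSMul.algebraMap_injective (𝓞 K) K
    simp only [map_add, map_sub, map_mul, map_pow, map_ofNat, map_one, map_zero]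
    rw [show algebraMap (𝓞 K) K γ = _ from hγ]; ring
  have hγq : γ^2 - γ + 9 + 18 * α^m = 0 := by
    apply FaithfulSMul.algebraMap_injective (𝓞 K) K
    simp only [map_add, map_sub, map_mul, map_pow, map_ofNat, map_one, map_zero]
    rw [show algebraMap (𝓞 K) K γ = _ from hγ]; linear_combination hα / 4
  obtain ⟨ω, hω, hψ⟩ := existsHoms α γ hγ2 m hm hm5 F hF hFm hirr hroot hgen
  have two : (2 : AlgebraicClosure (ZMod 2)) = 0 := CharTwo.two_eq_zero
  have good (ψ : 𝓞 K →+* AlgebraicClosure (ZMod 2)) :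
      (RingHom.ker ψ).IsMaximal ∧ (2 : 𝓞 K) ∈ RingHom.ker ψ := by
    have h2 : (2 : 𝓞 K) ∈ RingHom.ker ψ := by
      rw [RingHom.mem_ker, map_ofNat, two]
    refine ⟨(RingHom.ker_isPrime ψ).isMaximal ?_, h2⟩
    intro h
    rw [h, Ideal.mem_bot] at h2
    exact two_ne_zero h2
  obtain ⟨ψ₁, a₁, c₁⟩ := hψ 1 (one_pow 3)
  obtain ⟨ψ₂, a₂, c₂⟩ := hψ ω (by linear_combination (ω-1)*hω)
  obtain ⟨ψ₃, a₃, c₃⟩ := hψ (ω+1) (by linear_combination (ω+2)*hω - two)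
  have hω0 : ω ≠ 0 := by rintro rfl; simp at hω
  have hω1 : ω - 1 ≠ 0 := by
    intro h
    apply one_ne_zero (α := AlgebraicClosure (ZMod 2))
    linear_combination hω - (ω + 2) * h - two
  have n12 : RingHom.ker ψ₁ ≠ RingHom.ker ψ₂ := by
    intro h
    have : α - 1 ∈ RingHom.ker ψ₁ := by simp [RingHom.mem_ker, a₁]
    rw [h, RingHom.mem_ker, map_sub, a₂, map_one] at this
    exact hω1 this
  have n13 : RingHom.ker ψ₁ ≠ RingHom.ker ψ₃ := by
    intro h
    have : α - 1 ∈ RingHom.ker ψ₁ := by simp [RingHom.mem_ker, a₁]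
    rw [h, RingHom.mem_ker, map_sub, a₃, map_one] at this
    exact hω0 (by linear_combination this)
  have n23 : RingHom.ker ψ₂ ≠ RingHom.ker ψ₃ := by
    intro h
    have : α - γ - 1 ∈ RingHom.ker ψ₂ := by
      rw [RingHom.mem_ker, map_sub, map_sub, a₂, c₂, map_one]
      linear_combination -two
    rw [h, RingHom.mem_ker, map_sub, map_sub, a₃, c₃, map_one] at this
    apply one_ne_zero (α := AlgebraicClosure (ZMod 2))
    linear_combination -this
  have hN (P : Ideal (𝓞 K)) : Ideal.absNorm P = Nat.card (𝓞 K ⧸ P) := rfl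
  have h4 (P : Ideal (𝓞 K)) (hP : P.IsMaximal ∧ (2 : 𝓞 K) ∈ P) : 4 ≤ Ideal.absNorm P := by
    have := hP.1
    rw [hN]
    apply card_ge P hP.2 γ (α^m) hγq
    intro h0
    have := prod_dvd h6 {P} (by simpa using hP)
    rw [Finset.prod_singleton, hN, h0] at this
    simp at this
  generalize hP1 : RingHom.ker ψ₁ = P₁ at *
  generalize hP2 : RingHom.ker ψ₂ = P₂ at *
  generalize hP3 : RingHom.ker ψ₃ = P₃ at *
  have g1 := hP1 ▸ good ψ₁
  have g2 := hP2 ▸ good ψ₂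
  have g3 := hP3 ▸ good ψ₃
  have k1 := h4 _ g1
  have k2 := h4 _ g2
  have k3 := h4 _ g3
  have all (P : Ideal (𝓞 K)) (hP : P.IsMaximal ∧ (2 : 𝓞 K) ∈ P) : P = P₁ ∨ P = P₂ ∨ P = P₃ := by
    by_contra! hne
    obtain ⟨e1, e2, e3⟩ := hne
    classical
    have := Nat.le_of_dvd (by norm_num) (prod_dvd h6 {P, P₁, P₂, P₃} (by
      intro Q hQ
      simp only [Finset.mem_insert, Finset.mem_singleton] at hQ
      rcases hQ with rfl | rfl | rfl | rfl <;> assumption))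
    rw [Finset.prod_insert (by simp [e1, e2, e3]), Finset.prod_insert (by simp [n12, n13]),
      Finset.prod_insert (by simp [n23]), Finset.prod_singleton] at this
    have := (Nat.mul_le_mul (h4 P hP) (Nat.mul_le_mul k1 (Nat.mul_le_mul k2 k3))).trans this
    norm_num at this
  have hprod : Ideal.absNorm P₁ * (Ideal.absNorm P₂ * Ideal.absNorm P₃) ≤ 64 := by
    classical
    have := Nat.le_of_dvd (by norm_num) (prod_dvd h6 {P₁, P₂, P₃} (by
      intro Q hQ
      simp only [Finset.mem_insert, Finset.mem_singleton] at hQ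
      rcases hQ with rfl | rfl | rfl <;> assumption))
    rwa [Finset.prod_insert (by simp [n12, n13]),
      Finset.prod_insert (by simp [n23]), Finset.prod_singleton] at this
  constructor
  · have hs : {P : Ideal (𝓞 K) | P.IsMaximal ∧ (2 : 𝓞 K) ∈ P} = {P₁, P₂, P₃} := by
      ext P
      simp only [Set.mem_setOf_eq, Set.mem_insert_iff, Set.mem_singleton_iff]
      refine ⟨all P, ?_⟩
      rintro (rfl | rfl | rfl) <;> assumption
    change Nat.card ({P : Ideal (𝓞 K) | P.IsMaximal ∧ (2 : 𝓞 K) ∈ P} : Set _) = 3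
    rw [hs, Nat.card_coe_set_eq]
    exact Set.ncard_eq_three.mpr ⟨_, _, _, n12, n13, n23, rfl⟩
  · intro P hP hP'
    rw [← hN]
    have key (a b c : ℕ) (ha : 4 ≤ a) (hb : 4 ≤ b) (hc : 4 ≤ c) (h : a * (b * c) ≤ 64) : a = 4 := by
      have h1 : 16 ≤ b * c := Nat.mul_le_mul hb hc
      nlinarith
    rcases all P ⟨hP, hP'⟩ with rfl | rfl | rfl
    · exact key _ _ _ k1 k2 k3 hprod
    · exact key _ _ _ k2 k1 k3 (by linarith [mul_left_comm (Ideal.absNorm P₁) (Ideal.absNorm P) (Ideal.absNorm P₃)])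
    · exact key _ _ _ k3 k1 k2 (by
        calc _ = Ideal.absNorm P₁ * (Ideal.absNorm P₂ * Ideal.absNorm P) := by ring
          _ ≤ 64 := hprod)
end

section
/- Let m be an integer with 1 ≤ m ≤ 5 such that F(x) = x^6 + 72 x^m + 71 is irreducible over ℚ, and let K = ℚ(α) for a root α of F. Then 6 divides the index i(K); in particular K is not monogenic. -/
open Polynomial NumberField

section aux
variable {K : Type*} [Field K] [NumberField K]

lemma aux_decomp (θ : 𝓞 K) (p : ℕ) (hp : p.Prime) (h : ¬ p ∣ subIndex θ) (x : 𝓞 K) :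
    ∃ (q : ℤ[X]) (z : 𝓞 K), x = aeval θ q + p * z := by
  have h1 : subIndex θ • x ∈ (Algebra.adjoin ℤ ({θ} : Set (𝓞 K))).toSubring.toAddSubgroup :=
    AddSubgroup.nsmul_index_mem _ x
  have h2 : subIndex θ • x ∈ Algebra.adjoin ℤ ({θ} : Set (𝓞 K)) := h1
  rw [Algebra.adjoin_singleton_eq_range_aeval] at h2
  obtain ⟨q, hq⟩ := h2
  have hc : IsCoprime (p : ℤ) (subIndex θ : ℤ) :=
    Nat.isCoprime_iff_coprime.2 ((Nat.Prime.coprime_iff_not_dvd hp).2 h)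
  obtain ⟨a, b, hab⟩ := hc
  refine ⟨C b * q, a * x, ?_⟩
  have hab' : (a : 𝓞 K) * p + b * (subIndex θ : 𝓞 K) = 1 := by exact_mod_cast congrArg (Int.cast : ℤ → 𝓞 K) hab
  have hq' : aeval θ q = (subIndex θ : 𝓞 K) * x := by
    rw [← nsmul_eq_mul]; exact hq
  rw [map_mul, hq', aeval_C]
  simp only [algebraMap_int_eq, eq_intCast]
  linear_combination (-x) * hab'

/-- If the pullbacks to `ℤ[X]` agree then so do the primes. -/
lemma aux_le (θ : 𝓞 K) (p : ℕ) (hp : p.Prime) (h : ¬ p ∣ subIndex θ) (P Q : Ideal (𝓞 K))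
    (hP : (p : 𝓞 K) ∈ P) (hQ : (p : 𝓞 K) ∈ Q)
    (H : ∀ q : ℤ[X], aeval θ q ∈ P → aeval θ q ∈ Q) : P ≤ Q := by
  intro x hx
  obtain ⟨q, z, rfl⟩ := aux_decomp θ p hp h x
  exact Q.add_mem (H q ((P.add_mem_iff_left (P.mul_mem_right z hP)).1 hx)) (Q.mul_mem_right z hQ)

lemma aux_exists (x : 𝓞 K) (G : ℤ[X]) (hG : Irreducible G) (hGx : aeval x G = 0)
    {k : Type*} [Field k] (φ : ℤ[X] →+* k) (hφ : φ G = 0) :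
    ∃ Q : Ideal (𝓞 K), Q.IsPrime ∧ ∀ q : ℤ[X], φ q = 0 → aeval x q ∈ Q := by
  have hx : IsIntegral ℤ x := Algebra.IsIntegral.isIntegral x
  let : Algebra ℤ[X] (𝓞 K) := (aeval x : ℤ[X] →ₐ[ℤ] 𝓞 K).toRingHom.toAlgebra
  have halg : ∀ q : ℤ[X], algebraMap ℤ[X] (𝓞 K) q = aeval x q := fun q => rfl
  have : IsScalarTower ℤ ℤ[X] (𝓞 K) := IsScalarTower.of_algebraMap_eq (fun r => by
    rw [halg]; simp)
  have : Algebra.IsIntegral ℤ[X] (𝓞 K) := Algebra.IsIntegral.tower_top ℤ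
  have : (RingHom.ker φ).IsPrime := RingHom.ker_isPrime φ
  have hle : Ideal.comap (algebraMap ℤ[X] (𝓞 K)) ⊥ ≤ RingHom.ker φ := by
    intro q hq
    have hq0 : aeval x q = 0 := by simpa [Ideal.mem_comap, halg] using hq
    have h1 := minpoly.isIntegrallyClosed_dvd hx hq0
    obtain ⟨c, hc⟩ := minpoly.isIntegrallyClosed_dvd hx hGx
    have hu : IsUnit c := by
      rcases hG.isUnit_or_isUnit hc with h | h
      · exact absurd h (minpoly.not_isUnit ℤ x)
      · exact h
    have h2 : G ∣ q := by
      rw [hc]; exact (hu.mul_right_dvd).2 h1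
    obtain ⟨d, rfl⟩ := h2
    simp [RingHom.mem_ker, hφ]
  obtain ⟨Q, -, hQ, hQc⟩ := Ideal.exists_ideal_over_prime_of_isIntegral (RingHom.ker φ) (⊥ : Ideal (𝓞 K)) hle
  refine ⟨Q, hQ, fun q hq => ?_⟩
  have : q ∈ Ideal.comap (algebraMap ℤ[X] (𝓞 K)) Q := by rw [hQc]; exact hq
  exact this

lemma aux_pow (Q : Ideal (𝓞 K)) [hQ : Q.IsPrime] (h0 : Q ≠ ⊥) (n : ℕ) (hn : Ideal.absNorm Q = n) (x : 𝓞 K) :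
    x ^ n - x ∈ Q := by
  have : Q.IsMaximal := hQ.isMaximal h0
  let : Field (𝓞 K ⧸ Q) := Ideal.Quotient.field Q
  have : Finite (𝓞 K ⧸ Q) := Ideal.finiteQuotientOfFreeOfNeBot Q h0
  let : Fintype (𝓞 K ⧸ Q) := Fintype.ofFinite _
  have hc : Fintype.card (𝓞 K ⧸ Q) = n := by
    rw [← hn, Ideal.absNorm_apply, Submodule.cardQuot_apply, Nat.card_eq_fintype_card]
  rw [← Ideal.Quotient.eq, map_pow, ← hc]
  exact FiniteField.pow_card _

lemma aux_norm (hr : Module.finrank ℚ K = 6) (p : ℕ) : Ideal.absNorm (Ideal.span {(p : 𝓞 K)}) = p ^ 6 := by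
  rw [Ideal.absNorm_span_natCast, RingOfIntegers.rank, hr]

lemma aux_ne_bot (p : ℕ) (hp : p ≠ 0) (Q : Ideal (𝓞 K)) (h : (p : 𝓞 K) ∈ Q) : Q ≠ ⊥ := by
  rintro rfl
  exact hp (by exact_mod_cast (Ideal.mem_bot.1 h))

lemma aux_prime_norm (hr : Module.finrank ℚ K = 6) (p : ℕ) (hp : p.Prime) (Q : Ideal (𝓞 K))
    (hQ : Q.IsPrime) (h : (p : 𝓞 K) ∈ Q) : ∃ k, 1 ≤ k ∧ Ideal.absNorm Q = p ^ k := by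
  have h1 : Ideal.absNorm Q ∣ p ^ 6 := by
    rw [← aux_norm hr p]
    exact Ideal.absNorm_dvd_absNorm_of_le ((Ideal.span_singleton_le_iff_mem _).2 h)
  obtain ⟨k, -, hk⟩ := (Nat.dvd_prime_pow hp).1 h1
  refine ⟨k, ?_, hk⟩
  rcases Nat.eq_zero_or_pos k with rfl | hk0
  · exact absurd (Ideal.absNorm_eq_one_iff.1 (by simpa using hk)) hQ.ne_top
  · exact hk0

lemma aux_cop {R : Type*} [CommRing R] {P Q : Ideal R} {a b : R} (ha : a ∈ P) (hb : b ∈ Q) (h : a + b = 1) :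
    IsCoprime P Q := Ideal.isCoprime_iff_exists.2 ⟨a, ha, b, hb, h⟩

lemma aux_eval {R : Type*} [CommRing R] (A : Ideal R) (θ : R) (n : ℤ) (h : θ - n ∈ A) (q : ℤ[X]) :
    aeval θ q - ((q.eval n : ℤ) : R) ∈ A := by
  have := map_dvd (aeval θ) (X_sub_C_dvd_sub_C_eval (a := n) (p := q))
  rw [map_sub, map_sub, aeval_X, aeval_C, aeval_C] at this
  simp only [algebraMap_int_eq, eq_intCast] at this
  exact A.mem_of_dvd this h

lemma aux_div2 (hr : Module.finrank ℚ K = 6) (α δ : 𝓞 K) (P Q R S : Ideal (𝓞 K))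
    (hP : P.IsPrime) (hQ : Q.IsPrime) (hR : R.IsPrime) (hS : S.IsPrime)
    (h2P : 2 ∈ P) (h2Q : 2 ∈ Q) (h2R : 2 ∈ R) (h2S : 2 ∈ S)
    (haP : α - 1 ∈ P) (haQ : α - 1 ∈ Q) (haR : α ^ 2 + α + 1 ∈ R) (haS : α ^ 2 + α + 1 ∈ S)
    (hdP : δ ∈ P) (hdQ : δ + 1 ∈ Q) (hdR : δ ∈ R) (hdS : δ + 1 ∈ S) (θ : 𝓞 K) :
    2 ∣ subIndex θ := by
  have two : ((2 : ℕ) : 𝓞 K) = 2 := by norm_num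
  have c1 : ∀ {A B : Ideal (𝓞 K)}, δ ∈ A → δ + 1 ∈ B → IsCoprime A B := fun ha hb =>
    aux_cop (neg_mem ha) hb (by ring)
  have c2 : ∀ {A B : Ideal (𝓞 K)}, α - 1 ∈ A → α ^ 2 + α + 1 ∈ B → 2 ∈ B → IsCoprime A B :=
    fun {A B} ha hb h2 =>
    aux_cop (A.mul_mem_left (-(α + 2)) ha) (B.sub_mem hb h2) (by ring)
  have hdvd : P * (Q * (R * S)) ∣ Ideal.span {((2 : ℕ) : 𝓞 K)} := by
    have d : ∀ {A : Ideal (𝓞 K)}, 2 ∈ A → A ∣ Ideal.span {((2 : ℕ) : 𝓞 K)} := fun h => by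
      rw [two]; exact Ideal.dvd_iff_le.2 ((Ideal.span_singleton_le_iff_mem _).2 h)
    refine IsCoprime.mul_dvd ?_ (d h2P) (IsCoprime.mul_dvd ?_ (d h2Q) (IsCoprime.mul_dvd (c1 hdR hdS) (d h2R) (d h2S)))
    · exact (c1 hdP hdQ).mul_right ((c2 haP haR h2R).mul_right (c2 haP haS h2S))
    · exact (c2 haQ haR h2R).mul_right (c2 haQ haS h2S)
  have hn := map_dvd (Ideal.absNorm (S := 𝓞 K)) hdvd
  rw [aux_norm hr, map_mul, map_mul, map_mul] at hn
  have key : ∀ {A : Ideal (𝓞 K)}, A.IsPrime → 2 ∈ A → α ^ 2 + α + 1 ∈ A → Ideal.absNorm A ≠ 2 := by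
    intro A hA h2 ha h
    have h3 := aux_pow A (aux_ne_bot 2 (by norm_num) A (by rwa [two])) 2 h α
    apply hA.ne_top
    rw [Ideal.eq_top_iff_one]
    have := A.sub_mem (A.sub_mem ha h3) (A.mul_mem_left α h2)
    convert this using 1; ring
  obtain ⟨p, hp, eP⟩ := aux_prime_norm hr 2 Nat.prime_two P hP (by rwa [two])
  obtain ⟨q, hq, eQ⟩ := aux_prime_norm hr 2 Nat.prime_two Q hQ (by rwa [two])
  obtain ⟨r, hr', eR⟩ := aux_prime_norm hr 2 Nat.prime_two R hR (by rwa [two])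
  obtain ⟨s, hs, eS⟩ := aux_prime_norm hr 2 Nat.prime_two S hS (by rwa [two])
  have kR := key hR h2R haR
  have kS := key hS h2S haS
  rw [eP, eQ, eR, eS, ← pow_add, ← pow_add, ← pow_add] at hn
  have hle := (Nat.pow_dvd_pow_iff_le_right (by norm_num)).1 hn
  have r1 : r ≠ 1 := by rintro rfl; exact kR (by simpa using eR)
  have s1 : s ≠ 1 := by rintro rfl; exact kS (by simpa using eS)
  obtain rfl : r = 2 := by omega
  obtain rfl : s = 2 := by omega
  by_contra hndvd
  -- image of θ is a primitive cube root of unity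
  have key2 : ∀ {A : Ideal (𝓞 K)}, A.IsPrime → 2 ∈ A → α ^ 2 + α + 1 ∈ A → Ideal.absNorm A = 2 ^ 2 →
      θ ^ 2 + θ + 1 ∈ A := by
    intro A hA h2 ha hN
    have hbot := aux_ne_bot 2 (by norm_num) A (by rwa [two])
    have h4 := aux_pow A hbot 4 (by rw [hN]; norm_num) θ
    have e : θ ^ 4 - θ = (θ * (θ - 1)) * (θ ^ 2 + θ + 1) := by ring
    rw [e] at h4
    refine (hA.mem_or_mem h4).resolve_left fun h01 => ?_
    -- then everything satisfies x ^ 2 = x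
    have hall : ∀ q : ℤ[X], ∃ n : ℤ, aeval θ q - (n : 𝓞 K) ∈ A := by
      intro q
      rcases hA.mem_or_mem h01 with h | h
      · exact ⟨q.eval 0, aux_eval A θ 0 (by simpa using h) q⟩
      · exact ⟨q.eval 1, aux_eval A θ 1 (by simpa using h) q⟩
    obtain ⟨q, z, hqz⟩ := aux_decomp θ 2 Nat.prime_two hndvd α
    obtain ⟨n, hn'⟩ := hall q
    have hαn : α - n ∈ A := by
      have := A.add_mem hn' (A.mul_mem_right z h2)
      rw [hqz]; convert this using 1; push_cast; ring
    have : ((n ^ 2 + n + 1 : ℤ) : 𝓞 K) ∈ A := by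
      have := A.sub_mem ha (A.mul_mem_left (α + n + 1) hαn)
      convert this using 1; push_cast; ring
    obtain ⟨k, hk⟩ := Int.even_mul_succ_self n
    apply hA.ne_top
    rw [Ideal.eq_top_iff_one]
    have e2 : (n ^ 2 + n + 1 : ℤ) = 2 * k + 1 := by linear_combination hk
    rw [e2] at this
    have := A.sub_mem this (A.mul_mem_right (k : 𝓞 K) h2)
    convert this using 1; push_cast; ring
  have tR := key2 hR h2R haR eR
  have tS := key2 hS h2S haS eS
  have hle2 : R ≤ S := by
    refine aux_le θ 2 Nat.prime_two hndvd R S (by rwa [two]) (by rwa [two]) fun f hf => ?_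
    set g : ℤ[X] := X ^ 2 + X + 1 with hg
    have hgm : g.Monic := by rw [hg]; monicity!
    have hgd : g.natDegree = 2 := by rw [hg]; compute_degree!
    have hdiv := modByMonic_add_div f g
    have hlt : (f %ₘ g).degree < 2 := by
      have := degree_modByMonic_lt f hgm
      rwa [degree_eq_natDegree hgm.ne_zero, hgd] at this
    have hform := eq_X_add_C_of_degree_le_one (p := f %ₘ g) (Order.le_of_lt_succ (by exact hlt))
    set a := (f %ₘ g).coeff 1
    set b := (f %ₘ g).coeff 0
    rw [hform] at hdiv
    have hev := congrArg (aeval θ) hdiv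
    rw [map_add, map_add, map_mul, map_mul, aeval_C, aeval_C, aeval_X] at hev
    simp only [algebraMap_int_eq, eq_intCast] at hev
    have hgθ : aeval θ g = θ ^ 2 + θ + 1 := by simp [hg]
    rw [hgθ] at hev
    have hlin : (a : 𝓞 K) * θ + b ∈ R := by
      have := R.sub_mem hf (R.mul_mem_right (aeval θ (f /ₘ g)) tR)
      rw [← hev] at this
      convert this using 1; ring
    have hn1 : (1 : 𝓞 K) ∉ R := fun h => hR.ne_top ((Ideal.eq_top_iff_one _).2 h)
    obtain ⟨a', ha' | ha'⟩ := Int.even_or_odd' a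
    · obtain ⟨b', hb' | hb'⟩ := Int.even_or_odd' b
      · rw [← hev, ha', hb']
        have := S.add_mem (S.mul_mem_right (a' * θ + b' : 𝓞 K) h2S) (S.mul_mem_right (aeval θ (f /ₘ g)) tS)
        convert this using 1; push_cast; ring
      · exfalso; apply hn1
        rw [ha', hb'] at hlin
        have := R.sub_mem hlin (R.mul_mem_right (a' * θ + b' : 𝓞 K) h2R)
        convert this using 1; push_cast; ring
    · exfalso; apply hn1
      have h3 : θ + b ∈ R := by
        rw [ha'] at hlin
        have := R.sub_mem hlin (R.mul_mem_right (a' * θ : 𝓞 K) h2R)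
        convert this using 1; push_cast; ring
      have h4 : ((b ^ 2 - b + 1 : ℤ) : 𝓞 K) ∈ R := by
        have := R.sub_mem tR (R.mul_mem_left (θ - b + 1) h3)
        convert this using 1; push_cast; ring
      obtain ⟨k, hk⟩ := Int.even_mul_pred_self b
      have e2 : (b ^ 2 - b + 1 : ℤ) = 2 * k + 1 := by linear_combination hk
      rw [e2] at h4
      have := R.sub_mem h4 (R.mul_mem_right (k : 𝓞 K) h2R)
      convert this using 1; push_cast; ring
  apply hS.ne_top
  rw [Ideal.eq_top_iff_one]
  have := S.sub_mem hdS (hle2 hdR)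
  convert this using 1; ring

lemma aux_same (A B : Ideal (𝓞 K)) (hA : A.IsPrime) (hB : B.IsPrime) (h3A : 3 ∈ A) (h3B : 3 ∈ B)
    (hAB : IsCoprime A B) (θ : 𝓞 K) (hnd : ¬ 3 ∣ subIndex θ) (n : ℤ) (hnA : θ - n ∈ A) (hnB : θ - n ∈ B) :
    False := by
  have three : ((3 : ℕ) : 𝓞 K) = 3 := by norm_num
  have hle : A ≤ B := by
    refine aux_le θ 3 Nat.prime_three hnd A B (by rwa [three]) (by rwa [three]) fun q hq => ?_
    have h1 := aux_eval A θ n hnA q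
    have h2 : ((q.eval n : ℤ) : 𝓞 K) ∈ A := by
      have := A.sub_mem hq h1
      convert this using 1; ring
    have h3 : (3 : ℤ) ∣ q.eval n := by
      by_contra h
      obtain ⟨a, b, hab⟩ := (Int.prime_three.coprime_iff_not_dvd).2 h
      apply hA.ne_top
      rw [Ideal.eq_top_iff_one]
      have := A.add_mem (A.mul_mem_left (a : 𝓞 K) h3A) (A.mul_mem_left (b : 𝓞 K) h2)
      convert this using 1
      exact_mod_cast congrArg (Int.cast : ℤ → 𝓞 K) hab.symm
    obtain ⟨c, hc⟩ := h3
    have h4 := aux_eval B θ n hnB q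
    rw [hc] at h4
    have := B.add_mem h4 (B.mul_mem_right (c : 𝓞 K) h3B)
    convert this using 1; push_cast; ring
  obtain ⟨a, ha, b, hb, hab⟩ := Ideal.isCoprime_iff_exists.1 hAB
  apply hB.ne_top
  rw [Ideal.eq_top_iff_one, ← hab]
  exact B.add_mem (hle ha) hb

lemma aux_div3 (hr : Module.finrank ℚ K = 6) (α β : 𝓞 K) (hβ : 3 * β = (α ^ 2 - 1) ^ 2)
    (P Q R S : Ideal (𝓞 K))
    (hP : P.IsPrime) (hQ : Q.IsPrime) (hR : R.IsPrime) (hS : S.IsPrime)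
    (h3P : 3 ∈ P) (h3Q : 3 ∈ Q) (h3R : 3 ∈ R) (h3S : 3 ∈ S)
    (haP : α - 1 ∈ P) (haQ : α + 1 ∈ Q) (haR : α - 1 ∈ R) (haS : α + 1 ∈ S)
    (hdP : β ∈ P) (hdQ : β ∈ Q) (hdR : β + 1 ∈ R) (hdS : β + 1 ∈ S) (θ : 𝓞 K) :
    3 ∣ subIndex θ := by
  have three : ((3 : ℕ) : 𝓞 K) = 3 := by norm_num
  have c1 : ∀ {A B : Ideal (𝓞 K)}, β ∈ A → β + 1 ∈ B → IsCoprime A B := fun ha hb =>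
    aux_cop (neg_mem ha) hb (by ring)
  have c2 : ∀ {A B : Ideal (𝓞 K)}, α - 1 ∈ A → α + 1 ∈ B → 3 ∈ B → IsCoprime A B :=
    fun {A B} ha hb h3 =>
    aux_cop ha (B.sub_mem h3 hb) (by ring)
  have sq : ∀ {A : Ideal (𝓞 K)}, A.IsPrime → α ^ 2 - 1 ∈ A → β + 1 ∈ A → 3 ∈ A ^ 2 := by
    intro A hA h1 h2
    have h3 : β * 3 ∈ A ^ 2 := by
      rw [mul_comm, hβ]; exact Ideal.pow_mem_pow h1 2
    refine (Ideal.IsPrime.mul_mem_pow A h3).resolve_left fun h => hA.ne_top ?_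
    rw [Ideal.eq_top_iff_one]
    have := A.sub_mem h2 h
    convert this using 1; ring
  have sR : 3 ∈ R ^ 2 := sq hR (by
    have := R.mul_mem_left (α + 1) haR
    convert this using 1; ring) hdR
  have sS : 3 ∈ S ^ 2 := sq hS (by
    have := S.mul_mem_left (α - 1) haS
    convert this using 1; ring) hdS
  have hdvd : P * (Q * (R ^ 2 * S ^ 2)) ∣ Ideal.span {((3 : ℕ) : 𝓞 K)} := by
    have d : ∀ {A : Ideal (𝓞 K)}, 3 ∈ A → A ∣ Ideal.span {((3 : ℕ) : 𝓞 K)} := fun h => by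
      rw [three]; exact Ideal.dvd_iff_le.2 ((Ideal.span_singleton_le_iff_mem _).2 h)
    refine IsCoprime.mul_dvd ?_ (d h3P) (IsCoprime.mul_dvd ?_ (d h3Q)
      (IsCoprime.mul_dvd (c2 haR haS h3S).pow (d sR) (d sS)))
    · exact (c2 haP haQ h3Q).mul_right ((c1 hdP hdR).pow_right.mul_right (c1 hdP hdS).pow_right)
    · exact (c1 hdQ hdR).pow_right.mul_right (c1 hdQ hdS).pow_right
  have hn := map_dvd (Ideal.absNorm (S := 𝓞 K)) hdvd
  rw [aux_norm hr, map_mul, map_mul, map_mul, map_pow, map_pow] at hn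
  obtain ⟨p, hp, eP⟩ := aux_prime_norm hr 3 Nat.prime_three P hP (by rwa [three])
  obtain ⟨q, hq, eQ⟩ := aux_prime_norm hr 3 Nat.prime_three Q hQ (by rwa [three])
  obtain ⟨r, hr', eR⟩ := aux_prime_norm hr 3 Nat.prime_three R hR (by rwa [three])
  obtain ⟨s, hs, eS⟩ := aux_prime_norm hr 3 Nat.prime_three S hS (by rwa [three])
  rw [eP, eQ, eR, eS, ← pow_mul, ← pow_mul, ← pow_add, ← pow_add, ← pow_add] at hn
  have hle := (Nat.pow_dvd_pow_iff_le_right (by norm_num)).1 hn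
  obtain rfl : p = 1 := by omega
  obtain rfl : q = 1 := by omega
  obtain rfl : r = 1 := by omega
  obtain rfl : s = 1 := by omega
  have key : ∀ {A : Ideal (𝓞 K)}, A.IsPrime → 3 ∈ A → Ideal.absNorm A = 3 ^ 1 →
      ∃ n : Fin 3, θ - ((n.val : ℤ) : 𝓞 K) ∈ A := by
    intro A hA h3 hN
    have h := aux_pow A (aux_ne_bot 3 (by norm_num) A (by rwa [three])) 3 (by simpa using hN) θ
    have e : θ ^ 3 - θ = θ * ((θ - 1) * (θ + 1)) := by ring
    rw [e] at h
    rcases hA.mem_or_mem h with h | h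
    · exact ⟨0, by simpa using h⟩
    rcases hA.mem_or_mem h with h | h
    · exact ⟨1, by simpa using h⟩
    · refine ⟨2, ?_⟩
      have := A.sub_mem h h3
      convert this using 1
      have : (((2 : Fin 3).val : ℤ) : 𝓞 K) = 2 := by norm_num
      rw [this]; ring
  by_contra hnd
  obtain ⟨p, hp⟩ := key hP h3P eP
  obtain ⟨q, hq⟩ := key hQ h3Q eQ
  obtain ⟨r, hr⟩ := key hR h3R eR
  obtain ⟨s, hs⟩ := key hS h3S eS
  have pig : ∀ a b c d : Fin 3, a = b ∨ a = c ∨ a = d ∨ b = c ∨ b = d ∨ c = d := by decide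
  rcases pig p q r s with h | h | h | h | h | h <;> subst h
  · exact aux_same P Q hP hQ h3P h3Q (c2 haP haQ h3Q) θ hnd _ hp hq
  · exact aux_same P R hP hR h3P h3R (c1 hdP hdR) θ hnd _ hp hr
  · exact aux_same P S hP hS h3P h3S (c1 hdP hdS) θ hnd _ hp hs
  · exact aux_same Q R hQ hR h3Q h3R (c1 hdQ hdR) θ hnd _ hq hr
  · exact aux_same Q S hQ hS h3Q h3S (c1 hdQ hdS) θ hnd _ hq hs
  · exact aux_same R S hR hS h3R h3S (c2 haR haS h3S) θ hnd _ hr hs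

lemma aux_core (α : 𝓞 K) (F : ℤ[X]) (hirr : Irreducible F) (hmon : F.Monic) (hdeg : F.natDegree = 6)
    (hroot : aeval (α : K) F = 0) (hroot' : aeval (-(α : K)) F = 0)
    (hgen : Algebra.adjoin ℚ {(α : K)} = ⊤)
    (δ c : 𝓞 K) (hδ : 2 * δ = α ^ 3 - 1) (hδ2 : δ * (δ + 1) = 2 * c)
    (β d : 𝓞 K) (hβ : 3 * β = (α ^ 2 - 1) ^ 2) (hβ2 : β * (β + 1) = 3 * d)
    (g : ℤ[X]) (hg : Irreducible g) (hgβ : aeval β g = 0)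
    (hg0 : (3 : ℤ) ∣ g.eval 0) (hg1 : (3 : ℤ) ∣ g.eval (-1))
    (hF1 : (2 : ℤ) ∣ F.eval 1)
    (hF2 : (X ^ 2 + X + 1 : (ZMod 2)[X]) ∣ F.map (Int.castRingHom (ZMod 2))) (θ : 𝓞 K) :
    6 ∣ subIndex θ := by
  have hαint : IsIntegral ℚ (α : K) := Algebra.IsIntegral.isIntegral _
  have hmin : F.map (algebraMap ℤ ℚ) = minpoly ℚ (α : K) := by
    refine minpoly.eq_of_irreducible_of_monic
      ((hmon.irreducible_iff_irreducible_map_fraction_map (K := ℚ)).1 hirr) ?_ (hmon.map _)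
    rw [aeval_map_algebraMap]; exact hroot
  let pb := PowerBasis.ofAdjoinEqTop hαint hgen
  have hpbg : pb.gen = (α : K) := PowerBasis.ofAdjoinEqTop_gen hαint hgen
  have hr : Module.finrank ℚ K = 6 := by
    rw [pb.finrank, ← pb.natDegree_minpoly, hpbg, ← hmin, hmon.natDegree_map, hdeg]
  have hex : ∃ σ : 𝓞 K →+* 𝓞 K, σ α = -α := by
    have h0 : aeval (-(α : K)) (minpoly ℚ pb.gen) = 0 := by
      rw [hpbg, ← hmin, aeval_map_algebraMap]; exact hroot'
    refine ⟨RingOfIntegers.mapRingHom (pb.lift (-(α : K)) h0).toRingHom, ?_⟩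
    apply RingOfIntegers.ext
    have := pb.lift_gen (-(α : K)) h0
    rw [hpbg] at this
    simpa using this
  obtain ⟨σ, hσ⟩ := hex
  have hσδ : σ δ = -δ - 1 := by
    have h := congrArg σ hδ
    simp only [map_mul, map_sub, map_pow, hσ, map_one, map_ofNat] at h
    have h2 : (2 : 𝓞 K) ≠ 0 := by norm_num
    apply mul_left_cancel₀ h2
    linear_combination h + hδ
  have hσβ : σ β = β := by
    have h := congrArg σ hβ
    simp only [map_mul, map_sub, map_pow, hσ, map_one, map_ofNat] at h
    have h2 : (3 : 𝓞 K) ≠ 0 := by norm_num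
    apply mul_left_cancel₀ h2
    linear_combination h - hβ
  have hroot0 : aeval α F = 0 := by
    apply RingOfIntegers.ext
    have : ((aeval α F : 𝓞 K) : K) = aeval (α : K) F := by
      exact (aeval_algebraMap_apply K α F).symm
    rw [this, hroot]; simp
  have hall : ∀ (x : 𝓞 K) (G : ℤ[X]), Irreducible G → aeval x G = 0 → ∀ (p : ℕ) [Fact p.Prime] (n : ℤ),
      (p : ℤ) ∣ G.eval n → ∃ Q : Ideal (𝓞 K), Q.IsPrime ∧ (p : 𝓞 K) ∈ Q ∧ x - n ∈ Q := by
    intro x G hG hGx p _ n hdv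
    let φ : ℤ[X] →+* ZMod p := (Int.castRingHom (ZMod p)).comp (evalRingHom n)
    obtain ⟨Q, hQ, h⟩ := aux_exists x G hG hGx φ (by
      simpa [φ] using (ZMod.intCast_zmod_eq_zero_iff_dvd _ p).2 hdv)
    refine ⟨Q, hQ, ?_, ?_⟩
    · simpa using h (C (p : ℤ)) (by simp [φ])
    · have := h (X - C n) (by simp [φ])
      rw [map_sub, aeval_X, aeval_C] at this
      simpa using this
  have d2 : 2 ∣ subIndex θ := by
    have pair : ∀ A : Ideal (𝓞 K), A.IsPrime → 2 ∈ A → ∃ P Q : Ideal (𝓞 K), P.IsPrime ∧ Q.IsPrime ∧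
        2 ∈ P ∧ 2 ∈ Q ∧ δ ∈ P ∧ δ + 1 ∈ Q ∧ (α - 1 ∈ A → α - 1 ∈ P ∧ α - 1 ∈ Q) ∧
        (α ^ 2 + α + 1 ∈ A → α ^ 2 + α + 1 ∈ P ∧ α ^ 2 + α + 1 ∈ Q) := by
      intro A hA h2
      have h2' : 2 ∈ A.comap σ := by rw [Ideal.mem_comap, map_ofNat]; exact h2
      have h1 : α - 1 ∈ A → α - 1 ∈ A.comap σ := fun h => by
        rw [Ideal.mem_comap, map_sub, hσ, map_one]
        have := A.sub_mem (A.neg_mem h) h2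
        convert this using 1; ring
      have h3 : α ^ 2 + α + 1 ∈ A → α ^ 2 + α + 1 ∈ A.comap σ := fun h => by
        rw [Ideal.mem_comap, map_add, map_add, map_pow, hσ, map_one]
        have := A.sub_mem h (A.mul_mem_left α h2)
        convert this using 1; ring
      have hd : δ * (δ + 1) ∈ A := by rw [hδ2]; exact A.mul_mem_right c h2
      rcases hA.mem_or_mem hd with h | h
      · refine ⟨A, A.comap σ, hA, hA.comap σ, h2, h2', h, ?_, fun h => ⟨h, h1 h⟩, fun h => ⟨h, h3 h⟩⟩
        rw [Ideal.mem_comap, map_add, hσδ, map_one]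
        have := A.neg_mem h
        convert this using 1; ring
      · refine ⟨A.comap σ, A, hA.comap σ, hA, h2', h2, ?_, h, fun h => ⟨h1 h, h⟩, fun h => ⟨h3 h, h⟩⟩
        rw [Ideal.mem_comap, hσδ]
        have := A.neg_mem h
        convert this using 1; ring
    obtain ⟨A, hA, hA2, hA1⟩ := hall α F hirr hroot0 2 1 hF1
    have hirr2 : Irreducible (X ^ 2 + X + 1 : (ZMod 2)[X]) := by
      have hd : (X ^ 2 + X + 1 : (ZMod 2)[X]).natDegree = 2 := by compute_degree!
      refine irreducible_of_degree_le_three_of_not_isRoot (by rw [hd]; decide) fun x => ?_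
      simp only [IsRoot.def, eval_add, eval_pow, eval_X, eval_one]
      revert x; decide
    have : Fact (Irreducible (X ^ 2 + X + 1 : (ZMod 2)[X])) := ⟨hirr2⟩
    let φ : ℤ[X] →+* AdjoinRoot (X ^ 2 + X + 1 : (ZMod 2)[X]) :=
      (AdjoinRoot.mk _).comp (mapRingHom (Int.castRingHom (ZMod 2)))
    obtain ⟨B, hB, hBφ⟩ := aux_exists α F hirr hroot0 φ (by
      simpa [φ] using AdjoinRoot.mk_eq_zero.2 hF2)
    have hB2 : 2 ∈ B := by
      have h22 : φ (C 2) = 0 := by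
        have : Int.castRingHom (ZMod 2) 2 = 0 := by decide
        rw [RingHom.comp_apply, coe_mapRingHom, map_C, this, C_0, map_zero]
      have := hBφ (C 2) h22
      rw [aeval_C] at this
      simpa using this
    have hB1 : α ^ 2 + α + 1 ∈ B := by
      have := hBφ (X ^ 2 + X + 1) (by
        have : φ (X ^ 2 + X + 1) = AdjoinRoot.mk _ (X ^ 2 + X + 1 : (ZMod 2)[X]) := by simp [φ]
        rw [this]; exact AdjoinRoot.mk_self)
      simpa using this
    obtain ⟨P, Q, hP, hQ, a1, a2, a3, a4, a5, -⟩ := pair A hA (by simpa using hA2)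
    obtain ⟨R, S, hR, hS, b1, b2, b3, b4, -, b5⟩ := pair B hB hB2
    have a6 := a5 (by simpa using hA1)
    have b6 := b5 hB1
    exact aux_div2 hr α δ P Q R S hP hQ hR hS a1 a2 b1 b2 a6.1 a6.2 b6.1 b6.2 a3 a4 b3 b4 θ
  have d3 : 3 ∣ subIndex θ := by
    have pair : ∀ A : Ideal (𝓞 K), A.IsPrime → 3 ∈ A → ∃ P Q : Ideal (𝓞 K), P.IsPrime ∧ Q.IsPrime ∧
        3 ∈ P ∧ 3 ∈ Q ∧ α - 1 ∈ P ∧ α + 1 ∈ Q ∧ (β ∈ A → β ∈ P ∧ β ∈ Q) ∧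
        (β + 1 ∈ A → β + 1 ∈ P ∧ β + 1 ∈ Q) := by
      intro A hA h2
      have h2' : 3 ∈ A.comap σ := by rw [Ideal.mem_comap, map_ofNat]; exact h2
      have h1 : β ∈ A → β ∈ A.comap σ := fun h => by
        rw [Ideal.mem_comap, hσβ]; exact h
      have h3 : β + 1 ∈ A → β + 1 ∈ A.comap σ := fun h => by
        rw [Ideal.mem_comap, map_add, hσβ, map_one]; exact h
      have hd : (α - 1) * (α + 1) ∈ A := by
        refine hA.mem_of_pow_mem 2 ?_
        have := A.mul_mem_right β h2
        rw [hβ] at this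
        convert this using 1; ring
      rcases hA.mem_or_mem hd with h | h
      · refine ⟨A, A.comap σ, hA, hA.comap σ, h2, h2', h, ?_, fun h => ⟨h, h1 h⟩, fun h => ⟨h, h3 h⟩⟩
        rw [Ideal.mem_comap, map_add, hσ, map_one]
        have := A.neg_mem h
        convert this using 1; ring
      · refine ⟨A.comap σ, A, hA.comap σ, hA, h2', h2, ?_, h, fun h => ⟨h1 h, h⟩, fun h => ⟨h3 h, h⟩⟩
        rw [Ideal.mem_comap, map_sub, hσ, map_one]
        have := A.neg_mem h
        convert this using 1; ring
    obtain ⟨A, hA, hA2, hA1⟩ := hall β g hg hgβ 3 0 hg0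
    obtain ⟨B, hB, hB2, hB1⟩ := hall β g hg hgβ 3 (-1) hg1
    obtain ⟨P, Q, hP, hQ, a1, a2, a3, a4, a5, -⟩ := pair A hA (by simpa using hA2)
    obtain ⟨R, S, hR, hS, b1, b2, b3, b4, -, b5⟩ := pair B hB (by simpa using hB2)
    have a6 := a5 (by simpa using hA1)
    have b6 := b5 (by simpa using hB1)
    exact aux_div3 hr α β hβ P Q R S hP hQ hR hS a1 a2 b1 b2 a3 a4 b3 b4 a6.1 a6.2 b6.1 b6.2 θ
  exact Nat.Coprime.mul_dvd_of_dvd_of_dvd (by decide : Nat.Coprime 2 3) d2 d3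

lemma aux_ex (x : 𝓞 K) (n : ℕ) (hn : n ≠ 0) (h : IsIntegral ℤ ((x : K) / n)) :
    ∃ y : 𝓞 K, (n : 𝓞 K) * y = x := by
  obtain ⟨y, hy⟩ := (IsIntegralClosure.isIntegral_iff (R := ℤ) (A := 𝓞 K) (B := K)).1 h
  refine ⟨y, ?_⟩
  apply RingOfIntegers.ext
  have h0 : (n : K) ≠ 0 := by exact_mod_cast hn
  have h1 : algebraMap (𝓞 K) K ((n : 𝓞 K) * y) = algebraMap (𝓞 K) K x := by
    rw [map_mul, map_natCast, hy]
    field_simp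
  exact h1

lemma aux_int (x : K) (n : ℤ) (y : 𝓞 K) (h : x ^ 2 + n * x = y) : IsIntegral ℤ x := by
  have hd : (X ^ 2 + C n * X : ℤ[X]).natDegree = 2 := by compute_degree!
  refine IsIntegral.of_aeval_monic (p := X ^ 2 + C n * X) (by monicity!) (by rw [hd]; norm_num) ?_
  have : aeval x (X ^ 2 + C n * X : ℤ[X]) = (y : K) := by
    rw [map_add, map_mul, map_pow, aeval_X, aeval_C, ← h]; simp
  rw [this]
  exact y.2

lemma aux_irr5 (g : ℤ[X]) (hm : g.Monic) (hd : g.natDegree = 3)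
    (h : ∀ x : ZMod 5, (g.map (Int.castRingHom (ZMod 5))).eval x ≠ 0) : Irreducible g := by
  have : Fact (Nat.Prime 5) := ⟨by norm_num⟩
  refine hm.irreducible_of_irreducible_map (Int.castRingHom (ZMod 5)) g ?_
  refine irreducible_of_degree_le_three_of_not_isRoot ?_ fun x => h x
  rw [hm.natDegree_map, hd]; decide

lemma aux_m2 (α : 𝓞 K) (F : ℤ[X]) (hF : F = X ^ 6 + C 72 * X ^ 2 + C 71) (hirr : Irreducible F)
    (hroot : aeval (α : K) F = 0) (hgen : Algebra.adjoin ℚ {(α : K)} = ⊤) (θ : 𝓞 K) :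
    6 ∣ subIndex θ := by
  have ev : ∀ x : K, aeval x F = x ^ 6 + 72 * x ^ 2 + 71 := by
    intro x; rw [hF, map_add, map_add, map_mul, map_pow, map_pow, aeval_X, aeval_C, aeval_C]; simp
  have hK : (α : K) ^ 6 + 72 * (α : K) ^ 2 + 71 = 0 := by rw [← ev, hroot]
  have hO : α ^ 6 + 72 * α ^ 2 + 71 = 0 := by
    apply RingOfIntegers.ext
    simpa [map_ofNat] using hK
  obtain ⟨δ, hδ⟩ := aux_ex (α ^ 3 - 1) 2 (by norm_num) (by
    refine aux_int _ 1 (-18 * (α ^ 2 + 1)) ?_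
    simp only [map_mul, map_add, map_sub, map_neg, map_pow, map_one, map_ofNat]
    push_cast
    linear_combination (1 / 4 : K) * hK)
  obtain ⟨β, hβ⟩ := aux_ex ((α ^ 2 - 1) ^ 2) 3 (by norm_num) (by
    refine aux_int _ 22 (9 * (α ^ 2 - 1) + 48) ?_
    simp only [map_mul, map_add, map_sub, map_neg, map_pow, map_one, map_ofNat]
    push_cast
    linear_combination (((α : K) ^ 2 - 1) / 9 - 1 / 3 : K) * hK)
  push_cast at hδ hβ
  have hg : (X ^ 3 + C 47 * X ^ 2 + C 529 * X + C (-768) : ℤ[X]).Monic := by monicity!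
  refine aux_core α F hirr (by rw [hF]; monicity!) (by rw [hF]; compute_degree!) hroot
    (by rw [ev]; linear_combination hK) hgen δ (-9 * (α ^ 2 + 1)) hδ ?_
    β (-7 * β + 3 * (α ^ 2 - 1) + 16) hβ ?_ (X ^ 3 + C 47 * X ^ 2 + C 529 * X + C (-768))
    (aux_irr5 _ hg (by compute_degree!) ?_) ?_ ?_ ?_ ?_ ?_ θ
  · have h4 : (4 : 𝓞 K) ≠ 0 := by norm_num
    apply mul_left_cancel₀ h4
    linear_combination hO + (2 * δ + α ^ 3 + 1) * hδ
  · have h4 : (9 : 𝓞 K) ≠ 0 := by norm_num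
    apply mul_left_cancel₀ h4
    linear_combination (α ^ 2 - 4) * hO + (3 * β + (α ^ 2 - 1) ^ 2 + 66) * hβ
  · intro x
    simp only [Polynomial.map_add, Polynomial.map_mul, Polynomial.map_pow, map_X, map_C, eval_add, eval_mul,
      eval_pow, eval_X, eval_C]
    revert x; decide
  · rw [map_add, map_add, map_add, map_mul, map_mul, map_pow, map_pow, aeval_X, aeval_C, aeval_C, aeval_C]
    simp only [algebraMap_int_eq, eq_intCast]
    push_cast
    have h4 : (27 : 𝓞 K) ≠ 0 := by norm_num
    apply mul_left_cancel₀ h4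
    have hb : 27 * (β ^ 3 + 47 * β ^ 2 + 529 * β + -768) =
      (3 * β) * (3 * β + 75) ^ 2 - (3 * (3 * β) + 144) ^ 2 := by ring
    rw [hb, hβ]
    linear_combination ((α ^ 2 - 1) ^ 3 + 75 * (α ^ 2 - 1) - 3 * (α ^ 2 - 1) ^ 2 - 144) * hO
  · norm_num
  · norm_num
  · rw [hF]; norm_num
  · have e2 : Int.castRingHom (ZMod 2) 72 = 0 := by decide
    have e3 : Int.castRingHom (ZMod 2) 71 = -1 := by decide
    rw [hF]
    simp only [Polynomial.map_add, Polynomial.map_mul, Polynomial.map_pow, map_X, map_C, e2, e3]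
    refine ⟨(X - 1) * (X ^ 3 + 1), ?_⟩
    simp only [C_0, C_neg, C_1]
    ring

lemma aux_m4 (α : 𝓞 K) (F : ℤ[X]) (hF : F = X ^ 6 + C 72 * X ^ 4 + C 71) (hirr : Irreducible F)
    (hroot : aeval (α : K) F = 0) (hgen : Algebra.adjoin ℚ {(α : K)} = ⊤) (θ : 𝓞 K) :
    6 ∣ subIndex θ := by
  have ev : ∀ x : K, aeval x F = x ^ 6 + 72 * x ^ 4 + 71 := by
    intro x; rw [hF, map_add, map_add, map_mul, map_pow, map_pow, aeval_X, aeval_C, aeval_C]; simp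
  have hK : (α : K) ^ 6 + 72 * (α : K) ^ 4 + 71 = 0 := by rw [← ev, hroot]
  have hO : α ^ 6 + 72 * α ^ 4 + 71 = 0 := by
    apply RingOfIntegers.ext
    simpa [map_ofNat] using hK
  obtain ⟨δ, hδ⟩ := aux_ex (α ^ 3 - 1) 2 (by norm_num) (by
    refine aux_int _ 1 (-18 * (α ^ 4 + 1)) ?_
    simp only [map_mul, map_add, map_sub, map_neg, map_pow, map_one, map_ofNat]
    push_cast
    linear_combination (1 / 4 : K) * hK)
  obtain ⟨β, hβ⟩ := aux_ex ((α ^ 2 - 1) ^ 2) 3 (by norm_num) (by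
    refine aux_int _ (-1826) (1209 * (α ^ 2 - 1) + 1200) ?_
    simp only [map_mul, map_add, map_sub, map_neg, map_pow, map_one, map_ofNat]
    push_cast
    linear_combination (((α : K) ^ 2 - 1) / 9 - 25 / 3 : K) * hK)
  push_cast at hδ hβ
  have hg : (X ^ 3 + C (-1777) * X ^ 2 + C 1 * X + C (-768) : ℤ[X]).Monic := by monicity!
  refine aux_core α F hirr (by rw [hF]; monicity!) (by rw [hF]; compute_degree!) hroot
    (by rw [ev]; linear_combination hK) hgen δ (-9 * (α ^ 4 + 1)) hδ ?_
    β (609 * β + 403 * (α ^ 2 - 1) + 400) hβ ?_ (X ^ 3 + C (-1777) * X ^ 2 + C 1 * X + C (-768))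
    (aux_irr5 _ hg (by compute_degree!) ?_) ?_ ?_ ?_ ?_ ?_ θ
  · have h4 : (4 : 𝓞 K) ≠ 0 := by norm_num
    apply mul_left_cancel₀ h4
    linear_combination hO + (2 * δ + α ^ 3 + 1) * hδ
  · have h4 : (9 : 𝓞 K) ≠ 0 := by norm_num
    apply mul_left_cancel₀ h4
    linear_combination (α ^ 2 - 76) * hO + (3 * β + (α ^ 2 - 1) ^ 2 - 5478) * hβ
  · intro x
    simp only [Polynomial.map_add, Polynomial.map_mul, Polynomial.map_pow, map_X, map_C, eval_add, eval_mul,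
      eval_pow, eval_X, eval_C]
    revert x; decide
  · rw [map_add, map_add, map_add, map_mul, map_mul, map_pow, map_pow, aeval_X, aeval_C, aeval_C, aeval_C]
    simp only [algebraMap_int_eq, eq_intCast]
    push_cast
    have h4 : (27 : 𝓞 K) ≠ 0 := by norm_num
    apply mul_left_cancel₀ h4
    have hb : 27 * (β ^ 3 + -1777 * β ^ 2 + 1 * β + -768) =
      (3 * β) * (3 * β + 147) ^ 2 - (75 * (3 * β) + 144) ^ 2 := by ring
    rw [hb, hβ]
    linear_combination ((α ^ 2 - 1) ^ 3 + 147 * (α ^ 2 - 1) - 75 * (α ^ 2 - 1) ^ 2 - 144) * hO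
  · norm_num
  · norm_num
  · rw [hF]; norm_num
  · have e2 : Int.castRingHom (ZMod 2) 72 = 0 := by decide
    have e3 : Int.castRingHom (ZMod 2) 71 = -1 := by decide
    rw [hF]
    simp only [Polynomial.map_add, Polynomial.map_mul, Polynomial.map_pow, map_X, map_C, e2, e3]
    refine ⟨(X - 1) * (X ^ 3 + 1), ?_⟩
    simp only [C_0, C_neg, C_1]
    ring

lemma aux_red (F : ℤ[X]) (hirr : Irreducible F) (hd : F.natDegree = 6) (h : F.eval (-1) = 0) : False := by
  have h1 : (X - C (-1) : ℤ[X]) ∣ F := dvd_iff_isRoot.2 h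
  have h2 := ((irreducible_X_sub_C (-1 : ℤ)).associated_of_dvd hirr h1)
  have h3 := natDegree_eq_of_degree_eq (degree_eq_degree_of_associated h2)
  rw [natDegree_X_sub_C, hd] at h3
  norm_num at h3

end aux

/-- For `K` defined by a root of `x^6 + 72 x^m + 71`, `6` divides `i(K)`
(equivalently, `6` divides `(ℤ_K : ℤ[θ])` for every generator `θ`); in
particular `K` is not monogenic. -/
theorem six_divides_field_index
    {K : Type*} [Field K] [NumberField K] (α : 𝓞 K)
    (m : ℕ) (hm : 1 ≤ m) (hm5 : m ≤ 5)
    (F : ℤ[X]) (hF : F = X ^ 6 + C 72 * X ^ m + C 71)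
    (hirr : Irreducible F)
    (hroot : Polynomial.aeval (α : K) F = 0)
    (hgen : Algebra.adjoin ℚ {(α : K)} = ⊤) :
    (∀ θ : 𝓞 K, Algebra.adjoin ℚ {(θ : K)} = ⊤ → 6 ∣ subIndex θ) ∧
      ¬ ∃ β : 𝓞 K, Algebra.adjoin ℤ ({β} : Set (𝓞 K)) = ⊤ := by
  have main : ∀ θ : 𝓞 K, 6 ∣ subIndex θ := by
    intro θ
    interval_cases m
    · exact (aux_red F hirr (by rw [hF]; compute_degree!) (by rw [hF]; norm_num)).elim
    · exact aux_m2 α F hF hirr hroot hgen θ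
    · exact (aux_red F hirr (by rw [hF]; compute_degree!) (by rw [hF]; norm_num)).elim
    · exact aux_m4 α F hF hirr hroot hgen θ
    · exact (aux_red F hirr (by rw [hF]; compute_degree!) (by rw [hF]; norm_num)).elim
  refine ⟨fun θ _ => main θ, ?_⟩
  rintro ⟨β, hβ⟩
  have h1 : subIndex β = 1 := by
    rw [subIndex, AddSubgroup.index_eq_one, hβ]
    rfl
  have := main β
  rw [h1] at this
  norm_num at this
end

section
/- Let m be an integer with 1 ≤ m ≤ 5 such that F(x) = x^6 + 72 x^m + 71 is irreducible over ℚ, and let K = ℚ(α) for a root α of F. Then above the prime 2 the ring ℤ_K has at least two distinct prime ideals of residue degree 1 and at least two distinct prime ideals of residue degree 2. -/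
open Polynomial NumberField

namespace X672

lemma aeval_F {S : Type*} [CommRing S] [Algebra ℤ S] (s : S) (m : ℕ) :
    aeval s (X ^ 6 + C 72 * X ^ m + C 71 : ℤ[X]) = s ^ 6 + 72 * s ^ m + 71 := by
  simp only [map_add, map_mul, map_pow, aeval_X, map_ofNat]

lemma exists_prime_aux {R : Type*} [CommRing R] [IsDomain R] [Algebra.IsIntegral ℤ R]
    (α : R) (F : ℤ[X])
    (hdvd : ∀ p : ℤ[X], aeval α p = 0 → F ∣ p)
    {k : Type*} [Field k] (w : k) (h2 : (2 : k) = 0) (hw : aeval w F = 0)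
    (c : ℤ[X]) (hc : aeval w c = 0) :
    ∃ P : Ideal R, P.IsPrime ∧ (2 : R) ∈ P ∧ aeval α c ∈ P := by
  let : Algebra ℤ[X] R := (aeval α : ℤ[X] →ₐ[ℤ] R).toRingHom.toAlgebra
  have hmap : ∀ p : ℤ[X], algebraMap ℤ[X] R p = aeval α p := fun p => rfl
  have : IsScalarTower ℤ ℤ[X] R := IsScalarTower.of_algebraMap_eq fun n => by
    rw [hmap]; simp
  have : Algebra.IsIntegral ℤ[X] R := Algebra.IsIntegral.tower_top (R := ℤ)
  let φ : ℤ[X] →+* k := (aeval w : ℤ[X] →ₐ[ℤ] k).toRingHom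
  have hφ : ∀ p, φ p = aeval w p := fun p => rfl
  have : (RingHom.ker φ).IsPrime := RingHom.ker_isPrime φ
  obtain ⟨Q, -, hQ, hQP⟩ := Ideal.exists_ideal_over_prime_of_isIntegral (R := ℤ[X]) (S := R)
    (RingHom.ker φ) ⊥ (by
      intro p hp
      rw [Ideal.mem_comap, Ideal.mem_bot, hmap] at hp
      obtain ⟨q, rfl⟩ := hdvd p hp
      rw [RingHom.mem_ker, hφ, map_mul, hw, zero_mul])
  refine ⟨Q, hQ, ?_, ?_⟩
  · have : (2 : ℤ[X]) ∈ Q.comap (algebraMap ℤ[X] R) := by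
      rw [hQP, RingHom.mem_ker, map_ofNat, h2]
    rw [Ideal.mem_comap, map_ofNat] at this
    exact this
  · have : c ∈ Q.comap (algebraMap ℤ[X] R) := by
      rw [hQP, RingHom.mem_ker, hφ, hc]
    simpa [hmap] using this

lemma split_aux {R : Type*} [CommRing R] (σ : R →+* R) (θ s c d : R)
    (hθ : θ * (1 - θ) = 2 * s) (hσ : σ θ = 1 - θ) (hc : σ c = c + 2 * d)
    (h : ∃ P : Ideal R, P.IsPrime ∧ (2 : R) ∈ P ∧ c ∈ P) :
    (∃ P : Ideal R, P.IsPrime ∧ (2 : R) ∈ P ∧ c ∈ P ∧ θ ∈ P) ∧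
    (∃ P : Ideal R, P.IsPrime ∧ (2 : R) ∈ P ∧ c ∈ P ∧ 1 - θ ∈ P) := by
  obtain ⟨P, hP, h2, hcP⟩ := h
  have hQ2 : (2 : R) ∈ P.comap σ := by rw [Ideal.mem_comap, map_ofNat]; exact h2
  have hQc : c ∈ P.comap σ := by
    rw [Ideal.mem_comap, hc]
    exact P.add_mem hcP (P.mul_mem_right _ h2)
  have hQ : (P.comap σ).IsPrime := Ideal.comap_isPrime σ P
  have : θ * (1 - θ) ∈ P := by rw [hθ]; exact P.mul_mem_right _ h2
  rcases hP.mem_or_mem this with h | h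
  · refine ⟨⟨P, hP, h2, hcP, h⟩, ⟨P.comap σ, hQ, hQ2, hQc, ?_⟩⟩
    rw [Ideal.mem_comap]; simpa [hσ] using h
  · refine ⟨⟨P.comap σ, hQ, hQ2, hQc, ?_⟩, ⟨P, hP, h2, hcP, h⟩⟩
    rw [Ideal.mem_comap, hσ]; exact h

lemma coprime_aux {R : Type*} [CommRing R] {P Q : Ideal R} (a b : R) (ha : a ∈ P) (hb : b ∈ Q)
    (hab : a + b = 1) : IsCoprime P Q := by
  rw [Ideal.isCoprime_iff_exists]
  exact ⟨a, ha, b, hb, hab⟩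

lemma four_le_aux {k : Type*} [CommRing k] [IsDomain k] [Finite k] (h2 : (2 : k) = 0) (w : k)
    (hw : w ^ 2 + w + 1 = 0) : 4 ≤ Nat.card k := by
  classical
  have := Fintype.ofFinite k
  have w0 : w ≠ 0 := by rintro rfl; simp at hw
  have w1 : w ≠ 1 := by
    rintro rfl
    apply one_ne_zero (α := k)
    linear_combination hw - h2
  have w2 : w + 1 ≠ 0 := by
    intro h
    apply w1
    linear_combination h - h2
  have hc : ({0, 1, w, w + 1} : Finset k).card = 4 := by
    have := one_ne_zero (α := k)
    rw [Finset.card_insert_of_notMem, Finset.card_insert_of_notMem, Finset.card_insert_of_notMem,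
      Finset.card_singleton] <;> simp [w0, w1.symm, w0.symm, w2.symm]
  rw [Nat.card_eq_fintype_card, ← hc]
  exact Finset.card_le_univ _

lemma arith_aux (a b c d : ℕ) (ha : 2 ≤ a) (hb : 2 ≤ b) (hc : 4 ≤ c) (hd : 4 ≤ d)
    (h : a * b * (c * d) ≤ 64) : a = 2 ∧ b = 2 ∧ c = 4 ∧ d = 4 := by
  have h1 : 4 ≤ a * b := by nlinarith
  have h2 : 16 ≤ c * d := by nlinarith
  have h3 : a * b ≤ 4 := by nlinarith
  have h4 : c * d ≤ 16 := by nlinarith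
  refine ⟨?_, ?_, ?_, ?_⟩ <;> nlinarith

end X672

open X672

/-- For `K` defined by a root of `x^6 + 72 x^m + 71`, above `2` the ring `ℤ_K`
has at least two distinct primes of residue degree `1` and at least two distinct
primes of residue degree `2`. -/
theorem primes_above_two_of_x6_72xm_71
    {K : Type*} [Field K] [NumberField K] (α : 𝓞 K)
    (m : ℕ) (hm : 1 ≤ m) (hm5 : m ≤ 5)
    (F : ℤ[X]) (hF : F = X ^ 6 + C 72 * X ^ m + C 71)
    (hirr : Irreducible F)
    (hroot : Polynomial.aeval (α : K) F = 0)
    (hgen : Algebra.adjoin ℚ {(α : K)} = ⊤) :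
    (∃ P Q : Ideal (𝓞 K), P ≠ Q ∧
      P.IsMaximal ∧ (2 : 𝓞 K) ∈ P ∧ Nat.card (𝓞 K ⧸ P) = 2 ∧
      Q.IsMaximal ∧ (2 : 𝓞 K) ∈ Q ∧ Nat.card (𝓞 K ⧸ Q) = 2) ∧
    (∃ P Q : Ideal (𝓞 K), P ≠ Q ∧
      P.IsMaximal ∧ (2 : 𝓞 K) ∈ P ∧ Nat.card (𝓞 K ⧸ P) = 2 ^ 2 ∧
      Q.IsMaximal ∧ (2 : 𝓞 K) ∈ Q ∧ Nat.card (𝓞 K ⧸ Q) = 2 ^ 2) := by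
  have hdeg : F.natDegree = 6 := by
    subst hF; interval_cases m <;> compute_degree!
  have hmon : F.Monic := by
    subst hF; interval_cases m <;> monicity!
  have hirrQ : Irreducible (F.map (algebraMap ℤ ℚ)) :=
    (hmon.irreducible_iff_irreducible_map_fraction_map (K := ℚ)).1 hirr
  have hdegQ : (F.map (algebraMap ℤ ℚ)).natDegree = 6 := by
    rw [hmon.natDegree_map, hdeg]
  have hmin : minpoly ℚ (α : K) = F.map (algebraMap ℤ ℚ) :=
    (minpoly.eq_of_irreducible_of_monic hirrQ (by rw [aeval_map_algebraMap]; exact hroot) (hmon.map _)).symm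
  have hmeven : Even m := by
    by_contra hodd
    rw [Nat.not_even_iff_odd] at hodd
    have := Polynomial.degree_eq_one_of_irreducible_of_root (x := (-1 : ℚ)) hirrQ (by
      rw [IsRoot.def, eval_map_algebraMap, hF, aeval_F, hodd.neg_one_pow]; norm_num)
    have := natDegree_eq_of_degree_eq_some this
    rw [hdegQ] at this
    norm_num at this
  -- relation
  have hrel : α ^ 6 + 72 * α ^ m + 71 = 0 := by
    apply RingOfIntegers.ext
    have := hroot
    rw [hF, aeval_F] at this
    simpa only [map_add, map_mul, map_pow, map_ofNat, map_zero] using this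
  have hdvd : ∀ p : ℤ[X], aeval α p = 0 → F ∣ p := by
    intro p hp
    have h1 : aeval (α : K) p = 0 := by
      have : aeval (algebraMap (𝓞 K) K α) p = 0 := by
        rw [aeval_algebraMap_apply, hp, map_zero]
      exact this
    have h2 : F.map (algebraMap ℤ ℚ) ∣ p.map (algebraMap ℤ ℚ) := by
      rw [← hmin]
      apply minpoly.dvd
      rw [aeval_map_algebraMap]; exact h1
    exact (map_dvd_map (algebraMap ℤ ℚ) (FaithfulSMul.algebraMap_injective ℤ ℚ) hmon).1 h2
  -- power basis
  have hint : IsIntegral ℚ (α : K) := Algebra.IsIntegral.isIntegral _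
  let pb : PowerBasis ℚ K := PowerBasis.ofAdjoinEqTop hint hgen
  have hpbgen : pb.gen = (α : K) := PowerBasis.ofAdjoinEqTop_gen hint hgen
  have hrank : Module.finrank ℚ K = 6 := by
    rw [pb.finrank, ← pb.natDegree_minpoly, hpbgen, hmin, hdegQ]
  -- automorphism
  have hneg : aeval (-(α : K)) (minpoly ℚ pb.gen) = 0 := by
    rw [hpbgen, hmin, aeval_map_algebraMap]
    have := hroot
    rw [hF, aeval_F] at this ⊢
    rw [hmeven.neg_pow, Even.neg_pow (by decide)]
    exact this
  let τ : K →ₐ[ℚ] K := pb.lift (-(α : K)) hneg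
  have hτ : τ (α : K) = -(α : K) := by
    have := pb.lift_gen (-(α : K)) hneg
    rw [hpbgen] at this
    exact this
  let σ : 𝓞 K →+* 𝓞 K := RingOfIntegers.mapRingHom τ
  have hσ : σ α = -α := by
    apply RingOfIntegers.ext
    exact hτ.trans (map_neg (algebraMap (𝓞 K) K) α).symm
  -- theta
  have h2ne : (2 : 𝓞 K) ≠ 0 := two_ne_zero
  obtain ⟨θ, hθ⟩ : ∃ θ : 𝓞 K, 2 * θ = α ^ 3 + 1 := by
    have hI : IsIntegral (𝓞 K) (((α : K) ^ 3 + 1) / 2) := by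
      refine ⟨X ^ 2 - X + C (18 * (α ^ m + 1)), by monicity!, ?_⟩
      have h : (α : K) ^ 6 + 72 * (α : K) ^ m + 71 = 0 := by
        have := congrArg (algebraMap (𝓞 K) K) hrel
        simpa only [map_add, map_mul, map_pow, map_ofNat, map_zero] using this
      simp [map_ofNat]
      linear_combination h / 4
    obtain ⟨θ, hθ⟩ := IsIntegrallyClosed.isIntegral_iff.1 hI
    refine ⟨θ, RingOfIntegers.ext ?_⟩
    simp only [map_add, map_mul, map_pow, map_ofNat, map_one]
    rw [hθ]; ring
  have hθ2 : θ * (1 - θ) = 2 * (9 * (α ^ m + 1)) := by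
    apply mul_left_cancel₀ (mul_ne_zero h2ne h2ne)
    linear_combination (1 - 2 * θ - α ^ 3) * hθ - hrel
  have hσθ : σ θ = 1 - θ := by
    apply mul_left_cancel₀ h2ne
    have := congrArg σ hθ
    simp only [map_add, map_mul, map_pow, map_ofNat, map_one, hσ] at this
    rw [Odd.neg_pow (by decide)] at this
    linear_combination this + hθ
  -- primes
  have hE1 : ∃ P : Ideal (𝓞 K), P.IsPrime ∧ (2 : 𝓞 K) ∈ P ∧ α - 1 ∈ P := by
    have := exists_prime_aux α F hdvd (1 : ZMod 2) (by decide) (by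
      rw [hF, aeval_F, one_pow, one_pow]; decide) (X - 1) (by simp)
    simpa using this
  have hE2 : ∃ P : Ideal (𝓞 K), P.IsPrime ∧ (2 : 𝓞 K) ∈ P ∧ α ^ 2 + α + 1 ∈ P := by
    have h2 : (2 : AlgebraicClosure (ZMod 2)) = 0 := CharTwo.two_eq_zero
    obtain ⟨w, hw⟩ := IsAlgClosed.exists_root
      (X ^ 2 + X + 1 : (AlgebraicClosure (ZMod 2))[X]) (by
        have : (X ^ 2 + X + 1 : (AlgebraicClosure (ZMod 2))[X]).degree = 2 := by compute_degree!
        rw [this]; decide)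
    have hw' : w ^ 2 + w + 1 = 0 := by simpa using hw
    have := exists_prime_aux α F hdvd w h2 (by
      rw [hF, aeval_F]
      linear_combination (w ^ 4 - w ^ 3 + w - 1) * hw' + (36 * w ^ m + 36) * h2)
      (X ^ 2 + X + 1) (by simpa using hw')
    simpa using this
  obtain ⟨⟨P1, p1, t1, c1, e1⟩, ⟨P2, p2, t2, c2, e2⟩⟩ :=
    split_aux σ θ _ (α - 1) (-α) hθ2 hσθ (by simp [hσ]; ring) hE1
  obtain ⟨⟨P3, p3, t3, c3, e3⟩, ⟨P4, p4, t4, c4, e4⟩⟩ :=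
    split_aux σ θ _ (α ^ 2 + α + 1) (-α) hθ2 hσθ (by simp [hσ]; ring) hE2
  have hne : ∀ P : Ideal (𝓞 K), (2 : 𝓞 K) ∈ P → P ≠ ⊥ := by
    rintro P h rfl
    exact h2ne (by simpa using h)
  have m1 := p1.isMaximal (hne _ t1)
  have m2 := p2.isMaximal (hne _ t2)
  have m3 := p3.isMaximal (hne _ t3)
  have m4 := p4.isMaximal (hne _ t4)
  have k12 : IsCoprime P1 P2 := coprime_aux _ _ e1 e2 (by ring)
  have k34 : IsCoprime P3 P4 := coprime_aux _ _ e3 e4 (by ring)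
  have key : ∀ P Q : Ideal (𝓞 K), α - 1 ∈ P → (2 : 𝓞 K) ∈ P → α ^ 2 + α + 1 ∈ Q →
      IsCoprime P Q := by
    intro P Q hP hP2 hQ
    refine coprime_aux (-(α + 2) * (α - 1) - 2) (α ^ 2 + α + 1) ?_ hQ (by ring)
    exact P.sub_mem (P.mul_mem_left _ hP) hP2
  have kk : IsCoprime (P1 * P2) (P3 * P4) :=
    IsCoprime.mul_left (IsCoprime.mul_right (key _ _ c1 t1 c3) (key _ _ c1 t1 c4))
      (IsCoprime.mul_right (key _ _ c2 t2 c3) (key _ _ c2 t2 c4))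
  have hprod : P1 * P2 * (P3 * P4) ∣ Ideal.span {(2 : 𝓞 K)} := by
    refine kk.mul_dvd (k12.mul_dvd ?_ ?_) (k34.mul_dvd ?_ ?_) <;>
      · rw [Ideal.dvd_span_singleton]; assumption
  have hnorm : Ideal.absNorm (Ideal.span {(2 : 𝓞 K)}) = 64 := by
    rw [Ideal.absNorm_span_singleton]
    have : Algebra.norm ℤ (2 : 𝓞 K) = 64 := by
      have h := Algebra.norm_algebraMap_of_basis (RingOfIntegers.basis K) (2 : ℤ)
      rw [← Module.finrank_eq_card_basis (RingOfIntegers.basis K), RingOfIntegers.rank, hrank] at h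
      simpa using h
    rw [this]; rfl
  have hle := Nat.le_of_dvd (by norm_num) (hnorm ▸ map_dvd Ideal.absNorm hprod)
  simp only [map_mul] at hle
  have hcard : ∀ P : Ideal (𝓞 K), Ideal.absNorm P = Nat.card (𝓞 K ⧸ P) := fun P => rfl
  have hfin : ∀ P : Ideal (𝓞 K), (2 : 𝓞 K) ∈ P → Finite (𝓞 K ⧸ P) := fun P h =>
    Ideal.finiteQuotientOfFreeOfNeBot P (hne P h)
  have hge2 : ∀ P : Ideal (𝓞 K), P.IsPrime → (2 : 𝓞 K) ∈ P → 2 ≤ Ideal.absNorm P := by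
    intro P hP h
    have := hfin P h
    rw [hcard]
    exact Finite.one_lt_card
  have hge4 : ∀ P : Ideal (𝓞 K), P.IsPrime → (2 : 𝓞 K) ∈ P → α ^ 2 + α + 1 ∈ P →
      4 ≤ Ideal.absNorm P := by
    intro P hP h hc
    have := hfin P h
    rw [hcard]
    refine four_le_aux ?_ (Ideal.Quotient.mk P α) ?_
    · have := Ideal.Quotient.eq_zero_iff_mem.2 h
      rw [map_ofNat] at this
      exact this
    · have := Ideal.Quotient.eq_zero_iff_mem.2 hc
      simpa using this
  obtain ⟨n1, n2, n3, n4⟩ := arith_aux _ _ _ _ (hge2 P1 p1 t1) (hge2 P2 p2 t2)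
    (hge4 P3 p3 t3 c3) (hge4 P4 p4 t4 c4) hle
  have hneq : ∀ P Q : Ideal (𝓞 K), P.IsPrime → IsCoprime P Q → P ≠ Q := by
    rintro P Q hP h rfl
    rw [Ideal.isCoprime_iff_sup_eq, sup_idem] at h
    exact hP.ne_top h
  exact ⟨⟨P1, P2, hneq _ _ p1 k12, m1, t1, n1, m2, t2, n2⟩,
    ⟨P3, P4, hneq _ _ p3 k34, m3, t3, n3, m4, t4, n4⟩⟩
end

section
/- Let K = ℚ(θ) be a sextic number field generated by a root θ of a monic irreducible trinomial F(x) = x^6 + a x^m + b ∈ ℤ[x] with 1 ≤ m ≤ 5, where a ≡ 0 (mod 9) and b ≡ −1 (mod 9). Then there exist at least four distinct prime ideals of ℤ_K lying above 3 with residue degree 1. -/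
open Polynomial NumberField

theorem aux_trace {K : Type*} [Field K] [NumberField K] (α : 𝓞 K)
    (h : ∀ P : Ideal (𝓞 K), P.IsMaximal → (3 : 𝓞 K) ∈ P → α ∈ P) :
    (3 : ℤ) ∣ Algebra.trace ℤ (𝓞 K) α := by
  classical
  have hrad : α ∈ (Ideal.span {(3 : 𝓞 K)}).radical := by
    rw [Ideal.radical_eq_sInf, Submodule.mem_sInf]
    rintro P ⟨hle, hP⟩
    have h3 : (3 : 𝓞 K) ∈ P := hle (Ideal.mem_span_singleton_self _)
    refine h P (hP.isMaximal ?_) h3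
    rintro rfl
    simp at h3
  obtain ⟨n, hn⟩ := hrad
  obtain ⟨β, hβ⟩ := Ideal.mem_span_singleton.mp hn
  let B := Module.Free.chooseBasis ℤ (𝓞 K)
  rw [Algebra.trace_eq_matrix_trace B]
  set M := Algebra.leftMulMatrix B α with hM
  have hMn : M ^ n = Algebra.leftMulMatrix B 3 * Algebra.leftMulMatrix B β := by
    rw [hM, ← map_pow, hβ, map_mul]
  have h3 : Algebra.leftMulMatrix B 3 = 3 := map_ofNat _ 3
  have hnil : IsNilpotent ((Int.castRingHom (ZMod 3)).mapMatrix M) := by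
    refine ⟨n, ?_⟩
    rw [← map_pow, hMn, h3, map_mul, map_ofNat]
    have : (3 : Matrix (Module.Free.ChooseBasisIndex ℤ (𝓞 K)) (Module.Free.ChooseBasisIndex ℤ (𝓞 K)) (ZMod 3)) = 0 := by
      have h30 : (3 : ZMod 3) = 0 := by decide
      have := map_ofNat (algebraMap (ZMod 3) (Matrix (Module.Free.ChooseBasisIndex ℤ (𝓞 K)) (Module.Free.ChooseBasisIndex ℤ (𝓞 K)) (ZMod 3))) 3
      rw [← this, h30, map_zero]
    rw [this, zero_mul]
  have := (Matrix.isNilpotent_trace_of_isNilpotent hnil).eq_zero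
  have h' := ZMod.intCast_zmod_eq_zero_iff_dvd M.trace 3
  refine h'.mp ?_
  rw [← this]
  simp [Matrix.trace]

theorem aux_minpoly {K : Type*} [Field K] [NumberField K] (x : K)
    (hfr : Module.finrank ℚ K = 6) (hx : Algebra.adjoin ℚ {x} = ⊤)
    (p : ℚ[X]) (hp : p.Monic) (hd : p.natDegree = 6) (h0 : aeval x p = 0) :
    minpoly ℚ x = p ∧ Algebra.trace ℚ K x = - p.coeff 5 := by
  have htop : IntermediateField.adjoin ℚ {x} = ⊤ := by
    rw [← IntermediateField.toSubalgebra_injective.eq_iff]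
    rw [IntermediateField.adjoin_simple_toSubalgebra_of_isAlgebraic (Algebra.IsAlgebraic.isAlgebraic x), hx]
    rfl
  have hdeg := (Field.primitive_element_iff_minpoly_natDegree_eq ℚ x).mp htop
  have hmon := minpoly.monic (Algebra.IsIntegral.isIntegral (R := ℚ) x)
  have heq : minpoly ℚ x = p :=
    (eq_of_monic_of_dvd_of_natDegree_le hmon hp (minpoly.dvd _ _ h0) (by omega)).symm
  refine ⟨heq, ?_⟩
  rw [trace_eq_finrank_mul_minpoly_nextCoeff, heq, htop, IntermediateField.finrank_top,
    nextCoeff_of_natDegree_pos (by omega), hd]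
  simp

/-- the generic monic sextic -/
noncomputable def sext (c5 c4 c3 c2 c1 c0 : ℤ) : ℤ[X] :=
  X ^ 6 + C c5 * X ^ 5 + C c4 * X ^ 4 + C c3 * X ^ 3 + C c2 * X ^ 2 + C c1 * X + C c0

theorem sext_iff {K : Type*} [Field K] [NumberField K] (x : 𝓞 K) (c5 c4 c3 c2 c1 c0 : ℤ) :
    x ^ 6 + c5 * x ^ 5 + c4 * x ^ 4 + c3 * x ^ 3 + c2 * x ^ 2 + c1 * x + c0 = 0 ↔
    (x : K) ^ 6 + c5 * (x : K) ^ 5 + c4 * (x : K) ^ 4 + c3 * (x : K) ^ 3 + c2 * (x : K) ^ 2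
      + c1 * (x : K) + c0 = 0 := by
  rw [← (FaithfulSMul.algebraMap_injective (𝓞 K) K).eq_iff]
  simp

theorem sext_trace {K : Type*} [Field K] [NumberField K] (x : 𝓞 K)
    (hfr : Module.finrank ℚ K = 6) (hx : Algebra.adjoin ℚ {(x : K)} = ⊤)
    (c5 c4 c3 c2 c1 c0 : ℤ)
    (h0 : x ^ 6 + c5 * x ^ 5 + c4 * x ^ 4 + c3 * x ^ 3 + c2 * x ^ 2 + c1 * x + c0 = 0) :
    minpoly ℚ (x : K) = (sext c5 c4 c3 c2 c1 c0).map (Int.castRingHom ℚ) ∧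
      Algebra.trace ℤ (𝓞 K) x = - c5 := by
  have hd : (sext c5 c4 c3 c2 c1 c0).natDegree = 6 := by
    unfold sext; compute_degree!
  have hm : (sext c5 c4 c3 c2 c1 c0).Monic := by
    unfold sext; monicity!
  have hK : (x : K) ^ 6 + c5 * (x : K) ^ 5 + c4 * (x : K) ^ 4 + c3 * (x : K) ^ 3 + c2 * (x : K) ^ 2 + c1 * (x : K) + c0 = 0 := by
    have := congrArg (algebraMap (𝓞 K) K) h0
    simpa using this
  have h := aux_minpoly (x : K) hfr hx ((sext c5 c4 c3 c2 c1 c0).map (Int.castRingHom ℚ))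
    (hm.map _) (by rw [hm.natDegree_map, hd]) (by
      simpa [sext] using hK)
  refine ⟨h.1, ?_⟩
  have h2 := h.2
  rw [← Algebra.coe_trace_int] at h2
  have : ((sext c5 c4 c3 c2 c1 c0).map (Int.castRingHom ℚ)).coeff 5 = c5 := by
    simp only [sext, coeff_map, coeff_add, coeff_C_mul, coeff_X_pow, coeff_X, coeff_C]
    simp
  rw [this] at h2
  exact_mod_cast h2

theorem aux_key {K : Type*} [Field K] [NumberField K] (y : 𝓞 K)
    (hfr : Module.finrank ℚ K = 6) (hy : Algebra.adjoin ℚ {(y : K)} = ⊤)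
    (s f5 f4 f3 e2 e1 d : ℤ) (hs : s = 1 ∨ s = -1)
    (h5 : (3 : ℤ) ∣ f5) (he1 : (3 : ℤ) ∣ e1 + s)
    (h0 : y ^ 6 + f5 * y ^ 5 + f4 * y ^ 4 + f3 * y ^ 3 + 3 * e2 * y ^ 2 + 3 * e1 * y + 9 * d = 0)
    (hP : ∀ P : Ideal (𝓞 K), P.IsMaximal → (3 : 𝓞 K) ∈ P → y ∈ P ∨ y - s ∈ P) :
    ∃ P Q : Ideal (𝓞 K), P ≠ Q ∧ P.IsMaximal ∧ Q.IsMaximal ∧ y ∈ P ∧ y ∈ Q ∧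
      (3 : 𝓞 K) ∈ P ∧ (3 : 𝓞 K) ∈ Q ^ 2 := by
  have hmy := sext_trace y hfr hy f5 f4 f3 (3 * e2) (3 * e1) (9 * d) (by push_cast; exact h0)
  have hy0 : (y : K) ≠ 0 := by
    intro hz
    have hd : (sext f5 f4 f3 (3 * e2) (3 * e1) (9 * d)).natDegree = 6 := by
      unfold sext; compute_degree!
    have hm : (sext f5 f4 f3 (3 * e2) (3 * e1) (9 * d)).Monic := by
      unfold sext; monicity!
    have := congrArg natDegree hmy.1
    rw [hm.natDegree_map, hd, hz, minpoly.zero, natDegree_X] at this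
    omega
  have hd0 : d ≠ 0 := by
    rintro rfl
    have := minpoly.coeff_zero_ne_zero (Algebra.IsIntegral.isIntegral (R := ℚ) (y : K)) hy0
    rw [hmy.1] at this
    simp [sext] at this
  have hd0' : (d : K) ≠ 0 := by exact_mod_cast hd0
  have h0K : (y : K) ^ 6 + f5 * (y : K) ^ 5 + f4 * (y : K) ^ 4 + f3 * (y : K) ^ 3 + 3 * e2 * (y : K) ^ 2 + 3 * e1 * (y : K) + 9 * d = 0 := by
    have := (sext_iff y f5 f4 f3 (3 * e2) (3 * e1) (9 * d)).mp (by push_cast; exact h0)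
    push_cast at this
    exact this
  have hw0 : ((-3 * d / y : K)) ^ 6 + (-e1 : ℤ) * (-3 * d / y : K) ^ 5 + (3 * e2 * d : ℤ) * (-3 * d / y : K) ^ 4
      + (-3 * f3 * d ^ 2 : ℤ) * (-3 * d / y : K) ^ 3 + (9 * f4 * d ^ 3 : ℤ) * (-3 * d / y : K) ^ 2
      + (-27 * f5 * d ^ 4 : ℤ) * (-3 * d / y : K) + (81 * d ^ 5 : ℤ) = 0 := by
    push_cast
    field_simp
    linear_combination 81 * (d : K) ^ 5 * h0K
  have hint : IsIntegral ℤ (-3 * d / y : K) := by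
    refine ⟨sext (-e1) (3 * e2 * d) (-3 * f3 * d ^ 2) (9 * f4 * d ^ 3) (-27 * f5 * d ^ 4) (81 * d ^ 5), ?_, ?_⟩
    · unfold sext; monicity!
    · simp only [sext, eval₂_add, eval₂_mul, eval₂_X_pow, eval₂_C, eval₂_X]
      simpa only [eq_intCast, algebraMap_int_eq] using hw0
  obtain ⟨w, hw⟩ : ∃ w : 𝓞 K, (w : K) = -3 * d / y := ⟨⟨_, hint⟩, rfl⟩
  have hwy : w * y = -3 * d := by
    apply RingOfIntegers.ext
    have h3 : ((-3 * d : 𝓞 K) : K) = -3 * d := by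
      have h := map_intCast (algebraMap (𝓞 K) K) (-3 * d)
      push_cast at h
      exact h
    have hm : ((w * y : 𝓞 K) : K) = (w : K) * (y : K) := map_mul (algebraMap (𝓞 K) K) w y
    refine Eq.trans (hm.trans ?_) h3.symm
    rw [hw]
    exact div_mul_cancel₀ _ hy0
  have hwO : w ^ 6 + (-e1 : ℤ) * w ^ 5 + (3 * e2 * d : ℤ) * w ^ 4
      + (-3 * f3 * d ^ 2 : ℤ) * w ^ 3 + (9 * f4 * d ^ 3 : ℤ) * w ^ 2
      + (-27 * f5 * d ^ 4 : ℤ) * w + (81 * d ^ 5 : ℤ) = 0 := by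
    rw [← hw] at hw0
    exact (sext_iff w _ _ _ _ _ _).mpr hw0
  have hwtop : Algebra.adjoin ℚ {(w : K)} = ⊤ := by
    rw [eq_top_iff, ← hy, Algebra.adjoin_le_iff, Set.singleton_subset_iff]
    have hy' : (y : K) = (algebraMap ℚ K (-3 * d)) * (w : K)⁻¹ := by
      rw [hw]; push_cast; simp; field_simp
    rw [hy']
    refine mul_mem (Subalgebra.algebraMap_mem _ _) ?_
    have hself : (w : K) ∈ Algebra.adjoin ℚ {(w : K)} := Algebra.self_mem_adjoin_singleton _ _
    exact Subalgebra.inv_mem_of_algebraic (x := ⟨(w : K), hself⟩) _ (Algebra.IsAlgebraic.isAlgebraic _)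
  have htw := (sext_trace w hfr hwtop _ _ _ _ _ _ hwO).2
  have hyne : y ≠ 0 := fun h => hy0 (by simp [h])
  -- 3 w = quintic in y
  have h3w : 3 * w = y ^ 5 + f5 * y ^ 4 + f4 * y ^ 3 + f3 * y ^ 2 + 3 * e2 * y + 3 * e1 := by
    apply mul_right_cancel₀ hyne
    linear_combination 3 * hwy - h0
  have hww : w * (w - e1) = - d * (y ^ 4 + f5 * y ^ 3 + f4 * y ^ 2 + f3 * y + 3 * e2) := by
    have h3 : (3 : 𝓞 K) ≠ 0 := by norm_num
    apply mul_right_cancel₀ h3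
    linear_combination w * h3w + (y ^ 4 + f5 * y ^ 3 + f4 * y ^ 2 + f3 * y + 3 * e2) * hwy
  have hdvd : ∀ (P : Ideal (𝓞 K)), (3 : 𝓞 K) ∈ P → ∀ n : ℤ, 3 ∣ n → (n : 𝓞 K) ∈ P := by
    rintro P h3 _ ⟨k, rfl⟩
    push_cast
    exact P.mul_mem_right _ h3
  have hs1 : (s : 𝓞 K) * s = 1 := by rcases hs with rfl | rfl <;> simp
  -- P
  have hA : ∃ P : Ideal (𝓞 K), P.IsMaximal ∧ (3 : 𝓞 K) ∈ P ∧ w ∉ P := by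
    by_contra! hcon
    have := aux_trace w hcon
    rw [htw] at this
    omega
  have hB : ∃ P : Ideal (𝓞 K), P.IsMaximal ∧ (3 : 𝓞 K) ∈ P ∧ w - y + (s : 𝓞 K) ∉ P := by
    by_contra! hcon
    have := aux_trace (w - y + (s : 𝓞 K)) hcon
    have hts : Algebra.trace ℤ (𝓞 K) (s : 𝓞 K) = 6 * s := by
      have := Algebra.trace_algebraMap (R := ℤ) (S := 𝓞 K) s
      rw [RingOfIntegers.rank, hfr] at this
      simpa using this
    rw [map_add, map_sub, htw, hmy.2, hts] at this
    omega
  obtain ⟨P, hPm, hP3, hPw⟩ := hA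
  obtain ⟨Q, hQm, hQ3, hQw⟩ := hB
  have hPp := hPm.isPrime
  have hQp := hQm.isPrime
  have hwyQ : ∀ P : Ideal (𝓞 K), (3 : 𝓞 K) ∈ P → w * y ∈ P := by
    intro P h
    rw [hwy, neg_mul]
    exact P.neg_mem (P.mul_mem_right _ h)
  have hyP : y ∈ P := (hPp.mem_or_mem (hwyQ P hP3)).resolve_left hPw
  have hyQ : y ∈ Q := by
    by_contra hyn
    have hwQ := (hQp.mem_or_mem (hwyQ Q hQ3)).resolve_right hyn
    have h1 := (hP Q hQm hQ3).resolve_left hyn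
    apply hQw
    have := Q.sub_mem hwQ h1
    convert this using 1; ring
  have he1n : ∀ P : Ideal (𝓞 K), P.IsPrime → (3 : 𝓞 K) ∈ P → (e1 : 𝓞 K) ∉ P := by
    intro P hp h3 he
    have h1 := hdvd P h3 _ he1
    push_cast at h1
    have h2 : (s : 𝓞 K) ∈ P := by simpa using P.sub_mem h1 he
    apply hp.ne_top
    rw [Ideal.eq_top_iff_one, ← hs1]
    exact P.mul_mem_left _ h2
  have hwQ : w ∈ Q := by
    have hmem : w * (w - e1) ∈ Q := by
      rw [hww]
      apply Q.mul_mem_left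
      have := Q.add_mem (Q.mul_mem_left (y ^ 3 + f5 * y ^ 2 + f4 * y + f3) hyQ) (Q.mul_mem_right (e2 : 𝓞 K) hQ3)
      convert this using 1; ring
    refine (hQp.mem_or_mem hmem).resolve_right fun h => hQw ?_
    have h1 := hdvd Q hQ3 _ he1
    push_cast at h1
    have := Q.add_mem (Q.sub_mem h hyQ) h1
    convert this using 1; ring
  refine ⟨P, Q, ?_, hPm, hQm, hyP, hyQ, hP3, ?_⟩
  · rintro rfl; exact hPw hwQ
  · have hprod : (w - e1 - e2 * y) * 3 ∈ Q ^ 2 := by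
      have : (w - e1 - e2 * y) * 3 = (y ^ 3 + f5 * y ^ 2 + f4 * y + f3) * y ^ 2 := by
        linear_combination h3w
      rw [this]
      exact Ideal.mul_mem_left _ _ (Ideal.pow_mem_pow hyQ 2)
    refine (Ideal.IsPrime.mul_mem_pow Q hprod).resolve_left fun h => he1n Q hQp hQ3 ?_
    have := Q.sub_mem (Q.sub_mem hwQ h) (Q.mul_mem_left (e2 : 𝓞 K) hyQ)
    convert this using 1; ring

theorem aux_shift {K : Type*} [Field K] [NumberField K] (θ : 𝓞 K)
    (hfr : Module.finrank ℚ K = 6) (hgen : Algebra.adjoin ℚ {(θ : K)} = ⊤)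
    (m : ℕ) (hm : 1 ≤ m) (hm5 : m ≤ 5) (a b : ℤ)
    (h0 : θ ^ 6 + a * θ ^ m + b = 0)
    (ha : a ≡ 0 [ZMOD 9]) (hb : b ≡ -1 [ZMOD 9]) (s : ℤ) (hs : s = 1 ∨ s = -1) :
    ∃ P Q : Ideal (𝓞 K), P ≠ Q ∧ P.IsMaximal ∧ Q.IsMaximal ∧ θ - s ∈ P ∧ θ - s ∈ Q ∧
      (3 : 𝓞 K) ∈ P ∧ (3 : 𝓞 K) ∈ Q ^ 2 := by
  obtain ⟨A, rfl⟩ : ∃ A, a = 9 * A := (Int.modEq_zero_iff_dvd.mp ha)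
  obtain ⟨B, rfl⟩ : ∃ B, b = 9 * B - 1 := by
    obtain ⟨B, hB⟩ := hb.symm.dvd
    exact ⟨B, by omega⟩
  have hs1 : (s : 𝓞 K) * s = 1 := by rcases hs with rfl | rfl <;> simp
  refine aux_key (θ - (s : 𝓞 K)) hfr ?_ s (6 * s + 9 * A * m.choose 5 * s ^ (m - 5))
    (15 + 9 * A * m.choose 4 * s ^ (m - 4)) (20 * s + 9 * A * m.choose 3 * s ^ (m - 3))
    (5 + 3 * A * m.choose 2 * s ^ (m - 2)) (2 * s + 3 * A * m * s ^ (m - 1))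
    (A * s ^ m + B) hs ?_ ?_ ?_ ?_
  · rw [eq_top_iff, ← hgen, Algebra.adjoin_le_iff, Set.singleton_subset_iff]
    have h1 : ((θ - s : 𝓞 K) : K) ∈ Algebra.adjoin ℚ {((θ - s : 𝓞 K) : K)} := Algebra.self_mem_adjoin_singleton _ _
    have h2 := add_mem h1 (intCast_mem (Algebra.adjoin ℚ {((θ - s : 𝓞 K) : K)}) s)
    have h3 : ((θ - s : 𝓞 K) : K) + s = θ := by simp
    rw [h3] at h2
    exact h2
  · exact ⟨2 * s + 3 * A * m.choose 5 * s ^ (m - 5), by ring⟩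
  · exact ⟨s + A * m * s ^ (m - 1), by ring⟩
  · clear hgen hfr ha hb
    rcases hs with rfl | rfl <;> interval_cases m <;> simp [Nat.choose] at h0 ⊢ <;>
      linear_combination h0
  · intro P hPm h3
    have hPp := hPm.isPrime
    have hmem : ((θ - s) * (θ + s)) ^ 3 ∈ P := by
      have : ((θ - s) * (θ + s)) ^ 3 = 3 * (-3 * A * θ ^ m - 3 * B - θ ^ 4 + θ ^ 2) := by
        have : (θ - s) * (θ + s) = θ ^ 2 - 1 := by linear_combination - hs1
        rw [this]
        push_cast at h0
        linear_combination h0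
      rw [this]
      exact P.mul_mem_right _ h3
    rcases hPp.mem_or_mem (hPp.mem_of_pow_mem _ hmem) with h | h
    · exact Or.inl h
    · right
      have := P.sub_mem h (P.mul_mem_right (s : 𝓞 K) h3)
      convert this using 1; ring

theorem aux_card {K : Type*} [Field K] [NumberField K] (hfr : Module.finrank ℚ K = 6)
    (P₁ P₂ Q₁ Q₂ : Ideal (𝓞 K)) (h1 : P₁.IsMaximal) (h2 : P₂.IsMaximal)
    (h3 : Q₁.IsMaximal) (h4 : Q₂.IsMaximal) (h12 : P₁ ≠ P₂) (h13 : P₁ ≠ Q₁) (h14 : P₁ ≠ Q₂)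
    (h23 : P₂ ≠ Q₁) (h24 : P₂ ≠ Q₂) (h34 : Q₁ ≠ Q₂)
    (m1 : (3 : 𝓞 K) ∈ P₁) (m2 : (3 : 𝓞 K) ∈ P₂) (m3 : (3 : 𝓞 K) ∈ Q₁ ^ 2)
    (m4 : (3 : 𝓞 K) ∈ Q₂ ^ 2) :
    Nat.card (𝓞 K ⧸ P₁) = 3 ∧ Nat.card (𝓞 K ⧸ P₂) = 3 ∧ Nat.card (𝓞 K ⧸ Q₁) = 3 ∧
      Nat.card (𝓞 K ⧸ Q₂) = 3 := by
  have cop : ∀ {I J : Ideal (𝓞 K)}, I.IsMaximal → J.IsMaximal → I ≠ J → IsCoprime I J := by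
    intro I J hI hJ h
    rw [Ideal.isCoprime_iff_sup_eq]
    exact Ideal.IsMaximal.coprime_of_ne hI hJ h
  have hdvd : P₁ * P₂ * Q₁ ^ 2 * Q₂ ^ 2 ∣ Ideal.span {(3 : 𝓞 K)} := by
    refine IsCoprime.mul_dvd ?_ (IsCoprime.mul_dvd ?_ (IsCoprime.mul_dvd (cop h1 h2 h12) ?_ ?_) ?_) ?_
    · exact IsCoprime.mul_left (IsCoprime.mul_left (cop h1 h4 h14).pow_right (cop h2 h4 h24).pow_right) (cop h3 h4 h34).pow
    · exact IsCoprime.mul_left (cop h1 h3 h13).pow_right (cop h2 h3 h23).pow_right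
    all_goals rw [Ideal.dvd_span_singleton]; assumption
  have hn := map_dvd Ideal.absNorm hdvd
  have h3n : Ideal.absNorm (Ideal.span {(3 : 𝓞 K)}) = 3 ^ 6 := by
    rw [Ideal.absNorm_span_singleton]
    have := Algebra.norm_algebraMap (R := ℤ) (S := 𝓞 K) 3
    rw [RingOfIntegers.rank, hfr] at this
    simp at this
    rw [this]; rfl
  rw [h3n] at hn
  simp only [map_mul, map_pow] at hn
  have hge : ∀ P : Ideal (𝓞 K), P.IsMaximal → Ideal.absNorm P ∣ 3 ^ 6 → 3 ≤ Ideal.absNorm P := by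
    intro P hP hd
    obtain ⟨k, -, hk⟩ := (Nat.dvd_prime_pow Nat.prime_three).mp hd
    rw [hk]
    rcases k with _ | k
    · exact absurd (Ideal.absNorm_eq_one_iff.mp (by simpa using hk)) hP.ne_top
    · rw [pow_succ]; have := Nat.pow_pos (n := k) (show 0 < 3 by norm_num); omega
  have e1 := hge P₁ h1 (Dvd.dvd.trans ⟨Ideal.absNorm P₂ * Ideal.absNorm Q₁ ^ 2 * Ideal.absNorm Q₂ ^ 2, by ring⟩ hn)
  have e2 := hge P₂ h2 (Dvd.dvd.trans ⟨Ideal.absNorm P₁ * Ideal.absNorm Q₁ ^ 2 * Ideal.absNorm Q₂ ^ 2, by ring⟩ hn)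
  have e3 := hge Q₁ h3 (Dvd.dvd.trans ⟨Ideal.absNorm P₁ * Ideal.absNorm P₂ * Ideal.absNorm Q₁ * Ideal.absNorm Q₂ ^ 2, by ring⟩ hn)
  have e4 := hge Q₂ h4 (Dvd.dvd.trans ⟨Ideal.absNorm P₁ * Ideal.absNorm P₂ * Ideal.absNorm Q₁ ^ 2 * Ideal.absNorm Q₂, by ring⟩ hn)
  have hle := Nat.le_of_dvd (by norm_num) hn
  change Ideal.absNorm P₁ = 3 ∧ Ideal.absNorm P₂ = 3 ∧ Ideal.absNorm Q₁ = 3 ∧ Ideal.absNorm Q₂ = 3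
  generalize Ideal.absNorm P₁ = p at *
  generalize Ideal.absNorm P₂ = q at *
  generalize Ideal.absNorm Q₁ = r at *
  generalize Ideal.absNorm Q₂ = t at *
  clear hn hdvd cop hge
  have hcon : ∀ p' q' r' t' : ℕ, p' ≤ p → q' ≤ q → r' ≤ r → t' ≤ t → p' * q' * r' ^ 2 * t' ^ 2 ≤ 3 ^ 6 := by
    intro p' q' r' t' hp hq hr ht
    exact le_trans (by gcongr) hle
  refine ⟨?_, ?_, ?_, ?_⟩ <;> by_contra hne
  · have := hcon 4 3 3 3 (by omega) e2 e3 e4; omega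
  · have := hcon 3 4 3 3 e1 (by omega) e3 e4; omega
  · have := hcon 3 3 4 3 e1 e2 (by omega) e4; omega
  · have := hcon 3 3 3 4 e1 e2 e3 (by omega); omega

/-- For a sextic field `K` defined by a trinomial `x^6 + a x^m + b` with
`a ≡ 0 (mod 9)` and `b ≡ -1 (mod 9)`, there are at least four distinct prime
ideals of `ℤ_K` above `3` with residue degree `1`. -/
theorem four_primes_above_three_of_sextic
    {K : Type*} [Field K] [NumberField K] (θ : 𝓞 K)
    (m : ℕ) (hm : 1 ≤ m) (hm5 : m ≤ 5)
    (a b : ℤ)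
    (F : ℤ[X]) (hF : F = X ^ 6 + C a * X ^ m + C b)
    (hirr : Irreducible F)
    (hroot : Polynomial.aeval (θ : K) F = 0)
    (hgen : Algebra.adjoin ℚ {(θ : K)} = ⊤)
    (ha : a ≡ 0 [ZMOD 9])
    (hb : b ≡ -1 [ZMOD 9]) :
    ∃ P₁ P₂ P₃ P₄ : Ideal (𝓞 K),
      P₁ ≠ P₂ ∧ P₁ ≠ P₃ ∧ P₁ ≠ P₄ ∧ P₂ ≠ P₃ ∧ P₂ ≠ P₄ ∧ P₃ ≠ P₄ ∧
      P₁.IsMaximal ∧ (3 : 𝓞 K) ∈ P₁ ∧ Nat.card (𝓞 K ⧸ P₁) = 3 ∧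
      P₂.IsMaximal ∧ (3 : 𝓞 K) ∈ P₂ ∧ Nat.card (𝓞 K ⧸ P₂) = 3 ∧
      P₃.IsMaximal ∧ (3 : 𝓞 K) ∈ P₃ ∧ Nat.card (𝓞 K ⧸ P₃) = 3 ∧
      P₄.IsMaximal ∧ (3 : 𝓞 K) ∈ P₄ ∧ Nat.card (𝓞 K ⧸ P₄) = 3 := by
  have hFm : F.Monic := by rw [hF]; interval_cases m <;> monicity!
  have hFd : F.natDegree = 6 := by rw [hF]; interval_cases m <;> compute_degree!
  have hirrQ : Irreducible (F.map (algebraMap ℤ ℚ)) :=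
    (hFm.irreducible_iff_irreducible_map_fraction_map).mp hirr
  have hmin : F.map (algebraMap ℤ ℚ) = minpoly ℚ (θ : K) :=
    minpoly.eq_of_irreducible_of_monic hirrQ (by rw [aeval_map_algebraMap]; exact hroot) (hFm.map _)
  have htop : IntermediateField.adjoin ℚ {(θ : K)} = ⊤ := by
    rw [← IntermediateField.toSubalgebra_injective.eq_iff]
    rw [IntermediateField.adjoin_simple_toSubalgebra_of_isAlgebraic (Algebra.IsAlgebraic.isAlgebraic _), hgen]
    rfl
  have hfr : Module.finrank ℚ K = 6 := by
    rw [← (Field.primitive_element_iff_minpoly_natDegree_eq ℚ (θ : K)).mp htop, ← hmin,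
      hFm.natDegree_map, hFd]
  have h0 : θ ^ 6 + a * θ ^ m + b = 0 := by
    apply RingOfIntegers.ext
    rw [hF] at hroot
    simpa using hroot
  obtain ⟨P₁, Q₁, hne1, hP1, hQ1, hyP1, hyQ1, h3P1, h3Q1⟩ :=
    aux_shift θ hfr hgen m hm hm5 a b h0 ha hb 1 (Or.inl rfl)
  obtain ⟨P₂, Q₂, hne2, hP2, hQ2, hyP2, hyQ2, h3P2, h3Q2⟩ :=
    aux_shift θ hfr hgen m hm hm5 a b h0 ha hb (-1) (Or.inr rfl)
  have h3Q1' : (3 : 𝓞 K) ∈ Q₁ := Ideal.pow_le_self two_ne_zero h3Q1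
  have h3Q2' : (3 : 𝓞 K) ∈ Q₂ := Ideal.pow_le_self two_ne_zero h3Q2
  have hdist : ∀ I J : Ideal (𝓞 K), I.IsMaximal → (3 : 𝓞 K) ∈ I →
      θ - (1 : ℤ) ∈ I → θ - (-1 : ℤ) ∈ J → I ≠ J := by
    rintro I J hI h3 h1 h2 rfl
    apply hI.ne_top
    rw [Ideal.eq_top_iff_one]
    have := I.sub_mem h3 (I.sub_mem h2 h1)
    convert this using 1
    push_cast
    ring
  have a1 := hdist P₁ P₂ hP1 h3P1 hyP1 hyP2
  have a2 := hdist P₁ Q₂ hP1 h3P1 hyP1 hyQ2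
  have a3 := hdist Q₁ P₂ hQ1 h3Q1' hyQ1 hyP2
  have a4 := hdist Q₁ Q₂ hQ1 h3Q1' hyQ1 hyQ2
  obtain ⟨c1, c2, c3, c4⟩ := aux_card hfr P₁ P₂ Q₁ Q₂ hP1 hP2 hQ1 hQ2 a1 hne1 a2 a3.symm hne2 a4
    h3P1 h3P2 h3Q1 h3Q2
  exact ⟨P₁, P₂, Q₁, Q₂, a1, hne1, a2, a3.symm, hne2, a4, hP1, h3P1, c1, hP2, h3P2, c2,
    hQ1, h3Q1', c3, hQ2, h3Q2', c4⟩
end
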